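/- For every m ≥ 1 and every first-order formula φ in the language of rings with m free variables, there exists N such that for every prime p and k ≥ 1 with p^k ≥ N, the number of m-tuples x ∈ (GaloisField p (2k))^m at which φ is satisfied is not equal to p^k. -/

import Mathlib

open FirstOrder

/-- The number of `k`-tuples of a (finite) ring `K` satisfying the ring-language formula `φ`,
where `K` is viewed as a structure for the language of rings via `compatibleRingOfRing`. -/
noncomputable def ringFormulaCount {k : ℕ} (φ : Language.ring.Formula (Fin k))
    (K : Type*) [Add K] [Mul K] [Neg K] [One K] [Zero K] : ℕ :=
  letI := Ring.compatibleRingOfRing K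
  Nat.card {x : Fin k → K // φ.Realize x}


namespace Felg
section Part1

open Polynomial

/-- all coefficients (in the inner variable) have degree at most `n` -/
def BX {k : Type*} [CommRing k] (f : k[X][X]) (n : ℕ) : Prop := ∀ i, (f.coeff i).natDegree ≤ n

section BXlemmas
variable {k : Type*} [CommRing k]

lemma BX.mono {f : k[X][X]} {a b : ℕ} (h : BX f a) (hab : a ≤ b) : BX f b :=
  fun i => (h i).trans hab

lemma BX.add {f g : k[X][X]} {a : ℕ} (hf : BX f a) (hg : BX g a) : BX (f + g) a := fun i => by
  rw [coeff_add]; exact natDegree_add_le_of_degree_le (hf i) (hg i)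

lemma BX.zero (a : ℕ) : BX (0 : k[X][X]) a := fun i => by simp

lemma BX.sum {ι : Type*} (s : Finset ι) {f : ι → k[X][X]} {a : ℕ} (hf : ∀ i ∈ s, BX (f i) a) :
    BX (∑ i ∈ s, f i) a := by
  classical
  induction s using Finset.induction_on with
  | empty => simpa using BX.zero a
  | insert i s hi ih =>
    rw [Finset.sum_insert hi]
    exact (hf i (by simp)).add (ih fun j hj => hf j (by simp [hj]))

lemma BX.mul {f g : k[X][X]} {a b : ℕ} (hf : BX f a) (hg : BX g b) : BX (f * g) (a + b) := fun i => by
  rw [coeff_mul]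
  refine natDegree_sum_le_of_forall_le _ _ fun x _ => ?_
  exact natDegree_mul_le_of_le (hf _) (hg _)

lemma BX.C {p : k[X]} {a : ℕ} (h : p.natDegree ≤ a) : BX (C p) a := fun i => by
  rw [coeff_C]; split_ifs
  · exact h
  · simp

lemma BX.one : BX (1 : k[X][X]) 0 := by
  have : (1 : k[X][X]) = Polynomial.C 1 := by simp
  rw [this]; exact BX.C (by simp)

lemma BX.pow {f : k[X][X]} {a : ℕ} (hf : BX f a) (n : ℕ) : BX (f ^ n) (n * a) := by
  induction n with
  | zero => simpa using BX.one.mono (Nat.zero_le _)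
  | succ n ih =>
    rw [pow_succ]; exact (ih.mul hf).mono (by rw [Nat.succ_mul])

lemma BX.map {k' : Type*} [CommRing k'] {f : k[X][X]} {a : ℕ} (hf : BX f a) (φ : k →+* k') :
    BX (f.map (mapRingHom φ)) a := fun i => by
  rw [coeff_map]; exact (natDegree_map_le).trans (hf i)

lemma exists_BX (f : k[X][X]) : ∃ n, BX f n := by
  refine ⟨f.support.sup fun i => (f.coeff i).natDegree, fun i => ?_⟩
  by_cases h : i ∈ f.support
  · exact Finset.le_sup (f := fun i => (f.coeff i).natDegree) h
  · simp [notMem_support_iff.mp h]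

/-- degree of the resultant -/
lemma natDegree_resultant_le {h f : k[X][X]} {d n a B : ℕ} (hh : BX h B) (hf : BX f a) :
    (resultant h f d n).natDegree ≤ d * a + n * B := by
  unfold resultant
  rw [Matrix.det_apply]
  refine natDegree_sum_le_of_forall_le _ _ fun σ _ => ?_
  refine (natDegree_smul_le _ _).trans ?_
  refine (natDegree_prod_le _ _).trans ?_
  rw [Fin.sum_univ_add]
  refine add_le_add ?_ ?_
  · calc _ ≤ ∑ i : Fin d, a := by
          refine Finset.sum_le_sum fun i _ => ?_
          simp only [sylvester, Matrix.of_apply, Fin.addCases_left]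
          split_ifs
          · exact hf _
          · simp
      _ = d * a := by simp
  · calc _ ≤ ∑ i : Fin n, B := by
          refine Finset.sum_le_sum fun i _ => ?_
          simp only [sylvester, Matrix.of_apply, Fin.addCases_right]
          split_ifs
          · exact hh _
          · simp
      _ = n * B := by simp

end BXlemmas

section Field
variable {k : Type*} [Field k]

lemma dvd_of_resultant_eq_zero {h f : k[X][X]} {n : ℕ} (hm : h.Monic) (hi : Irreducible h)
    (hn : f.natDegree ≤ n) (hr : resultant h f h.natDegree n = 0) : h ∣ f := by
  have e : n = f.natDegree + (n - f.natDegree) := by omega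
  rw [e, resultant_add_right_deg _ _ _ _ _ le_rfl] at hr
  rw [coeff_natDegree, hm.leadingCoeff, one_pow, one_mul] at hr
  let K := FractionRing k[X]
  have hinj := IsFractionRing.injective k[X] K
  have hi' := (hm.irreducible_iff_irreducible_map_fraction_map (K := K)).1 hi
  have h1 := resultant_map_map h f h.natDegree f.natDegree (algebraMap k[X] K)
  rw [hr, map_zero] at h1
  have h2 : resultant (h.map (algebraMap k[X] K)) (f.map (algebraMap k[X] K)) = 0 := by
    rw [natDegree_map_eq_of_injective hinj, natDegree_map_eq_of_injective hinj]; exact h1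
  rw [resultant_eq_zero_iff] at h2
  have h3 : h.map (algebraMap k[X] K) ∣ f.map (algebraMap k[X] K) := by
    by_contra hnd
    exact h2.2 ((hi'.coprime_iff_not_dvd).2 hnd)
  exact (map_dvd_map _ hinj hm).1 h3

/-- expansion at `c` -/
noncomputable def ser (c : k) : k[X] →+* PowerSeries k :=
  (coeToPowerSeries.ringHom).comp (taylorAlgHom c : k[X] →ₐ[k] k[X]).toRingHom

lemma ser_apply (c : k) (p : k[X]) : ser c p = (taylor c p : k[X]) := rfl

lemma constantCoeff_ser (c : k) (p : k[X]) : PowerSeries.constantCoeff (ser c p) = p.eval c := by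
  rw [ser_apply, ← PowerSeries.coeff_zero_eq_constantCoeff_apply, coeff_coe, taylor_coeff_zero]

lemma ser_injective (c : k) : Function.Injective (ser c) := by
  intro a b hab
  rw [ser_apply, ser_apply] at hab
  exact taylor_injective c (Polynomial.coe_injective _ hab)

lemma dvd_of_ser_dvd {c : k} {p : k[X]} {a : ℕ} (h : PowerSeries.X ^ a ∣ ser c p) :
    (X - C c) ^ a ∣ p := by
  rw [PowerSeries.X_pow_dvd_iff] at h
  have h1 : X ^ a ∣ taylor c p := by
    rw [X_pow_dvd_iff]; intro d hd
    have := h d hd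
    rwa [ser_apply, coeff_coe] at this
  obtain ⟨r, hr⟩ := h1
  refine ⟨taylor (-c) r, ?_⟩
  apply taylor_injective c
  rw [hr, taylor_mul, taylor_pow]
  simp [taylor_taylor]

/-- Hensel: splitting in power series -/
lemma exists_roots [IsAlgClosed k] {h : k[X][X]} (hm : h.Monic) {d : ℕ} (hd : h.natDegree = d)
    {c : k} (hs : (h.map (evalRingHom c)).Separable) :
    ∃ ζ : Fin d → PowerSeries k, Function.Injective (fun j => PowerSeries.constantCoeff (ζ j)) ∧
      h.map (ser c) = ∏ j, (X - C (ζ j)) := by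
  classical
  set h0 := h.map (evalRingHom c) with hh0
  have hm0 : h0.Monic := hm.map _
  have hd0 : h0.natDegree = d := by rw [hh0, hm.natDegree_map, hd]
  have hcomp : (PowerSeries.constantCoeff (R := k)).comp (ser c) = evalRingHom c := by
    ext p <;> simp [constantCoeff_ser]
  have hcard : h0.roots.card = d := by
    rw [← hd0]; exact (splits_iff_card_roots.1 (IsAlgClosed.splits h0))
  have hnd : h0.roots.Nodup := nodup_roots hs
  have hcard' : h0.roots.toFinset.card = d := by
    rw [Multiset.toFinset_card_of_nodup hnd, hcard]
  let e := (h0.roots.toFinset.equivFinOfCardEq hcard').symm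
  set H := h.map (ser c) with hH
  have hHm : H.Monic := hm.map _
  have key : ∀ j : Fin d, ∃ z : PowerSeries k, H.IsRoot z ∧
      PowerSeries.constantCoeff z = (e j : k) := by
    intro j
    have hr : h0.IsRoot (e j : k) := by
      have := (e j).2
      rw [Multiset.mem_toFinset] at this
      exact (mem_roots'.1 this).2
    have hev : ∀ (P : k[X][X]) (z : PowerSeries k), PowerSeries.constantCoeff ((P.map (ser c)).eval z)
        = (P.map (evalRingHom c)).eval (PowerSeries.constantCoeff z) := by
      intro P z
      rw [← eval_map_apply, map_map, hcomp]
    have := HenselianRing.is_henselian (I := Ideal.span {(PowerSeries.X : PowerSeries k)}) H hHm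
      (PowerSeries.C (e j : k)) (by
        rw [Ideal.mem_span_singleton, PowerSeries.X_dvd_iff, hev]
        simpa using hr) (by
        apply IsUnit.map
        rw [hH, derivative_map, PowerSeries.isUnit_iff_constantCoeff, hev, isUnit_iff_ne_zero]
        rw [← derivative_map]
        simp only [PowerSeries.constantCoeff_C]
        have h5 := hs.aeval_derivative_ne_zero (x := (e j : k)) (by simpa [aeval_def] using hr)
        rw [coe_aeval_eq_eval] at h5
        exact h5)
    obtain ⟨a, ha, ha'⟩ := this
    refine ⟨a, ha, ?_⟩
    rw [Ideal.mem_span_singleton, PowerSeries.X_dvd_iff, map_sub, sub_eq_zero] at ha'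
    simpa using ha'
  choose ζ hζ hζ' using key
  have hinj : Function.Injective (fun j => PowerSeries.constantCoeff (ζ j)) := by
    intro i j hij
    simp only [hζ'] at hij
    exact e.injective (Subtype.ext hij)
  refine ⟨ζ, hinj, ?_⟩
  have hinj' : Function.Injective ζ := fun i j hij => hinj (by simp [hij])
  have hdvd : ∏ j, (X - C (ζ j)) ∣ H := by
    have : (Multiset.map (fun a => X - C a) (Finset.univ.val.map ζ)).prod ∣ H := by
      rw [Multiset.prod_X_sub_C_dvd_iff_le_roots hHm.ne_zero]
      rw [Multiset.le_iff_subset (Finset.univ.nodup.map hinj')]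
      intro z hz
      rw [Multiset.mem_map] at hz
      obtain ⟨j, -, rfl⟩ := hz
      exact (mem_roots hHm.ne_zero).2 (hζ j)
    rw [Multiset.map_map] at this
    exact this
  refine eq_of_monic_of_dvd_of_natDegree_le (monic_prod_of_monic _ _ fun j _ => monic_X_sub_C _)
    hHm hdvd ?_
  rw [natDegree_prod_of_monic _ _ fun j _ => monic_X_sub_C _]
  simp [hH, hm.natDegree_map, hd]

lemma ser_resultant {h f : k[X][X]} (hm : h.Monic) {d n : ℕ} (hd : h.natDegree = d) {c : k}
    {ζ : Fin d → PowerSeries k} (hζ : h.map (ser c) = ∏ j, (X - C (ζ j))) (hn : f.natDegree ≤ n) :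
    ser c (resultant h f d n) = ∏ j, (f.map (ser c)).eval (ζ j) := by
  rw [← resultant_map_map]
  have h1 : (h.map (ser c)).natDegree = d := by rw [hm.natDegree_map, hd]
  have h2 : (h.map (ser c)).Splits := by
    rw [hζ]; exact Splits.prod fun j _ => Splits.X_sub_C _
  have := resultant_eq_prod_eval (h.map (ser c)) (f.map (ser c)) n (natDegree_map_le.trans hn) h2
  rw [h1] at this
  rw [this, (hm.map _).leadingCoeff, one_pow, one_mul, hζ]
  have h3 : (∏ j, (X - C (ζ j))) = ((Finset.univ.val.map ζ).map (fun a => X - C a)).prod := by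
    rw [Multiset.map_map]; rfl
  rw [h3, roots_multiset_prod_X_sub_C, Multiset.map_map]
  rfl

/-- zero counting -/
lemma zero_count [IsAlgClosed k] {h f : k[X][X]} (hm : h.Monic) (hi : Irreducible h) {d n a B : ℕ}
    (hd : h.natDegree = d) (hB : BX h B) (hfa : BX f a) (hfn : f.natDegree ≤ n) (hnd : ¬ h ∣ f)
    {c : k} {ζ : Fin d → PowerSeries k} (hζ : h.map (ser c) = ∏ j, (X - C (ζ j)))
    (o : Fin d → ℕ) (ho : ∀ j, PowerSeries.X ^ (o j) ∣ (f.map (ser c)).eval (ζ j))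
    (P : Finset (k × k))
    (hP : ∀ x ∈ P, x.1 ≠ c ∧ (h.map (evalRingHom x.1)).Separable ∧
      (h.map (evalRingHom x.1)).eval x.2 = 0 ∧ (f.map (evalRingHom x.1)).eval x.2 = 0) :
    ∑ j, o j + P.card ≤ d * a + n * B := by
  classical
  set R := resultant h f d n with hR
  have hR0 : R ≠ 0 := by
    intro h0
    exact hnd (dvd_of_resultant_eq_zero hm hi hfn (by rw [hd]; exact h0))
  refine le_trans ?_ (natDegree_resultant_le (d := d) (n := n) hB hfa)
  rw [← hR]
  have hc : ∑ j, o j ≤ rootMultiplicity c R := by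
    rw [le_rootMultiplicity_iff hR0]
    apply dvd_of_ser_dvd
    rw [hR, ser_resultant hm hd hζ hfn, ← Finset.prod_pow_eq_pow_sum]
    exact Finset.prod_dvd_prod_of_dvd _ _ fun j _ => ho j
  have ht : ∀ t ∈ P.image Prod.fst, (P.filter (fun x => x.1 = t)).card ≤ rootMultiplicity t R := by
    intro t ht
    obtain ⟨x0, hx0, rfl⟩ := Finset.mem_image.1 ht
    set t := x0.1
    obtain ⟨ξ, hξi, hξ⟩ := exists_roots hm hd (hP x0 hx0).2.1
    rw [le_rootMultiplicity_iff hR0]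
    apply dvd_of_ser_dvd
    rw [hR, ser_resultant hm hd hξ hfn]
    have hev : ∀ (P : k[X][X]) (z : PowerSeries k), PowerSeries.constantCoeff ((P.map (ser t)).eval z)
        = (P.map (evalRingHom t)).eval (PowerSeries.constantCoeff z) := by
      intro P z
      have hcomp : (PowerSeries.constantCoeff (R := k)).comp (ser t) = evalRingHom t := by
        ext p <;> simp [constantCoeff_ser]
      rw [← eval_map_apply, map_map, hcomp]
    -- index set
    have hidx : ∀ x ∈ P.filter (fun x => x.1 = t), ∃ j : Fin d,
        PowerSeries.constantCoeff (ξ j) = x.2 := by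
      intro x hx
      obtain ⟨hx, hxt⟩ := Finset.mem_filter.1 hx
      have h1 := (hP x hx).2.2.1
      rw [hxt] at h1
      have h2 : h.map (evalRingHom t) = ∏ j, (X - C (PowerSeries.constantCoeff (ξ j))) := by
        have hcomp : (PowerSeries.constantCoeff (R := k)).comp (ser t) = evalRingHom t := by
          ext p <;> simp [constantCoeff_ser]
        rw [← hcomp, ← map_map, hξ, Polynomial.map_prod]
        simp
      rw [h2, eval_prod, Finset.prod_eq_zero_iff] at h1
      obtain ⟨j, -, hj⟩ := h1
      refine ⟨j, ?_⟩
      simp [sub_eq_zero] at hj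
      exact hj.symm
    have : Nonempty (Fin d) := ⟨(hidx x0 (Finset.mem_filter.2 ⟨hx0, rfl⟩)).choose⟩
    choose! J hJ using hidx
    have hJinj : Set.InjOn J (P.filter (fun x => x.1 = t)) := by
      intro x hx y hy hxy
      have h1 := hJ x hx
      have h2 := hJ y hy
      rw [hxy] at h1
      refine Prod.ext ?_ (h1.symm.trans h2)
      rw [(Finset.mem_filter.1 hx).2, (Finset.mem_filter.1 hy).2]
    rw [← Finset.card_image_of_injOn hJinj, ← Finset.prod_const]
    refine (Finset.prod_dvd_prod_of_dvd _ _ ?_).trans (Finset.prod_dvd_prod_of_subset _ _ _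
      (Finset.subset_univ _))
    intro j hj
    obtain ⟨x, hx, rfl⟩ := Finset.mem_image.1 hj
    rw [PowerSeries.X_dvd_iff, hev, hJ x hx]
    obtain ⟨hx, hxt⟩ := Finset.mem_filter.1 hx
    have := (hP x hx).2.2.2
    rwa [hxt] at this
  have hcard : P.card = ∑ t ∈ P.image Prod.fst, (P.filter (fun x => x.1 = t)).card :=
    Finset.card_eq_sum_card_image _ _
  have hcn : c ∉ P.image Prod.fst := by
    intro hc
    obtain ⟨x, hx, hxc⟩ := Finset.mem_image.1 hc
    exact (hP x hx).1 hxc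
  calc _ ≤ rootMultiplicity c R + ∑ t ∈ P.image Prod.fst, rootMultiplicity t R := by
        rw [hcard]; exact add_le_add hc (Finset.sum_le_sum ht)
    _ = ∑ t ∈ insert c (P.image Prod.fst), rootMultiplicity t R := by rw [Finset.sum_insert hcn]
    _ = ∑ t ∈ insert c (P.image Prod.fst), R.roots.count t := by simp only [count_roots]
    _ ≤ R.roots.card := by
        rw [← Multiset.sum_count_eq_card (s := insert c (P.image Prod.fst) ∪ R.roots.toFinset)
          (fun a ha => by simp [Multiset.mem_toFinset.2 ha])]
        exact Finset.sum_le_sum_of_subset Finset.subset_union_left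
    _ ≤ R.natDegree := card_roots' _

end Field

end Part1
end Felg

namespace Felg
section Part2

open Polynomial

section UB
variable {k : Type*} [Field k]

/-- evaluation at a power series point -/
noncomputable def EV (c : k) (z : PowerSeries k) : k[X][X] →+* PowerSeries k := eval₂RingHom (ser c) z

lemma EV_apply (c : k) (z : PowerSeries k) (f : k[X][X]) : EV c z f = (f.map (ser c)).eval z := by
  simp [EV, eval₂_eq_eval_map]

lemma ser_C (c a : k) : ser c (C a) = PowerSeries.C a := by
  rw [ser_apply, taylor_C, coe_C]

lemma EV_smul (c : k) (z : PowerSeries k) (a : k) (f : k[X][X]) : EV c z (a • f) = a • EV c z f := by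
  have : a • f = C (C a) * f := by
    ext i j; simp
  rw [this, map_mul, PowerSeries.smul_eq_C_mul]
  simp [EV, ser_C]

/-- linear version -/
noncomputable def EVl (c : k) (z : PowerSeries k) : k[X][X] →ₗ[k] PowerSeries k where
  toFun := EV c z
  map_add' := map_add _
  map_smul' := EV_smul c z

lemma EVl_apply (c : k) (z : PowerSeries k) (f : k[X][X]) : EVl c z f = EV c z f := rfl

/-- functions with pole at one place only -/
def W (d : ℕ) (c : k) (ζ : Fin d → PowerSeries k) (j0 : Fin d) (n : ℕ) : Submodule k k[X][X] where
  carrier := {f | (∀ b, d ≤ b → f.coeff b = 0) ∧ BX f n ∧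
    ∀ j, j ≠ j0 → PowerSeries.X ^ n ∣ EV c (ζ j) f}
  add_mem' := by
    rintro f g ⟨h1, h2, h3⟩ ⟨h1', h2', h3'⟩
    refine ⟨fun b hb => by simp [h1 b hb, h1' b hb], h2.add h2', fun j hj => ?_⟩
    rw [map_add]; exact dvd_add (h3 j hj) (h3' j hj)
  zero_mem' := ⟨by simp, BX.zero _, by simp⟩
  smul_mem' := by
    rintro a f ⟨h1, h2, h3⟩
    refine ⟨fun b hb => by simp [h1 b hb], fun i => ?_, fun j hj => ?_⟩
    · rw [coeff_smul]; exact (natDegree_smul_le _ _).trans (h2 i)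
    · rw [EV_smul, PowerSeries.smul_eq_C_mul]; exact (h3 j hj).mul_left _

lemma natDegree_lt_of {d : ℕ} (hd : 0 < d) {f : k[X][X]} (h : ∀ b, d ≤ b → f.coeff b = 0) :
    f.natDegree < d := by
  by_contra hcon
  push Not at hcon
  have h1 := h _ hcon
  rw [coeff_natDegree, leadingCoeff_eq_zero] at h1
  simp [h1] at hcon
  omega

/-- polynomial with given coefficient table -/
noncomputable def tab (d n : ℕ) : (Fin d → Fin (n+1) → k) →ₗ[k] k[X][X] where
  toFun v := ∑ b : Fin d, monomial (b : ℕ) (∑ i : Fin (n+1), monomial (i : ℕ) (v b i))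
  map_add' v w := by simp [Finset.sum_add_distrib]
  map_smul' a v := by
    simp only [Pi.smul_apply, RingHom.id_apply, Finset.smul_sum, smul_monomial]

lemma tab_coeff (d n : ℕ) (v : Fin d → Fin (n+1) → k) (b : ℕ) : (tab d n v).coeff b =
    if h : b < d then ∑ i : Fin (n+1), monomial (i : ℕ) (v ⟨b, h⟩ i) else 0 := by
  simp only [tab, LinearMap.coe_mk, AddHom.coe_mk, finsetSum_coeff, coeff_monomial]
  split_ifs with h
  · rw [Finset.sum_eq_single ⟨b, h⟩]
    · simp
    · intro b' _ hb'
      rw [if_neg]; intro h'; exact hb' (Fin.ext h')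
    · simp
  · apply Finset.sum_eq_zero
    intro b' _
    rw [if_neg]; intro h'; exact h (h' ▸ b'.2)

lemma tab_injective (d n : ℕ) : Function.Injective (tab (k := k) d n) := by
  rw [injective_iff_map_eq_zero]
  intro v hv
  funext b i
  have h1 := tab_coeff d n v b
  rw [hv, dif_pos b.2] at h1
  have h2 := congrArg (fun p => p.coeff i) h1
  simp only [coeff_zero, finsetSum_coeff, coeff_monomial] at h2
  rw [Finset.sum_eq_single i] at h2
  · simpa using h2.symm
  · intro i' _ hi'
    rw [if_neg]; intro h'; exact hi' (Fin.ext h')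
  · simp

lemma exists_W_basis {d : ℕ} (c : k) (ζ : Fin d → PowerSeries k) (j0 : Fin d) (n : ℕ) :
    ∃ b : Fin (n+1) → k[X][X], LinearIndependent k b ∧ ∀ i, b i ∈ W d c ζ j0 n := by
  classical
  let Λ : (Fin d → Fin (n+1) → k) →ₗ[k] ({j : Fin d // j ≠ j0} → Fin n → k) :=
    LinearMap.pi fun j => LinearMap.pi fun i =>
      (PowerSeries.coeff (i : ℕ)).comp ((EVl c (ζ j)).comp (tab d n))
  have hdpos : 0 < d := Fin.pos j0
  have hrk : n + 1 ≤ Module.finrank k (LinearMap.ker Λ) := by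
    have h1 := LinearMap.finrank_range_add_finrank_ker Λ
    have h2 : Module.finrank k (LinearMap.range Λ) ≤ (d - 1) * n := by
      refine (Submodule.finrank_le _).trans ?_
      simp [Module.finrank_pi_fintype, Fintype.card_subtype_compl]
    have h3 : Module.finrank k (Fin d → Fin (n+1) → k) = d * (n+1) := by
      simp [Module.finrank_pi_fintype]
    rw [h3] at h1
    obtain ⟨e, rfl⟩ : ∃ e, d = e + 1 := ⟨d - 1, by omega⟩
    simp only [Nat.add_sub_cancel] at h2
    nlinarith
  obtain ⟨u, hu⟩ := exists_linearIndependent_of_le_finrank hrk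
  refine ⟨fun i => tab d n (u i), ?_, fun i0 => ⟨fun b hb => ?_, fun b => ?_, fun j hj => ?_⟩⟩
  · have h1 := (hu.map' (LinearMap.ker Λ).subtype (Submodule.ker_subtype _)).map' (tab d n)
      (LinearMap.ker_eq_bot.2 (tab_injective d n))
    exact h1
  · rw [tab_coeff, dif_neg (by omega)]
  · rw [tab_coeff]; split_ifs
    · refine natDegree_sum_le_of_forall_le _ _ fun i _ => ?_
      exact (natDegree_monomial_le _).trans (by omega)
    · simp
  · rw [PowerSeries.X_pow_dvd_iff]
    intro i hi
    have := (u i0).2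
    rw [LinearMap.mem_ker] at this
    have := congrFun (congrFun this ⟨j, hj⟩) ⟨i, hi⟩
    exact this

/-- linearly independent power series have as many distinct orders in their span -/
lemma exists_orders {N : ℕ} {u : Fin N → PowerSeries k} (hu : LinearIndependent k u) :
    ∃ (g : Fin N → PowerSeries k) (o : Fin N → ℕ), Function.Injective o ∧
      ∀ i, g i ∈ Submodule.span k (Set.range u) ∧ PowerSeries.coeff (o i) (g i) ≠ 0 ∧
        PowerSeries.X ^ (o i) ∣ g i := by
  classical
  let V := Submodule.span k (Set.range u)
  let O : Set ℕ := {n | ∃ g ∈ V, PowerSeries.coeff n g ≠ 0 ∧ PowerSeries.X ^ n ∣ g}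
  have hV : Module.finrank k V = N := by
    rw [finrank_span_eq_card hu, Fintype.card_fin]
  have : FiniteDimensional k V := FiniteDimensional.span_of_finite k (Set.finite_range u)
  have hemb : Nonempty (Fin N ↪ O) := by
    rcases Set.finite_or_infinite O with hO | hO
    · have := hO.fintype
      apply Function.Embedding.nonempty_of_card_le
      rw [Fintype.card_fin]
      let Λ : V →ₗ[k] (O → k) := LinearMap.pi fun n => (PowerSeries.coeff (n : ℕ)).comp V.subtype
      have hΛ : Function.Injective Λ := by
        rw [injective_iff_map_eq_zero]
        intro g hg
        by_contra hne
        have hne' : (g : PowerSeries k) ≠ 0 := fun h => hne (Subtype.ext h)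
        have hmem : (g : PowerSeries k).order.toNat ∈ O :=
          ⟨g, g.2, PowerSeries.coeff_order hne', PowerSeries.X_pow_order_dvd⟩
        have := congrFun hg ⟨_, hmem⟩
        exact PowerSeries.coeff_order hne' this
      have := LinearMap.finrank_le_finrank_of_injective hΛ
      rw [hV] at this
      simpa using this
    · have := hO.to_subtype
      exact ⟨(Fin.valEmbedding).trans (Infinite.natEmbedding O)⟩
  obtain ⟨e⟩ := hemb
  choose g hg using fun i => (e i).2
  exact ⟨g, fun i => (e i : ℕ), fun i j hij => e.injective (Subtype.ext hij), fun i => hg i⟩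

/-- twisted function, denominators cleared -/
noncomputable def tau (d : ℕ) (F : k →+* k) (δ : k[X]) (w f : k[X][X]) : k[X][X] :=
  ∑ b ∈ Finset.range d, C ((f.coeff b).map F) * C δ ^ (d - b) * w ^ b

lemma tau_eval {S : Type*} [CommRing S] {d : ℕ} (hd : 0 < d) (F : k →+* k) (δ : k[X])
    (w f : k[X][X]) (hf : ∀ b, d ≤ b → f.coeff b = 0) (ψ : k[X] →+* S) (Φ : S →+* S)
    (hψ : ∀ p : k[X], ψ (p.map F) = Φ (ψ p)) (z z' : S) (hz : ψ δ * Φ z' = w.eval₂ ψ z) :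
    (tau d F δ w f).eval₂ ψ z = ψ δ ^ d * Φ (f.eval₂ ψ z') := by
  rw [eval₂_eq_sum_range' ψ (natDegree_lt_of hd hf), tau, eval₂_finsetSum, map_sum, Finset.mul_sum]
  refine Finset.sum_congr rfl fun b hb => ?_
  have hb' : d = (d - b) + b := by have := Finset.mem_range.1 hb; omega
  simp only [eval₂_mul, eval₂_pow, eval₂_C, hψ, map_mul, map_pow, ← hz]
  conv_rhs => rw [hb', pow_add]
  have : d - b + b - b = d - b := by omega
  rw [mul_pow]
  ring

lemma tau_BX {d : ℕ} {F : k →+* k} {δ : k[X]} {w f : k[X][X]} {m B : ℕ} (hf : BX f m)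
    (hδ : δ.natDegree ≤ B) (hw : BX w B) : BX (tau d F δ w f) (m + 2 * d * B) := by
  refine BX.sum _ fun b hb => ?_
  have hb' := Finset.mem_range.1 hb
  have h1 : BX (C ((f.coeff b).map F)) m := BX.C (natDegree_map_le.trans (hf b))
  have h2 : BX (C δ ^ (d - b)) ((d - b) * B) := (BX.C hδ).pow _
  refine ((h1.mul h2).mul (hw.pow b)).mono ?_
  have : (d - b) * B ≤ d * B := Nat.mul_le_mul_right _ (by omega)
  have : b * B ≤ d * B := Nat.mul_le_mul_right _ (by omega)
  nlinarith

lemma tau_natDegree {d : ℕ} {F : k →+* k} {δ : k[X]} {w f : k[X][X]} {B : ℕ}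
    (hw : w.natDegree ≤ B) : (tau d F δ w f).natDegree ≤ d * B := by
  refine natDegree_sum_le_of_forall_le _ _ fun b hb => ?_
  have hb' := Finset.mem_range.1 hb
  rw [← C_pow, ← C_mul]
  refine (natDegree_C_mul_le _ _).trans ?_
  refine natDegree_pow_le.trans ?_
  exact Nat.mul_le_mul hb'.le hw

end UB

end Part2
end Felg

namespace Felg
section Part3

open Polynomial

section UB2
variable {k : Type*} [Field k]

lemma exists_kill {ι : Type*} [Fintype ι] (e : ι → PowerSeries k) (m K : ℕ)
    (he : ∀ i, PowerSeries.X ^ m ∣ e i) (hK : K < Fintype.card ι) :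
    ∃ v : ι → k, v ≠ 0 ∧ PowerSeries.X ^ (m + K) ∣ ∑ i, v i • e i := by
  classical
  choose e' he' using he
  let Λ : (ι → k) →ₗ[k] (Fin K → k) := LinearMap.pi fun r =>
    (PowerSeries.coeff (r : ℕ)).comp (Fintype.linearCombination k e')
  have hk : LinearMap.ker Λ ≠ ⊥ := LinearMap.ker_ne_bot_of_finrank_lt (by simpa using hK)
  obtain ⟨v, hv, hv0⟩ := Submodule.exists_mem_ne_zero_of_ne_bot hk
  refine ⟨v, hv0, ?_⟩
  have h1 : ∑ i, v i • e i = PowerSeries.X ^ m * ∑ i, v i • e' i := by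
    rw [Finset.mul_sum]
    refine Finset.sum_congr rfl fun i _ => ?_
    rw [he' i, mul_smul_comm]
  rw [h1, pow_add]
  refine mul_dvd_mul_left _ ?_
  rw [PowerSeries.X_pow_dvd_iff]
  intro r hr
  have := congrFun (LinearMap.mem_ker.1 hv) ⟨r, hr⟩
  exact this


lemma W_order [IsAlgClosed k] {h : k[X][X]} (hm : h.Monic) (hi : Irreducible h) {d B : ℕ}
    (hd : h.natDegree = d) (hB : BX h B) {c : k} {ζ : Fin d → PowerSeries k}
    (hζ : h.map (ser c) = ∏ j, (X - C (ζ j)))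
    {j0 : Fin d} {l r : ℕ} {s : k[X][X]} (hs : s ∈ W d c ζ j0 l) (hs0 : s ≠ 0)
    (hr : PowerSeries.X ^ r ∣ EV c (ζ j0) s) : r ≤ l + (d - 1) * B := by
  classical
  have hdpos : 0 < d := Fin.pos j0
  obtain ⟨h1, h2, h3⟩ := hs
  have hdeg := natDegree_lt_of hdpos h1
  have := zero_count hm hi hd hB h2 (n := d - 1) (by omega)
    (fun hdvd => by
      have := natDegree_le_of_dvd hdvd hs0
      omega) hζ (fun j => if j = j0 then r else l) (fun j => by
        rw [← EV_apply]
        split_ifs with hj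
        · rw [hj]; exact hr
        · exact h3 j hj) ∅ (by simp)
  rw [← Finset.add_sum_erase _ _ (Finset.mem_univ j0), if_pos rfl,
    Finset.sum_congr rfl (g := fun _ => l) (fun j hj => if_neg (Finset.ne_of_mem_erase hj)),
    Finset.sum_const, Finset.card_erase_of_mem (Finset.mem_univ _), Finset.card_univ,
    Fintype.card_fin, Finset.card_empty, smul_eq_mul] at this
  obtain ⟨e, rfl⟩ : ∃ e, d = e + 1 := ⟨d - 1, by omega⟩
  simp only [Nat.add_sub_cancel] at this ⊢
  nlinarith

lemma W_EV_ne_zero [IsAlgClosed k] {h : k[X][X]} (hm : h.Monic) (hi : Irreducible h) {d B : ℕ}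
    (hd : h.natDegree = d) (hB : BX h B) {c : k} {ζ : Fin d → PowerSeries k}
    (hζ : h.map (ser c) = ∏ j, (X - C (ζ j)))
    {j0 : Fin d} {l : ℕ} {s : k[X][X]} (hs : s ∈ W d c ζ j0 l) (hs0 : s ≠ 0) :
    EV c (ζ j0) s ≠ 0 := by
  intro h0
  have := W_order hm hi hd hB hζ hs hs0 (r := l + (d - 1) * B + 1) (by rw [h0]; exact dvd_zero _)
  omega

lemma exists_f [IsAlgClosed k] {h : k[X][X]} (hm : h.Monic) (hi : Irreducible h) {d B : ℕ}
    (hd : h.natDegree = d) (hB : BX h B) {c : k} {ζ : Fin d → PowerSeries k}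
    (hζ : h.map (ser c) = ∏ j, (X - C (ζ j)))
    (j0 : Fin d) (n : ℕ) : ∃ (f : Fin (n+1) → k[X][X]) (o : Fin (n+1) → ℕ),
    Function.Injective o ∧ ∀ i, f i ∈ W d c ζ j0 n ∧
      PowerSeries.coeff (o i) (EV c (ζ j0) (f i)) ≠ 0 ∧
      PowerSeries.X ^ (o i) ∣ EV c (ζ j0) (f i) := by
  obtain ⟨b, hb, hbW⟩ := exists_W_basis c ζ j0 n
  have hspan : Submodule.span k (Set.range b) ≤ W d c ζ j0 n := by
    rw [Submodule.span_le]; rintro _ ⟨i, rfl⟩; exact hbW i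
  have hli : LinearIndependent k (EVl c (ζ j0) ∘ b) := by
    refine hb.map ?_
    rw [Submodule.disjoint_def]
    intro s hs hs'
    by_contra h0
    exact W_EV_ne_zero hm hi hd hB hζ (hspan hs) h0 (LinearMap.mem_ker.1 hs')
  obtain ⟨g, o, ho, hg⟩ := exists_orders hli
  have : ∀ i, ∃ f ∈ Submodule.span k (Set.range b), EVl c (ζ j0) f = g i := by
    intro i
    have := (hg i).1
    rw [Set.range_comp, Submodule.span_image] at this
    exact this
  choose f hf hfg using this
  refine ⟨f, o, ho, fun i => ⟨hspan (hf i), ?_⟩⟩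
  rw [← EVl_apply, hfg]
  exact (hg i).2

end UB2

end Part3
end Felg

namespace Felg
section Part4

open Polynomial

section UB3
variable {k : Type*} [Field k]

/-- evaluation at a point -/
noncomputable def pev (x : k × k) : k[X][X] →+* k := eval₂RingHom (evalRingHom x.1) x.2

lemma pev_apply (x : k × k) (f : k[X][X]) : pev x f = (f.map (evalRingHom x.1)).eval x.2 := by
  simp [pev, eval₂_eq_eval_map]

lemma pev_C (x : k × k) (f : k[X]) : pev x (C f) = f.eval x.1 := by
  simp [pev]

lemma pev_smul (x : k × k) (a : k) (f : k[X][X]) : pev x (a • f) = a * pev x f := by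
  have : a • f = C (C a) * f := by
    ext i j; simp
  rw [this, map_mul]; simp [pev]

lemma ser_map {F : k →+* k} {c : k} (hc : F c = c) (p : k[X]) :
    ser c (p.map F) = PowerSeries.map F (ser c p) := by
  rw [ser_apply, ser_apply, ← Polynomial.polynomial_map_coe]
  congr 1
  rw [taylor_apply, taylor_apply, Polynomial.map_comp]
  simp [hc]

lemma X_pow_dvd_map (F : k →+* k) {n : ℕ} {f : PowerSeries k} (h : PowerSeries.X ^ n ∣ f) :
    PowerSeries.X ^ n ∣ PowerSeries.map F f := by
  have := map_dvd (PowerSeries.map F) h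
  simpa using this

lemma BX.smul {f : k[X][X]} {n : ℕ} (a : k) (hf : BX f n) : BX (a • f) n := fun i => by
  rw [coeff_smul]; exact (natDegree_smul_le _ _).trans (hf i)

lemma natDegree_ksmul_le (a : k) (f : k[X][X]) : (a • f).natDegree ≤ f.natDegree := by
  rw [natDegree_le_iff_coeff_eq_zero]
  intro N hN
  rw [coeff_smul, coeff_eq_zero_of_natDegree_lt hN, smul_zero]

lemma ite_sum {d : ℕ} (j0 : Fin d) (n r : ℕ) :
    ∑ j : Fin d, (if j = j0 then r else n) = r + (d - 1) * n := by
  rw [← Finset.add_sum_erase _ _ (Finset.mem_univ j0), if_pos rfl,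
    Finset.sum_congr rfl (g := fun _ => n) (fun j hj => if_neg (Finset.ne_of_mem_erase hj)),
    Finset.sum_const, Finset.card_erase_of_mem (Finset.mem_univ _), Finset.card_univ,
    Fintype.card_fin, smul_eq_mul]

/-- Stepanov-Bombieri upper bound -/
theorem upper_bound [IsAlgClosed k] {h : k[X][X]} (hm : h.Monic) (hi : Irreducible h) {d B : ℕ}
    (hd : h.natDegree = d) (hdpos : 0 < d) (hB : BX h B) {c : k} {ζ : Fin d → PowerSeries k}
    (hζ : h.map (ser c) = ∏ j, (X - C (ζ j)))
    (Fq : k →+* k) (q : ℕ) (hFq : ∀ x, Fq x = x ^ q)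
    (hq : ((d - 1) * B + 1) * ((d - 1) * B + 1) + (2 * d * d * B + d * B * B + 1) +
      ((d - 1) * B + 1) ≤ q)
    (hc : Fq (Fq c) = c) {δ : k[X]} {w : k[X][X]} (hδ : δ.natDegree ≤ B) (hwB : BX w B)
    (hw : w.natDegree ≤ B) (π : Fin d → Fin d) (hπ : Function.Injective π)
    (hπw : ∀ j, ser c δ * PowerSeries.map (Fq.comp Fq) (ζ (π j)) = EV c (ζ j) w)
    (P : Finset (k × k))
    (hP : ∀ x ∈ P, x.1 ≠ c ∧ (h.map (evalRingHom x.1)).Separable ∧ pev x h = 0 ∧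
      Fq (Fq x.1) = x.1 ∧ δ.eval x.1 ≠ 0 ∧ δ.eval x.1 * Fq (Fq x.2) = pev x w) :
    P.card ≤ q ^ 2 + (3 * ((d - 1) * B) + 1) * q := by
  classical
  set F := Fq.comp Fq with hF
  have hqpos : 0 < q := by
    rcases Nat.eq_zero_or_pos q with rfl | h
    · have := hFq 0; simp at this
    · exact h
  set C1 := (d - 1) * B with hC1
  obtain ⟨l, hl⟩ : ∃ l, q = l + (C1 + 1) := ⟨q - (C1 + 1), by omega⟩
  set m := q + C1 with hmdef
  set K := l * q + m + 2 * d * d * B + (q * (d - 1) + d * B) * B + 1 with hK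
  have hcount : K < (l + 1) * (m + 1) := by
    rw [hK, hmdef]
    have h1 : (q * (d - 1) + d * B) * B = q * C1 + d * B * B := by rw [hC1]; ring
    rw [h1]
    have : (C1 + 1) * (C1 + 1) + (2 * d * d * B + d * B * B + 1) ≤ l := by omega
    have h2 : (C1 + 1) * (C1 + 1) + l * C1 = q * C1 + (C1 + 1) := by rw [hl]; ring
    nlinarith
  let j0 : Fin d := ⟨0, hdpos⟩
  obtain ⟨b, hbli, hbW⟩ := exists_W_basis c ζ j0 l
  obtain ⟨f, o, hoi, hf⟩ := exists_f hm hi hd hB hζ j0 m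
  have hnat : ∀ {n : ℕ} {s : k[X][X]}, s ∈ W d c ζ j0 n → s.natDegree ≤ d - 1 := by
    intro n s hs
    have := natDegree_lt_of hdpos hs.1
    omega
  -- the twisted functions
  let E0 : Fin (m+1) × Fin (l+1) → k[X][X] := fun ij => b ij.2 ^ q * tau d F δ w (f ij.1)
  have htau : ∀ i j, EV c (ζ j) (tau d F δ w (f i)) =
      ser c δ ^ d * PowerSeries.map F (EV c (ζ (π j)) (f i)) := by
    intro i j
    exact tau_eval hdpos F δ w (f i) (hf i).1.1 (ser c) (PowerSeries.map F) (ser_map hc) _ _ (hπw j)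
  have htau_ord : ∀ i j, π j ≠ j0 → PowerSeries.X ^ m ∣ EV c (ζ j) (tau d F δ w (f i)) := by
    intro i j hj
    rw [htau]
    exact (X_pow_dvd_map F ((hf i).1.2.2 _ hj)).mul_left _
  have hE0ord : ∀ ij j, PowerSeries.X ^ ((if j = j0 then 0 else l * q) + (if π j = j0 then 0 else m))
      ∣ EV c (ζ j) (E0 ij) := by
    intro ij j
    simp only [E0, map_mul, map_pow]
    rw [pow_add]
    refine mul_dvd_mul ?_ ?_
    · split_ifs with hj
      · simp
      · rw [pow_mul]; exact pow_dvd_pow_of_dvd ((hbW _).2.2 j hj) q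
    · split_ifs with hj
      · simp
      · exact htau_ord _ _ hj
  obtain ⟨v, hv0, hv⟩ := exists_kill (fun ij => EV c (ζ j0) (E0 ij)) (if π j0 = j0 then 0 else m) K
    (fun ij => by simpa using hE0ord ij j0) (by simpa [mul_comm] using hcount)
  set E : k[X][X] := ∑ ij, v ij • E0 ij with hE
  have hEV : ∀ j, EV c (ζ j) E = ∑ ij, v ij • EV c (ζ j) (E0 ij) := by
    intro j; rw [hE, map_sum]; simp only [EV_smul]
  have hEBX : BX E (q * l + (m + 2 * d * B)) := by
    refine BX.sum _ fun ij _ => BX.smul _ ?_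
    exact ((hbW _).2.1.pow q).mul (tau_BX (hf _).1.2.1 hδ hwB)
  have hEdeg : E.natDegree ≤ q * (d - 1) + d * B := by
    refine natDegree_sum_le_of_forall_le _ _ fun ij _ => ?_
    refine (natDegree_ksmul_le _ _).trans (natDegree_mul_le.trans (add_le_add ?_ (tau_natDegree hw)))
    exact natDegree_pow_le.trans (Nat.mul_le_mul_left _ (hnat (hbW _)))
  have hdvdE : h ∣ E := by
    by_contra hnd
    have := zero_count hm hi hd hB hEBX hEdeg hnd hζ
      (fun j => ((if j = j0 then K else l * q) + (if π j = j0 then 0 else m))) (fun j => by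
        rw [← EV_apply, hEV]
        by_cases hj : j = j0
        · rw [hj, if_pos rfl, add_comm]; exact hv
        · simp only [if_neg hj]
          refine Finset.dvd_sum fun ij _ => ?_
          rw [PowerSeries.smul_eq_C_mul]
          have := hE0ord ij j
          simp only [if_neg hj] at this
          exact this.mul_left _) ∅ (by simp)
    have hπb : Function.Bijective π := Finite.injective_iff_bijective.1 hπ
    rw [Finset.sum_add_distrib, ite_sum,
      Function.Bijective.sum_comp hπb (fun j => if j = j0 then 0 else m), ite_sum] at this
    simp only [Finset.card_empty, add_zero, zero_add] at this
    rw [hK] at this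
    obtain ⟨e, rfl⟩ : ∃ e, d = e + 1 := ⟨d - 1, by omega⟩
    simp only [Nat.add_sub_cancel] at this
    nlinarith
  -- q-th roots
  choose γ hγ using fun ij => IsAlgClosed.exists_pow_nat_eq (v ij) hqpos
  let s : Fin (m+1) → k[X][X] := fun i => ∑ j, γ (i, j) • b j
  have hsW : ∀ i, s i ∈ W d c ζ j0 l := fun i =>
    Submodule.sum_mem _ fun j _ => Submodule.smul_mem _ _ (hbW j)
  have hsne : ∃ i, s i ≠ 0 := by
    by_contra hcon
    push Not at hcon
    apply hv0
    funext ⟨i, j⟩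
    have := Fintype.linearIndependent_iff.1 hbli (fun j => γ (i, j)) (hcon i) j
    rw [Pi.zero_apply, ← hγ, this, zero_pow hqpos.ne']
  set H : k[X][X] := ∑ i, s i * f i ^ q with hH
  have hHBX : BX H (l + q * m) := BX.sum _ fun i _ => (hsW i).2.1.mul ((hf i).1.2.1.pow q)
  have hHdeg : H.natDegree ≤ (d - 1) + q * (d - 1) := by
    refine natDegree_sum_le_of_forall_le _ _ fun i _ => ?_
    refine natDegree_mul_le.trans (add_le_add (hnat (hsW i)) ?_)
    exact natDegree_pow_le.trans (Nat.mul_le_mul_left _ (hnat (hf i).1))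
  have hHne : EV c (ζ j0) H ≠ 0 := by
    obtain ⟨i0, hi0, hmin⟩ := Finset.exists_min_image (Finset.univ.filter fun i => s i ≠ 0) o
      (by obtain ⟨i, hi⟩ := hsne; exact ⟨i, by simpa using hi⟩)
    have hi0' : s i0 ≠ 0 := by simpa using hi0
    have hsz := W_EV_ne_zero hm hi hd hB hζ (hsW i0) hi0'
    set r := (EV c (ζ j0) (s i0)).order.toNat with hr
    have hrle : r ≤ l + C1 := W_order hm hi hd hB hζ (hsW i0) hi0' PowerSeries.X_pow_order_dvd
    obtain ⟨u, hu⟩ : PowerSeries.X ^ r ∣ EV c (ζ j0) (s i0) := PowerSeries.X_pow_order_dvd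
    have hu0 : PowerSeries.coeff 0 u ≠ 0 := by
      have := PowerSeries.coeff_order hsz
      rw [← hr, hu, PowerSeries.coeff_X_pow_mul'] at this
      simpa using this
    obtain ⟨u', hu'⟩ := (hf i0).2.2
    have hu0' : PowerSeries.coeff 0 u' ≠ 0 := by
      have := (hf i0).2.1
      rw [hu', PowerSeries.coeff_X_pow_mul'] at this
      simpa using this
    intro h0
    have hco := congrArg (PowerSeries.coeff (r + o i0 * q)) h0
    rw [hH, map_sum, map_sum, Finset.sum_eq_single i0, map_mul, map_pow, hu, hu', mul_pow] at hco
    · have e1 : PowerSeries.X ^ r * u * ((PowerSeries.X ^ o i0) ^ q * u' ^ q) =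
        PowerSeries.X ^ (r + o i0 * q) * (u * u' ^ q) := by rw [pow_add, pow_mul]; ring
      rw [e1, PowerSeries.coeff_X_pow_mul', if_pos le_rfl, Nat.sub_self] at hco
      simp only [PowerSeries.coeff_zero_eq_constantCoeff, map_mul, map_pow, map_zero] at hco hu0 hu0'
      exact mul_ne_zero hu0 (pow_ne_zero _ hu0') hco
    · intro i _ hii
      by_cases hsi : s i = 0
      · simp [hsi]
      · have hle := hmin i (by simpa using hsi)
        have hlt : o i0 < o i := lt_of_le_of_ne hle (fun h => hii (hoi h).symm)
        have hdv : PowerSeries.X ^ (o i * q) ∣ EV c (ζ j0) (s i * f i ^ q) := by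
          rw [map_mul, map_pow, pow_mul]
          exact (pow_dvd_pow_of_dvd (hf i).2.2 q).mul_left _
        rw [PowerSeries.X_pow_dvd_iff] at hdv
        apply hdv
        have : (o i0 + 1) * q ≤ o i * q := Nat.mul_le_mul_right _ hlt
        nlinarith
    · simp
  have hHnd : ¬ h ∣ H := by
    rintro ⟨g, hg⟩
    apply hHne
    rw [hg, map_mul, EV_apply, hζ, eval_prod, Finset.prod_eq_zero (Finset.mem_univ j0) (by simp), zero_mul]
  have hEH : ∀ x ∈ P, pev x H = 0 := by
    intro x hx
    obtain ⟨-, -, hx0, hxF, hxδ, hxw⟩ := hP x hx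
    have h1 : pev x E = 0 := by
      obtain ⟨g, hg⟩ := hdvdE
      rw [hg, map_mul, hx0, zero_mul]
    have h2 : ∀ i, pev x (tau d F δ w (f i)) = δ.eval x.1 ^ d * F (pev x (f i)) := by
      intro i
      refine tau_eval hdpos F δ w (f i) (hf i).1.1 (evalRingHom x.1) F ?_ _ _ hxw
      intro p
      have h5 : F x.1 = x.1 := hxF
      have h6 := eval_map_apply (p := p) (f := F) x.1
      rw [h5] at h6
      exact h6
    have h3 : pev x E = δ.eval x.1 ^ d * Fq (pev x H) := by
      rw [hE, hH, map_sum, map_sum, map_sum, Finset.mul_sum, Fintype.sum_prod_type]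
      refine Finset.sum_congr rfl fun i _ => ?_
      have : pev x (s i) = ∑ j, γ (i, j) * pev x (b j) := by
        simp only [s, map_sum, pev_smul]
      rw [map_mul, map_mul, this, map_sum, Finset.sum_mul, Finset.mul_sum]
      refine Finset.sum_congr rfl fun j _ => ?_
      simp only [E0]
      rw [pev_smul, map_mul, h2, map_mul, map_pow, map_pow, ← hγ]
      simp only [hF, RingHom.comp_apply, hFq]
      ring
    rw [h3] at h1
    have := (mul_eq_zero.1 h1).resolve_left (pow_ne_zero _ hxδ)
    exact (map_eq_zero Fq).1 this
  have := zero_count hm hi hd hB hHBX hHdeg hHnd hζ (fun j => if j = j0 then 0 else l + q * m)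
    (fun j => by
      rw [← EV_apply]
      split_ifs with hj
      · simp
      · rw [hH, map_sum]
        refine Finset.dvd_sum fun i _ => ?_
        rw [map_mul, map_pow, pow_add, mul_comm q m, pow_mul]
        exact mul_dvd_mul ((hsW i).2.2 j hj) (pow_dvd_pow_of_dvd ((hf i).1.2.2 j hj) q)) P
    (fun x hx => ⟨(hP x hx).1, (hP x hx).2.1, by rw [← pev_apply]; exact (hP x hx).2.2.1,
      by rw [← pev_apply]; exact hEH x hx⟩)
  rw [ite_sum] at this
  have e2 : d * (l + q * m) = (l + q * m) + (d - 1) * (l + q * m) := by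
    obtain ⟨e, rfl⟩ : ∃ e, d = e + 1 := ⟨d - 1, by omega⟩
    simp only [Nat.add_sub_cancel]; ring
  have e3 : ((d - 1) + q * (d - 1)) * B = (q + 1) * C1 := by rw [hC1]; ring
  rw [e2, e3, hmdef] at this
  nlinarith

end UB3

end Part4
end Felg

namespace Felg
section Part5

open Polynomial

section FT
variable {k : Type*} [Field k]

lemma card_fix [IsAlgClosed k] {Q : ℕ} (hQ : 1 < Q) (hQk : (Q : k) = 0) :
    ∃ T : Finset k, T.card = Q ∧ ∀ x, x ∈ T ↔ x ^ Q = x := by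
  classical
  have hsep : (X ^ Q - X : k[X]).Separable := by
    rw [Polynomial.Separable]
    refine ⟨0, -1, ?_⟩
    rw [derivative_sub, derivative_X_pow, hQk]
    simp
  have hne : (X ^ Q - X : k[X]) ≠ 0 := FiniteField.X_pow_card_sub_X_ne_zero k hQ
  have hdeg : (X ^ Q - X : k[X]).natDegree = Q := FiniteField.X_pow_card_sub_X_natDegree_eq k hQ
  refine ⟨(X ^ Q - X : k[X]).roots.toFinset, ?_, fun x => ?_⟩
  · rw [Multiset.toFinset_card_of_nodup (nodup_roots hsep),
      splits_iff_card_roots.1 (IsAlgClosed.splits _), hdeg]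
  · rw [Multiset.mem_toFinset, mem_roots hne]
    simp [sub_eq_zero]

/-- the third layer identity: `h` divides `δ^d h^F(Z) - ∏ (δ Z - w i)` -/
def Ident {k : Type*} [CommRing k] {ι : Type*} [Fintype ι] (F : k →+* k) (h : k[X][X]) (δ : k[X]) (w : ι → k[X][X]) : Prop :=
  C h ∣ C (C δ) ^ (Fintype.card ι) * ((h.map (mapRingHom F)).map (C : k[X] →+* k[X][X])) -
    ∏ i, (C (C δ) * X - C (w i))

lemma Ident.eval {k : Type*} [CommRing k] {ι : Type*} [Fintype ι] {F : k →+* k} {h : k[X][X]} {δ : k[X]} {w : ι → k[X][X]}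
    (hI : Ident F h δ w) {S : Type*} [CommRing S] (ψ : k[X][X] →+* S) (h0 : ψ h = 0) (z : S) :
    ψ (C δ) ^ (Fintype.card ι) * ((h.map (mapRingHom F)).eval₂ (ψ.comp C) z) =
      ∏ i, (ψ (C δ) * z - ψ (w i)) := by
  obtain ⟨g, hg⟩ := hI
  have h1 := congrArg (eval₂ ψ z) hg
  rw [eval₂_sub, eval₂_mul, eval₂_mul, eval₂_C, h0, zero_mul, sub_eq_zero, eval₂_pow, eval₂_C,
    eval₂_finsetProd, eval₂_map] at h1
  simpa using h1

/-- points of given type -/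
theorem finite_points [IsAlgClosed k] {ι : Type*} [Fintype ι] {h : k[X][X]} (hm : h.Monic)
    (hi : Irreducible h) {d B : ℕ}
    (hd : h.natDegree = d) (hdpos : 0 < d) (hdι : Fintype.card ι = d) (hB : BX h B)
    (Fq : k →+* k) (q : ℕ) (hFq : ∀ x, Fq x = x ^ q) (hqk : (q : k) = 0)
    (hq : ((d - 1) * B + 1) * ((d - 1) * B + 1) + (2 * d * d * B + d * B * B + 1) +
      ((d - 1) * B + 1) + 2 * B + 2 ≤ q)
    {Δ : k[X]} (hΔ0 : Δ ≠ 0) (hΔB : Δ.natDegree ≤ B) {U V : k[X][X]}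
    (hUV : U * h + V * derivative h = C Δ)
    {δ : k[X]} (hδ0 : δ ≠ 0) {w : ι → k[X][X]} (hδ : δ.natDegree ≤ B) (hwB : ∀ i, BX (w i) B)
    (hw : ∀ i, (w i).natDegree ≤ B) (hI : Ident (Fq.comp Fq) h δ w)
    {δ' : ι → k[X]} (hδ' : ∀ i, δ' i ≠ 0) {v : ι → k[X][X]}
    (hv : ∀ i, h ∣ (v i).comp (w i) - C (δ' i) * X) (i0 : ι) :
    ∃ T : Finset k, (∀ t ∈ T, Fq (Fq t) = t ∧ δ.eval t ≠ 0 ∧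
      ∃ z, pev (t, z) h = 0 ∧ δ.eval t * Fq (Fq z) = pev (t, z) (w i0)) ∧
      q ^ 2 ≤ d * T.card + ((d - 1) * (3 * ((d - 1) * B) + 1) + d * (2 * B + 1)) * q := by
  classical
  set F := Fq.comp Fq with hF
  have hFpow : ∀ x, F x = x ^ (q ^ 2) := by
    intro x; simp only [hF, RingHom.comp_apply, hFq]; rw [← pow_mul, sq]
  have hq2 : 2 * B + 2 ≤ q := by omega
  have hqq : q ≤ q ^ 2 := Nat.le_self_pow two_ne_zero q
  obtain ⟨T0, hT0, hT0m⟩ := card_fix (k := k) (Q := q ^ 2) (by omega) (by simp [hqk])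
  have hT0F : ∀ x, x ∈ T0 ↔ F x = x := fun x => by rw [hT0m, hFpow]
  -- bad points
  let bad : Finset k := Δ.roots.toFinset ∪ δ.roots.toFinset
  have hbad : bad.card ≤ 2 * B := by
    refine (Finset.card_union_le _ _).trans ?_
    have h1 := (Multiset.toFinset_card_le Δ.roots).trans ((card_roots' Δ).trans hΔB)
    have h2 := (Multiset.toFinset_card_le δ.roots).trans ((card_roots' δ).trans hδ)
    omega
  have hgood : ∀ t, t ∉ bad → Δ.eval t ≠ 0 ∧ δ.eval t ≠ 0 := by
    intro t ht
    simp only [bad, Finset.mem_union, Multiset.mem_toFinset, mem_roots hΔ0, mem_roots hδ0,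
      not_or] at ht
    exact ht
  have hsep : ∀ t, Δ.eval t ≠ 0 → (h.map (evalRingHom t)).Separable := by
    intro t ht
    have h1 := congrArg (Polynomial.map (evalRingHom t)) hUV
    rw [Polynomial.map_add, Polynomial.map_mul, Polynomial.map_mul, Polynomial.map_C,
      ← derivative_map] at h1
    refine ⟨C (Δ.eval t)⁻¹ * U.map (evalRingHom t), C (Δ.eval t)⁻¹ * V.map (evalRingHom t), ?_⟩
    rw [mul_assoc, mul_assoc, ← mul_add, h1, ← C_mul]
    simp [ht]
  obtain ⟨c, hcT, hcb⟩ : ∃ c ∈ T0, c ∉ bad := by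
    by_contra hcon
    push Not at hcon
    have := Finset.card_le_card (show T0 ⊆ bad from hcon)
    rw [hT0] at this
    omega
  have hcF : F c = c := (hT0F c).1 hcT
  obtain ⟨hcΔ, hcδ⟩ := hgood c hcb
  obtain ⟨ζ, hζi, hζ⟩ := exists_roots hm hd (hsep c hcΔ)
  have hEVh : ∀ j, EV c (ζ j) h = 0 := by
    intro j
    rw [EV_apply, hζ, eval_prod, Finset.prod_eq_zero (Finset.mem_univ j) (by simp)]
  have hserδ : IsUnit (ser c δ) := by
    rw [PowerSeries.isUnit_iff_constantCoeff, constantCoeff_ser, isUnit_iff_ne_zero]; exact hcδ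
  obtain ⟨ε, hε⟩ := hserδ.exists_right_inv
  have hEVC : ∀ (j : Fin d) (p : k[X]), EV c (ζ j) (C p) = ser c p := by
    intro j p; simp [EV]
  have hpi : ∀ i j, ∃ j', ser c δ * PowerSeries.map F (ζ j') = EV c (ζ j) (w i) := by
    intro i j
    have h1 := hI.eval (EV c (ζ j)) (hEVh j) (ε * EV c (ζ j) (w i))
    rw [Finset.prod_eq_zero (Finset.mem_univ i) (by rw [hEVC, ← mul_assoc, hε, one_mul, sub_self])] at h1
    rw [hEVC] at h1
    have h2 := (mul_eq_zero.1 h1).resolve_left (pow_ne_zero _ hserδ.ne_zero)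
    have h3 : ((EV c (ζ j)).comp C).comp (mapRingHom F) = (PowerSeries.map F).comp (ser c) := by
      refine RingHom.ext fun p => ?_
      simp only [RingHom.comp_apply, hEVC, coe_mapRingHom]
      exact ser_map hcF p
    rw [eval₂_map, h3, eval₂_eq_eval_map, ← map_map, hζ, Polynomial.map_prod, eval_prod,
      Finset.prod_eq_zero_iff] at h2
    obtain ⟨j', -, hj'⟩ := h2
    refine ⟨j', ?_⟩
    simp only [Polynomial.map_sub, map_X, map_C, eval_sub, eval_X, eval_C, sub_eq_zero] at hj'
    rw [← hj', ← mul_assoc, hε, one_mul]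
  choose π hπ using hpi
  have hπi : ∀ i, Function.Injective (π i) := by
    intro i j1 j2 hj
    have h1 : EV c (ζ j1) (w i) = EV c (ζ j2) (w i) := by rw [← hπ, ← hπ, hj]
    have h2 : ∀ j, (v i).eval₂ (ser c) (EV c (ζ j) (w i)) = ser c (δ' i) * ζ j := by
      intro j
      obtain ⟨g, hg⟩ := hv i
      have := congrArg (EV c (ζ j)) hg
      rw [map_mul, hEVh, zero_mul, map_sub, sub_eq_zero, map_mul, hEVC] at this
      have h3 : EV c (ζ j) X = ζ j := by simp [EV]
      rw [h3] at this
      rw [← this, comp, hom_eval₂]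
      congr 1
      refine RingHom.ext fun p => ?_
      exact (hEVC j p).symm
    have h3 := (h2 j1).symm.trans ((by rw [h1]) : _ = (v i).eval₂ (ser c) (EV c (ζ j2) (w i)))
    rw [h2] at h3
    have h4 := mul_left_cancel₀ (fun h0 => hδ' i (ser_injective c (by rw [h0, map_zero]))) h3
    apply hζi
    simp only [h4]
  -- good t0
  let T1 : Finset k := (T0 \ bad).erase c
  have hT1 : q ^ 2 ≤ T1.card + (2 * B + 1) := by
    have h1 := Finset.le_card_sdiff bad T0
    have h2 := Finset.pred_card_le_card_erase (s := T0 \ bad) (a := c)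
    rw [hT0] at h1
    have h3 : T1.card = ((T0 \ bad).erase c).card := rfl
    omega
  have hT1m : ∀ t ∈ T1, t ≠ c ∧ F t = t ∧ Δ.eval t ≠ 0 ∧ δ.eval t ≠ 0 := by
    intro t ht
    obtain ⟨h1, h2⟩ := Finset.mem_erase.1 ht
    obtain ⟨h2, h3⟩ := Finset.mem_sdiff.1 h2
    exact ⟨h1, (hT0F t).1 h2, hgood t h3⟩
  let Rt : k → Finset k := fun t => (h.map (evalRingHom t)).roots.toFinset
  have hRt : ∀ t z, z ∈ Rt t ↔ pev (t, z) h = 0 := by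
    intro t z
    rw [Multiset.mem_toFinset, mem_roots (hm.map _).ne_zero, pev_apply, IsRoot.def]
  have hRtc : ∀ t ∈ T1, (Rt t).card = d := by
    intro t ht
    rw [Multiset.toFinset_card_of_nodup (nodup_roots (hsep t (hT1m t ht).2.2.1)),
      splits_iff_card_roots.1 (IsAlgClosed.splits _), hm.natDegree_map, hd]
  let Pts : Finset (k × k) := T1.biUnion fun t => (Rt t).image fun z => (t, z)
  have hPtsm : ∀ x, x ∈ Pts ↔ x.1 ∈ T1 ∧ pev x h = 0 := by
    rintro ⟨t, z⟩
    simp only [Pts, Finset.mem_biUnion, Finset.mem_image, Prod.mk.injEq, hRt]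
    constructor
    · rintro ⟨t', ht', z', hz', rfl, rfl⟩; exact ⟨ht', hz'⟩
    · rintro ⟨h1, h2⟩; exact ⟨t, h1, z, h2, rfl, rfl⟩
  have hPtsc : Pts.card = T1.card * d := by
    rw [Finset.card_biUnion]
    · rw [Finset.sum_congr rfl (g := fun _ => d)]
      · simp
      · intro t ht
        rw [Finset.card_image_of_injective _ (fun a b hab => (Prod.mk.inj hab).2), hRtc t ht]
    · intro t _ t' _ htt'
      rw [Function.onFun, Finset.disjoint_left]
      intro x hx hx'
      obtain ⟨z, -, rfl⟩ := Finset.mem_image.1 hx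
      obtain ⟨z', -, hz'⟩ := Finset.mem_image.1 hx'
      exact htt' (Prod.mk.inj hz').1.symm
  let Pi : ι → Finset (k × k) := fun i => Pts.filter fun x => δ.eval x.1 * F x.2 = pev x (w i)
  have hcover : Pts ⊆ Finset.univ.biUnion Pi := by
    intro x hx
    obtain ⟨hx1, hx0⟩ := (hPtsm x).1 hx
    obtain ⟨-, hxF, -, -⟩ := hT1m _ hx1
    have h1 := hI.eval (pev x) hx0 (F x.2)
    have h3 : ((pev x).comp C).comp (mapRingHom F) = F.comp (evalRingHom x.1) := by
      refine RingHom.ext fun p => ?_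
      simp only [RingHom.comp_apply, pev_C, coe_mapRingHom, coe_evalRingHom]
      have h6 := eval_map_apply (p := p) (f := F) x.1
      rw [hxF] at h6
      exact h6
    rw [eval₂_map, h3, ← hom_eval₂] at h1
    have h4 : eval₂ (evalRingHom x.1) x.2 h = 0 := hx0
    rw [h4, map_zero, mul_zero, eq_comm, Finset.prod_eq_zero_iff] at h1
    obtain ⟨i, -, hi⟩ := h1
    rw [pev_C, sub_eq_zero] at hi
    exact Finset.mem_biUnion.2 ⟨i, Finset.mem_univ _, Finset.mem_filter.2 ⟨hx, hi⟩⟩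
  have hub : ∀ i, (Pi i).card ≤ q ^ 2 + (3 * ((d - 1) * B) + 1) * q := by
    intro i
    refine upper_bound hm hi hd hdpos hB hζ Fq q hFq (by omega) hcF hδ (hwB i) (hw i) (π i) (hπi i)
      (hπ i) (Pi i) ?_
    intro x hx
    obtain ⟨hx, hxi⟩ := Finset.mem_filter.1 hx
    obtain ⟨hx1, hx0⟩ := (hPtsm x).1 hx
    obtain ⟨h1, h2, h3, h4⟩ := hT1m _ hx1
    exact ⟨h1, hsep _ h3, hx0, h2, h4, hxi⟩
  have hsum : T1.card * d ≤ (Pi i0).card + (d - 1) * (q ^ 2 + (3 * ((d - 1) * B) + 1) * q) := by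
    rw [← hPtsc]
    refine (Finset.card_le_card hcover).trans (Finset.card_biUnion_le.trans ?_)
    rw [← Finset.add_sum_erase _ _ (Finset.mem_univ i0)]
    refine add_le_add le_rfl ((Finset.sum_le_card_nsmul _ _ _ fun i _ => hub i).trans ?_)
    rw [Finset.card_erase_of_mem (Finset.mem_univ _), Finset.card_univ, hdι, smul_eq_mul]
  refine ⟨(Pi i0).image Prod.fst, ?_, ?_⟩
  · intro t ht
    obtain ⟨x, hx, rfl⟩ := Finset.mem_image.1 ht
    obtain ⟨hx, hxi⟩ := Finset.mem_filter.1 hx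
    obtain ⟨hx1, hx0⟩ := (hPtsm x).1 hx
    obtain ⟨h1, h2, h3, h4⟩ := hT1m _ hx1
    exact ⟨h2, h4, x.2, hx0, hxi⟩
  · have him : (Pi i0).card ≤ d * ((Pi i0).image Prod.fst).card := by
      refine Finset.card_le_mul_card_image _ _ ?_
      intro t ht
      obtain ⟨x, hx, rfl⟩ := Finset.mem_image.1 ht
      have hx1 := ((hPtsm x).1 (Finset.mem_filter.1 hx).1).1
      rw [← hRtc _ hx1]
      refine Finset.card_le_card_of_injOn Prod.snd ?_ ?_
      · intro y hy
        obtain ⟨hy, hyx⟩ := Finset.mem_filter.1 hy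
        have h2 := ((hPtsm y).1 (Finset.mem_filter.1 hy).1).2
        rw [Finset.mem_coe, hRt, ← hyx]; exact h2
      · intro y hy y' hy' hyy
        refine Prod.ext ?_ hyy
        rw [(Finset.mem_filter.1 hy).2, (Finset.mem_filter.1 hy').2]
    obtain ⟨e, rfl⟩ : ∃ e, d = e + 1 := ⟨d - 1, by omega⟩
    simp only [Nat.add_sub_cancel] at hsum ⊢
    have h5 : q ^ 2 * (e + 1) ≤ (T1.card + (2 * B + 1)) * (e + 1) := Nat.mul_le_mul_right _ hT1
    have h6 : 1 ≤ q := by omega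
    have h7 : (e + 1) * (2 * B + 1) ≤ (e + 1) * (2 * B + 1) * q := Nat.le_mul_of_pos_right _ h6
    nlinarith

end FT

end Part5
end Felg

namespace Felg
section Part6

open Polynomial

/-- the expression in `Ident` -/
noncomputable def IdExpr {k : Type*} [CommRing k] {ι : Type*} [Fintype ι] (F : k →+* k)
    (h : k[X][X]) (δ : k[X]) (w : ι → k[X][X]) : k[X][X][X] :=
  C (C δ) ^ (Fintype.card ι) * ((h.map (mapRingHom F)).map (C : k[X] →+* k[X][X])) -
    ∏ i, (C (C δ) * X - C (w i))

lemma Ident_iff {k : Type*} [CommRing k] {ι : Type*} [Fintype ι] (F : k →+* k)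
    (h : k[X][X]) (δ : k[X]) (w : ι → k[X][X]) : Ident F h δ w ↔ C h ∣ IdExpr F h δ w := Iff.rfl

/-- induced map on bivariate polynomials -/
noncomputable abbrev m2 {R S : Type*} [CommRing R] [CommRing S] (f : R →+* S) : R[X][X] →+* S[X][X] :=
  mapRingHom (mapRingHom f)

lemma IdExpr_map {R S : Type*} [CommRing R] [CommRing S] {ι : Type*} [Fintype ι] (f : R →+* S)
    (F : R →+* R) (G : S →+* S) (hfG : ∀ x, f (F x) = G (f x)) (h : R[X][X]) (δ : R[X])
    (w : ι → R[X][X]) : mapRingHom (m2 f) (IdExpr F h δ w) =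
      IdExpr G (m2 f h) (mapRingHom f δ) (fun i => m2 f (w i)) := by
  have h1 : (mapRingHom f).comp (mapRingHom F) = (mapRingHom G).comp (mapRingHom f) := by
    ext x
    · simp [hfG]
    · simp
  have h2 : (m2 f).comp (C : R[X] →+* R[X][X]) = (C : S[X] →+* S[X][X]).comp (mapRingHom f) := by
    refine RingHom.ext fun p => ?_
    simp
  have h3 : mapRingHom (m2 f) ((h.map (mapRingHom F)).map (C : R[X] →+* R[X][X])) =
      (((m2 f) h).map (mapRingHom G)).map (C : S[X] →+* S[X][X]) := by
    rw [coe_mapRingHom, map_map, h2, coe_mapRingHom, map_map, map_map, map_map, RingHom.comp_assoc, h1]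
    rfl
  unfold IdExpr
  rw [coe_mapRingHom] at h3
  rw [coe_mapRingHom, Polynomial.map_sub, Polynomial.map_mul, h3, Polynomial.map_pow,
    Polynomial.map_prod]
  simp

lemma Ident.map {R S : Type*} [CommRing R] [CommRing S] {ι : Type*} [Fintype ι] (f : R →+* S)
    {F : R →+* R} {G : S →+* S} (hfG : ∀ x, f (F x) = G (f x)) {h : R[X][X]} {δ : R[X]}
    {w : ι → R[X][X]} (hI : Ident F h δ w) :
    Ident G (m2 f h) (mapRingHom f δ) (fun i => m2 f (w i)) := by
  rw [Ident_iff] at hI ⊢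
  have := map_dvd (mapRingHom (m2 f)) hI
  rw [IdExpr_map f F G hfG] at this
  simpa using this

open Filter

/-- compatible family of maps -/
structure Los {S S' : Type*} {Sn : ℕ → Type*} [CommRing S] [CommRing S'] [∀ n, CommRing (Sn n)]
    (φ : S →+* S') (φn : ∀ n, S →+* Sn n) : Prop where
  surj : Function.Surjective φ
  iff : ∀ s, φ s = 0 ↔ ∀ᶠ n in (hyperfilter ℕ : Filter ℕ), φn n s = 0

lemma Los.poly {S S' : Type*} {Sn : ℕ → Type*} [CommRing S] [CommRing S'] [∀ n, CommRing (Sn n)]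
    {φ : S →+* S'} {φn : ∀ n, S →+* Sn n} (h : Los φ φn) :
    Los (mapRingHom φ) (fun n => mapRingHom (φn n)) := by
  refine ⟨map_surjective _ h.surj, fun s => ?_⟩
  have h1 : mapRingHom φ s = 0 ↔ ∀ i ∈ s.support, φ (s.coeff i) = 0 := by
    rw [Polynomial.ext_iff]
    constructor
    · intro h i _; simpa using h i
    · intro h i
      by_cases hi : i ∈ s.support
      · simpa using h i hi
      · simp [notMem_support_iff.1 hi]
  have h2 : ∀ n, mapRingHom (φn n) s = 0 ↔ ∀ i ∈ s.support, φn n (s.coeff i) = 0 := by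
    intro n
    rw [Polynomial.ext_iff]
    constructor
    · intro h i _; simpa using h i
    · intro h i
      by_cases hi : i ∈ s.support
      · simpa using h i hi
      · simp [notMem_support_iff.1 hi]
  simp only [h1, h2, h.iff]
  rw [Filter.eventually_all_finset]

lemma Los.eq_iff {S S' : Type*} {Sn : ℕ → Type*} [CommRing S] [CommRing S'] [∀ n, CommRing (Sn n)]
    {φ : S →+* S'} {φn : ∀ n, S →+* Sn n} (h : Los φ φn) (a b : S) :
    φ a = φ b ↔ ∀ᶠ n in (hyperfilter ℕ : Filter ℕ), φn n a = φn n b := by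
  rw [← sub_eq_zero, ← map_sub, h.iff]
  simp only [map_sub, sub_eq_zero]

section Ultra
variable (k : ℕ → Type) [∀ n, Field (k n)]

/-- eventually zero sequences -/
def Iz : Ideal (∀ n, k n) where
  carrier := {x | ∀ᶠ n in (hyperfilter ℕ : Filter ℕ), x n = 0}
  add_mem' := by
    intro a b ha hb
    filter_upwards [ha, hb] with n h1 h2
    simp [h1, h2]
  zero_mem' := by simp
  smul_mem' := by
    intro c x hx
    filter_upwards [hx] with n h1
    simp [h1]

lemma mem_Iz (x : ∀ n, k n) : x ∈ Iz k ↔ ∀ᶠ n in (hyperfilter ℕ : Filter ℕ), x n = 0 := Iff.rfl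

instance : (Iz k).IsMaximal := by
  rw [Ideal.isMaximal_iff]
  constructor
  · rw [mem_Iz]
    intro h
    obtain ⟨n, hn⟩ := h.exists
    exact one_ne_zero hn
  · intro J x hJ hx hxJ
    have h1 : (fun n => (x n)⁻¹) * x ∈ J := J.mul_mem_left _ hxJ
    have h2 : 1 - (fun n => (x n)⁻¹) * x ∈ J := by
      apply hJ
      rw [mem_Iz] at hx ⊢
      rw [← Ultrafilter.eventually_not] at hx
      filter_upwards [hx] with n hn
      simp [hn]
    simpa using J.add_mem h1 h2

/-- the ultraproduct -/
def Ks : Type := (∀ n, k n) ⧸ Iz k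

noncomputable instance : Field (Ks k) := Ideal.Quotient.field (Iz k)

/-- class of a sequence -/
noncomputable def mk : (∀ n, k n) →+* Ks k := Ideal.Quotient.mk (Iz k)

lemma Los_mk : Los (mk k) (Pi.evalRingHom k) :=
  ⟨Ideal.Quotient.mk_surjective, fun _ => Ideal.Quotient.eq_zero_iff_mem⟩

variable {k}

lemma mk_eq_iff (a b : ∀ n, k n) : mk k a = mk k b ↔
    ∀ᶠ n in (hyperfilter ℕ : Filter ℕ), a n = b n := (Los_mk k).eq_iff a b

lemma mk_eq_zero_iff (a : ∀ n, k n) : mk k a = 0 ↔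
    ∀ᶠ n in (hyperfilter ℕ : Filter ℕ), a n = 0 := (Los_mk k).iff a

lemma mk_surj (x : Ks k) : ∃ a, mk k a = x := (Los_mk k).surj x

/-- coordinatewise maps -/
def sigt (F : ∀ n, k n →+* k n) : (∀ n, k n) →+* (∀ n, k n) :=
  RingHom.pi fun n => (F n).comp (Pi.evalRingHom k n)

/-- induced map on the ultraproduct -/
noncomputable def sig (F : ∀ n, k n →+* k n) : Ks k →+* Ks k :=
  Ideal.Quotient.lift (Iz k) ((mk k).comp (sigt F)) (by
    intro a ha
    rw [RingHom.comp_apply, mk_eq_zero_iff]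
    rw [mem_Iz] at ha
    filter_upwards [ha] with n hn
    change F n (a n) = 0
    rw [hn, map_zero])

lemma sig_mk (F : ∀ n, k n →+* k n) (a : ∀ n, k n) : sig F (mk k a) = mk k (fun n => F n (a n)) := rfl

lemma mk_sigt (F : ∀ n, k n →+* k n) (a : ∀ n, k n) : mk k (sigt F a) = sig F (mk k a) := rfl

instance [∀ n, IsAlgClosed (k n)] : IsAlgClosed (Ks k) := by
  refine IsAlgClosed.of_exists_root _ ?_
  intro p hp hi
  obtain ⟨P, hP, hPd, hPm⟩ := lifts_and_natDegree_eq_and_monic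
    (show p ∈ lifts (mk k) by obtain ⟨P, hP⟩ := (Los_mk k).poly.surj p; exact ⟨P, hP⟩) hp
  have : ∀ n, ∃ x, (P.map (Pi.evalRingHom k n)).eval x = 0 := by
    intro n
    refine IsAlgClosed.exists_root _ ?_
    rw [degree_eq_natDegree (hPm.map _).ne_zero, hPm.natDegree_map, hPd]
    have := hi.natDegree_pos
    exact_mod_cast this.ne'
  choose x hx using this
  refine ⟨mk k x, ?_⟩
  rw [← hP, eval_map_apply, mk_eq_zero_iff]
  refine Eventually.of_forall fun n => ?_
  rw [← hx n]
  change (Pi.evalRingHom k n) (eval x P) = _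
  rw [← eval_map_apply]
  rfl

/-- lifting bounded families of polynomials -/
lemma exists_lift_poly {R : Type*} [CommRing R] {Sn : ℕ → Type*} [∀ n, CommRing (Sn n)]
    (φn : ∀ n, R →+* Sn n) (Pr : ∀ n, Sn n → Prop)
    (hl : ∀ s : ∀ n, Sn n, (∀ n, Pr n (s n)) → ∃ r, ∀ n, φn n r = s n)
    (f : ∀ n, (Sn n)[X]) (a : ℕ) (hf : ∀ n, (f n).natDegree ≤ a) (hfP : ∀ n i, Pr n ((f n).coeff i)) :
    ∃ g : R[X], ∀ n, g.map (φn n) = f n := by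
  choose r hr using fun i => hl (fun n => (f n).coeff i) (fun n => hfP n i)
  refine ⟨∑ i ∈ Finset.range (a+1), monomial i (r i), fun n => ?_⟩
  rw [Polynomial.map_sum]
  simp only [map_monomial, hr]
  exact ((f n).as_sum_range' (a+1) (by have := hf n; omega)).symm

lemma exists_lift2 (f : ∀ n, (k n)[X][X]) (a b : ℕ) (hf : ∀ n, (f n).natDegree ≤ a)
    (hfb : ∀ n, BX (f n) b) : ∃ g : (∀ n, k n)[X][X], ∀ n, m2 (Pi.evalRingHom k n) g = f n := by
  refine exists_lift_poly (fun n => mapRingHom (Pi.evalRingHom k n)) (fun n p => p.natDegree ≤ b)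
    ?_ f a hf (fun n i => hfb n i)
  intro s hs
  refine exists_lift_poly (Pi.evalRingHom k) (fun _ _ => True) ?_ s b hs (fun _ _ => trivial)
  intro s _
  exact ⟨s, fun n => rfl⟩

end Ultra

lemma coeff_coeff_swap {k : Type*} [Field k] (f : k[X][X]) (i j : ℕ) :
    ((Bivariate.swap f).coeff i).coeff j = (f.coeff j).coeff i := by
  induction f using Polynomial.induction_on' with
  | add p q hp hq => simp [hp, hq]
  | monomial n a =>
    induction a using Polynomial.induction_on' with
    | add p q hp hq => simp only [map_add, coeff_add, hp, hq]
    | monomial m r =>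
      rw [Bivariate.swap_monomial_monomial]
      simp only [coeff_monomial]
      split_ifs <;> simp_all [coeff_monomial]

lemma BX_iff_swap {k : Type*} [Field k] (f : k[X][X]) (n : ℕ) : BX f n ↔
    (Bivariate.swap f).natDegree ≤ n := by
  rw [natDegree_le_iff_coeff_eq_zero]
  simp only [BX, natDegree_le_iff_coeff_eq_zero]
  constructor
  · intro h N hN
    ext i
    rw [coeff_coeff_swap]
    simpa using h i N hN
  · intro h i N hN
    have := congrArg (fun p => p.coeff i) (h N hN)
    simp only [coeff_coeff_swap] at this
    simpa using this

lemma BX_of_mul_left {k : Type*} [Field k] {f g : k[X][X]} {n : ℕ} (h : BX (f * g) n)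
    (h0 : f * g ≠ 0) : BX f n := by
  rw [BX_iff_swap] at h ⊢
  have h1 : Bivariate.swap f ≠ 0 := by simpa using left_ne_zero_of_mul h0
  have h2 : Bivariate.swap g ≠ 0 := by simpa using right_ne_zero_of_mul h0
  rw [map_mul, natDegree_mul h1 h2] at h
  omega


end Part6
end Felg

namespace Felg
section Part7

open Polynomial Filter

section Ultra2
variable {k : ℕ → Type} [∀ n, Field (k n)]

lemma Los2 : Los (m2 (mk k)) (fun n => m2 (Pi.evalRingHom k n)) := (Los_mk k).poly.poly

lemma irreducible_transfer {h : (∀ n, k n)[X][X]} (hm : h.Monic) (hi : Irreducible (m2 (mk k) h)) :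
    ∀ᶠ n in (hyperfilter ℕ : Filter ℕ), Irreducible (m2 (Pi.evalRingHom k n) h) := by
  classical
  by_contra hcon
  rw [← Ultrafilter.eventually_not] at hcon
  have hm' : (m2 (mk k) h).Monic := hm.map _
  have hmn : ∀ n, (m2 (Pi.evalRingHom k n) h).Monic := fun n => hm.map _
  set d := h.natDegree with hd
  have hd' : (m2 (mk k) h).natDegree = d := hm.natDegree_map _
  have hdn : ∀ n, (m2 (Pi.evalRingHom k n) h).natDegree = d := fun n => hm.natDegree_map _
  have hdpos : 0 < d := by
    rw [← hd']
    rcases Nat.eq_zero_or_pos (m2 (mk k) h).natDegree with h0 | h0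
    · rw [hm'.natDegree_eq_zero] at h0
      exact absurd (h0 ▸ hi) not_irreducible_one
    · exact h0
  obtain ⟨B, hB⟩ := exists_BX h
  have key : ∀ n, ∃ f g : (k n)[X][X], f.Monic ∧ g.Monic ∧ BX f B ∧ BX g B ∧ f.natDegree ≤ d ∧
      g.natDegree ≤ d ∧
      (¬ Irreducible (m2 (Pi.evalRingHom k n) h) →
        f * g = m2 (Pi.evalRingHom k n) h ∧ f.natDegree ≠ 0 ∧ g.natDegree ≠ 0) := by
    intro n
    by_cases hirr : Irreducible (m2 (Pi.evalRingHom k n) h)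
    · exact ⟨1, 1, monic_one, monic_one, BX.one.mono (Nat.zero_le _), BX.one.mono (Nat.zero_le _),
        by simp, by simp, fun h => absurd hirr h⟩
    · rw [(hmn n).irreducible_iff_natDegree] at hirr
      push Not at hirr
      have hne1 : m2 (Pi.evalRingHom k n) h ≠ 1 := by
        intro h1
        have := hdn n
        rw [h1, natDegree_one] at this
        omega
      obtain ⟨f, g, hf, hg, hfg, h1, h2⟩ := hirr hne1
      have hBn : BX (f * g) B := by rw [hfg]; exact hB.map _
      have h0 : f * g ≠ 0 := by rw [hfg]; exact (hmn n).ne_zero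
      have hdeg : f.natDegree + g.natDegree = d := by rw [← hf.natDegree_mul hg, hfg, hdn]
      exact ⟨f, g, hf, hg, BX_of_mul_left hBn h0, BX_of_mul_left (by rwa [mul_comm]) (by rwa [mul_comm]),
        by omega, by omega, fun _ => ⟨hfg, h1, h2⟩⟩
  choose f g hf hg hfB hgB hfd hgd hfg using key
  obtain ⟨f', hf'⟩ := exists_lift2 f d B hfd hfB
  obtain ⟨g', hg'⟩ := exists_lift2 g d B hgd hgB
  have hprod : m2 (mk k) f' * m2 (mk k) g' = m2 (mk k) h := by
    rw [← map_mul, Los2.eq_iff]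
    filter_upwards [hcon] with n hn
    rw [map_mul, hf', hg']
    exact (hfg n hn).1
  have hunit : ∀ f0 : (∀ n, k n)[X][X], (∀ᶠ n in (hyperfilter ℕ : Filter ℕ),
      (m2 (Pi.evalRingHom k n) f0).Monic ∧ (m2 (Pi.evalRingHom k n) f0).natDegree ≠ 0) →
      ¬ IsUnit (m2 (mk k) f0) := by
    intro f0 h0 hu
    obtain ⟨u, hu⟩ := hu.exists_right_inv
    obtain ⟨u', rfl⟩ := Los2.surj u
    rw [← map_mul, ← map_one (m2 (mk k)), Los2.eq_iff] at hu
    obtain ⟨n, ⟨h1, h2⟩, h3⟩ := (h0.and hu).exists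
    rw [map_mul, map_one] at h3
    have := h1.isUnit_iff.1 (IsUnit.of_mul_eq_one _ h3)
    rw [this] at h2
    simp at h2
  rcases hi.isUnit_or_isUnit hprod.symm with h1 | h1
  · refine hunit f' ?_ h1
    filter_upwards [hcon] with n hn
    rw [hf']
    exact ⟨hf n, (hfg n hn).2.1⟩
  · refine hunit g' ?_ h1
    filter_upwards [hcon] with n hn
    rw [hg']
    exact ⟨hg n, (hfg n hn).2.2⟩

lemma pev_mk (t z : ∀ n, k n) (P : (∀ n, k n)[X][X]) : pev (mk k t, mk k z) (m2 (mk k) P) =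
    mk k (fun n => pev (t n, z n) (m2 (Pi.evalRingHom k n) P)) := by
  have : (pev (mk k t, mk k z)).comp (m2 (mk k)) = (mk k).comp
      (RingHom.pi fun n => (pev (t n, z n)).comp (m2 (Pi.evalRingHom k n))) := by
    refine Polynomial.ringHom_ext' (Polynomial.ringHom_ext' ?_ ?_) ?_
    · refine RingHom.ext fun a => ?_
      have h2 : (RingHom.pi fun n => (pev (t n, z n)).comp (m2 (Pi.evalRingHom k n))) (C (C a)) = a := by
        funext n
        simp [RingHom.pi, pev]
      simp only [RingHom.comp_apply]
      rw [h2]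
      simp [pev]
    · have h2 : (RingHom.pi fun n => (pev (t n, z n)).comp (m2 (Pi.evalRingHom k n))) (C X) = t := by
        funext n
        simp [RingHom.pi, pev]
      simp only [RingHom.comp_apply]
      rw [h2]
      simp [pev]
    · have h2 : (RingHom.pi fun n => (pev (t n, z n)).comp (m2 (Pi.evalRingHom k n))) X = z := by
        funext n
        simp [RingHom.pi, pev]
      simp only [RingHom.comp_apply]
      rw [h2]
      simp [pev]
  exact congrArg (fun f => f P) this

lemma eval_mk (t : ∀ n, k n) (P : (∀ n, k n)[X]) : (mapRingHom (mk k) P).eval (mk k t) =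
    mk k (fun n => (mapRingHom (Pi.evalRingHom k n) P).eval (t n)) := by
  have := pev_mk t 0 (C P)
  simpa [pev_C] using this

lemma exists_bound {R : Type*} [CommRing R] (S : Finset R[X][X]) :
    ∃ B, ∀ P ∈ S, BX P B ∧ P.natDegree ≤ B := by
  classical
  induction S using Finset.induction_on with
  | empty => exact ⟨0, by simp⟩
  | insert a s _ ih =>
    obtain ⟨B, hB⟩ := ih
    obtain ⟨B', hB'⟩ := exists_BX a
    refine ⟨max B (max B' a.natDegree), ?_⟩
    intro P hP
    rcases Finset.mem_insert.1 hP with rfl | hP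
    · exact ⟨hB'.mono (by simp), by simp⟩
    · exact ⟨(hB P hP).1.mono (by simp), (hB P hP).2.trans (by simp)⟩

/-- points in the ultraproduct -/
theorem ultra_points [∀ n, IsAlgClosed (k n)] {ι : Type*} [Fintype ι] (q : ℕ → ℕ)
    (hqn : ∀ n, n ≤ q n) (Fq : ∀ n, k n →+* k n) (hFq : ∀ n x, Fq n x = x ^ (q n))
    (hqk : ∀ n, (q n : k n) = 0) (D : ∀ n, Finset (k n)) (hD : ∀ n, (D n).card * n ≤ q n ^ 2)
    {h : (Ks k)[X][X]} (hm : h.Monic) (hi : Irreducible h)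
    (hdι : Fintype.card ι = h.natDegree)
    {Δ : (Ks k)[X]} (hΔ0 : Δ ≠ 0) {U V : (Ks k)[X][X]}
    (hUV : U * h + V * derivative h = C Δ)
    {δ : (Ks k)[X]} (hδ0 : δ ≠ 0) {w : ι → (Ks k)[X][X]}
    (hI : Ident (sig fun n => (Fq n).comp (Fq n)) h δ w)
    {δ' : ι → (Ks k)[X]} (hδ' : ∀ i, δ' i ≠ 0) {v : ι → (Ks k)[X][X]}
    (hv : ∀ i, h ∣ (v i).comp (w i) - C (δ' i) * X) (i0 : ι) :
    ∃ (t : ∀ n, k n) (z : Ks k), (∀ᶠ n in (hyperfilter ℕ : Filter ℕ), t n ∉ D n) ∧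
      sig (fun n => (Fq n).comp (Fq n)) (mk k t) = mk k t ∧ δ.eval (mk k t) ≠ 0 ∧
      pev (mk k t, z) h = 0 ∧
      δ.eval (mk k t) * sig (fun n => (Fq n).comp (Fq n)) z = pev (mk k t, z) (w i0) := by
  classical
  set σ := sig fun n => (Fq n).comp (Fq n) with hσ
  set d := h.natDegree with hd
  have hdpos : 0 < d := by
    rw [← hdι]; exact Fintype.card_pos_iff.2 ⟨i0⟩
  -- lifts
  obtain ⟨h', rfl, hhd, hhm⟩ := lifts_and_natDegree_eq_and_monic
    (show h ∈ lifts (mapRingHom (mk k)) by obtain ⟨P, hP⟩ := Los2.surj h; exact ⟨P, hP⟩) hm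
  change Irreducible (m2 (mk k) h') at hi
  obtain ⟨Δ', rfl⟩ := (Los_mk k).poly.surj Δ
  obtain ⟨δ1, rfl⟩ := (Los_mk k).poly.surj δ
  obtain ⟨U', rfl⟩ := Los2.surj U
  obtain ⟨V', rfl⟩ := Los2.surj V
  choose w' hw' using fun i => Los2.surj (w i)
  choose v' hv' using fun i => Los2.surj (v i)
  choose δ2 hδ2 using fun i => (Los_mk k).poly.surj (δ' i)
  obtain rfl : w = fun i => m2 (mk k) (w' i) := funext fun i => (hw' i).symm
  obtain rfl : v = fun i => m2 (mk k) (v' i) := funext fun i => (hv' i).symm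
  obtain rfl : δ' = fun i => mapRingHom (mk k) (δ2 i) := funext fun i => (hδ2 i).symm
  choose g hg using hv
  obtain ⟨g3, hg3⟩ := hI
  choose g' hg' using fun i => Los2.surj (g i)
  obtain rfl : g = fun i => m2 (mk k) (g' i) := funext fun i => (hg' i).symm
  obtain ⟨g3', rfl⟩ := (Los2 (k := k)).poly.surj g3
  -- transfer
  have e_irr := irreducible_transfer hhm hi
  have e_Δ : ∀ᶠ n in (hyperfilter ℕ : Filter ℕ), mapRingHom (Pi.evalRingHom k n) Δ' ≠ 0 := by
    rw [Ultrafilter.eventually_not, ← (Los_mk k).poly.iff]; exact hΔ0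
  have e_δ : ∀ᶠ n in (hyperfilter ℕ : Filter ℕ), mapRingHom (Pi.evalRingHom k n) δ1 ≠ 0 := by
    rw [Ultrafilter.eventually_not, ← (Los_mk k).poly.iff]; exact hδ0
  have e_δ2 : ∀ᶠ n in (hyperfilter ℕ : Filter ℕ), ∀ i, mapRingHom (Pi.evalRingHom k n) (δ2 i) ≠ 0 := by
    rw [eventually_all]
    intro i
    rw [Ultrafilter.eventually_not, ← (Los_mk k).poly.iff]; exact hδ' i
  have e_UV : ∀ᶠ n in (hyperfilter ℕ : Filter ℕ), m2 (Pi.evalRingHom k n) U' * m2 (Pi.evalRingHom k n) h' +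
      m2 (Pi.evalRingHom k n) V' * derivative (m2 (Pi.evalRingHom k n) h') =
      C (mapRingHom (Pi.evalRingHom k n) Δ') := by
    have h1 : m2 (mk k) (U' * h' + V' * derivative h') = m2 (mk k) (C Δ') := by
      rw [map_add, map_mul, map_mul]
      simp only [coe_mapRingHom, map_C, ← derivative_map] at hUV ⊢
      exact hUV
    rw [Los2.eq_iff] at h1
    filter_upwards [h1] with n hn
    rw [map_add, map_mul, map_mul] at hn
    simp only [coe_mapRingHom, map_C, ← derivative_map] at hn ⊢
    exact hn
  have e_v : ∀ᶠ n in (hyperfilter ℕ : Filter ℕ), ∀ i, m2 (Pi.evalRingHom k n) h' ∣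
      (m2 (Pi.evalRingHom k n) (v' i)).comp (m2 (Pi.evalRingHom k n) (w' i)) -
        C (mapRingHom (Pi.evalRingHom k n) (δ2 i)) * X := by
    rw [eventually_all]
    intro i
    have h1 : m2 (mk k) ((v' i).comp (w' i) - C (δ2 i) * X) = m2 (mk k) (h' * g' i) := by
      rw [map_mul, ← coe_mapRingHom] at *
      have := hg i
      rw [coe_mapRingHom] at this ⊢
      simp only [coe_mapRingHom, Polynomial.map_sub, Polynomial.map_mul, map_C, map_X,
        Polynomial.map_comp] at this ⊢
      exact this
    rw [Los2.eq_iff] at h1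
    filter_upwards [h1] with n hn
    refine ⟨m2 (Pi.evalRingHom k n) (g' i), ?_⟩
    rw [← map_mul, ← hn]
    simp only [coe_mapRingHom, Polynomial.map_sub, Polynomial.map_mul, map_C, map_X,
        Polynomial.map_comp]
  have e_I : ∀ᶠ n in (hyperfilter ℕ : Filter ℕ), Ident ((Fq n).comp (Fq n)) (m2 (Pi.evalRingHom k n) h')
      (mapRingHom (Pi.evalRingHom k n) δ1) (fun i => m2 (Pi.evalRingHom k n) (w' i)) := by
    have h1 : mapRingHom (m2 (mk k)) (IdExpr (sigt fun n => (Fq n).comp (Fq n)) h' δ1 w') =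
        mapRingHom (m2 (mk k)) (C h' * g3') := by
      rw [IdExpr_map (mk k) _ σ (fun x => rfl), map_mul]
      have : mapRingHom (m2 (mk k)) (C h') = C (m2 (mk k) h') := by simp
      rw [this]
      exact hg3
    rw [(Los2 (k := k)).poly.eq_iff] at h1
    filter_upwards [h1] with n hn
    rw [IdExpr_map (Pi.evalRingHom k n) _ ((Fq n).comp (Fq n)) (fun x => rfl), map_mul] at hn
    rw [Ident_iff, hn]
    have : mapRingHom (m2 (Pi.evalRingHom k n)) (C h') = C (m2 (Pi.evalRingHom k n) h') := by simp
    rw [this]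
    exact dvd_mul_right _ _
  -- bounds
  obtain ⟨B, hB⟩ := exists_bound ({h', C Δ', C δ1} ∪ Finset.univ.image w')
  have hBh := (hB h' (by simp)).1
  have hBw : ∀ i, BX (w' i) B ∧ (w' i).natDegree ≤ B := fun i => hB (w' i) (by simp)
  have hBΔ : Δ'.natDegree ≤ B := by simpa using (hB (C Δ') (by simp)).1 0
  have hBδ : δ1.natDegree ≤ B := by simpa using (hB (C δ1) (by simp)).1 0
  set Cc := (d - 1) * (3 * ((d - 1) * B) + 1) + d * (2 * B + 1) with hCc
  set q0 := ((d - 1) * B + 1) * ((d - 1) * B + 1) + (2 * d * d * B + d * B * B + 1) +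
      ((d - 1) * B + 1) + 2 * B + 2 with hq0
  have e_n : ∀ᶠ n in (hyperfilter ℕ : Filter ℕ), q0 + 2 * d + 2 * Cc + 1 ≤ n :=
    Nat.hyperfilter_le_atTop (eventually_ge_atTop _)
  have hpt : ∀ᶠ n in (hyperfilter ℕ : Filter ℕ), ∃ x : k n × k n, x.1 ∉ D n ∧ Fq n (Fq n x.1) = x.1 ∧
      (mapRingHom (Pi.evalRingHom k n) δ1).eval x.1 ≠ 0 ∧ pev x (m2 (Pi.evalRingHom k n) h') = 0 ∧
      (mapRingHom (Pi.evalRingHom k n) δ1).eval x.1 * Fq n (Fq n x.2) =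
        pev x (m2 (Pi.evalRingHom k n) (w' i0)) := by
    filter_upwards [e_irr, e_Δ, e_δ, e_δ2, e_UV, e_v, e_I, e_n] with n h1 h2 h3 h4 h5 h6 h7 h8
    have hqn' := hqn n
    obtain ⟨T, hT, hTc⟩ := finite_points (k := k n) (hhm.map _) h1 (d := d) (B := B)
      (by rw [hhm.natDegree_map, hhd]) hdpos hdι (hBh.map _) (Fq n) (q n) (hFq n) (hqk n) (by omega)
      h2 (natDegree_map_le.trans hBΔ) h5 h3 (natDegree_map_le.trans hBδ)
      (fun i => (hBw i).1.map _) (fun i => natDegree_map_le.trans (hBw i).2) h7 h4 h6 i0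
    have hTD : ∃ t ∈ T, t ∉ D n := by
      by_contra hcon
      push Not at hcon
      have h9 := Finset.card_le_card (show T ⊆ D n from hcon)
      have h10 := hD n
      rw [← hCc] at hTc
      have h11 : q n ^ 2 * n ≤ d * q n ^ 2 + Cc * q n * n := by
        calc q n ^ 2 * n ≤ (d * T.card + Cc * q n) * n := Nat.mul_le_mul_right _ hTc
          _ ≤ (d * (D n).card + Cc * q n) * n := by gcongr
          _ = d * ((D n).card * n) + Cc * q n * n := by ring
          _ ≤ _ := by gcongr
      have hqpos : 0 < q n := by omega
      have h12 : q n * n ≤ d * q n + Cc * n := by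
        refine Nat.le_of_mul_le_mul_left ?_ hqpos
        nlinarith
      have h13 : 2 * d * q n ≤ n * q n := Nat.mul_le_mul_right _ (by omega)
      have h14 : (2 * Cc + 1) * n ≤ q n * n := Nat.mul_le_mul_right _ (by omega)
      nlinarith
    obtain ⟨t, ht, htD⟩ := hTD
    obtain ⟨a1, a2, z, a3, a4⟩ := hT t ht
    exact ⟨(t, z), htD, a1, a2, a3, a4⟩
  have hpt' : ∀ n, ∃ x : k n × k n, (∃ x : k n × k n, x.1 ∉ D n ∧ Fq n (Fq n x.1) = x.1 ∧
      (mapRingHom (Pi.evalRingHom k n) δ1).eval x.1 ≠ 0 ∧ pev x (m2 (Pi.evalRingHom k n) h') = 0 ∧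
      (mapRingHom (Pi.evalRingHom k n) δ1).eval x.1 * Fq n (Fq n x.2) =
        pev x (m2 (Pi.evalRingHom k n) (w' i0))) → (x.1 ∉ D n ∧ Fq n (Fq n x.1) = x.1 ∧
      (mapRingHom (Pi.evalRingHom k n) δ1).eval x.1 ≠ 0 ∧ pev x (m2 (Pi.evalRingHom k n) h') = 0 ∧
      (mapRingHom (Pi.evalRingHom k n) δ1).eval x.1 * Fq n (Fq n x.2) =
        pev x (m2 (Pi.evalRingHom k n) (w' i0))) := by
    intro n
    by_cases hx : ∃ x : k n × k n, x.1 ∉ D n ∧ Fq n (Fq n x.1) = x.1 ∧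
      (mapRingHom (Pi.evalRingHom k n) δ1).eval x.1 ≠ 0 ∧ pev x (m2 (Pi.evalRingHom k n) h') = 0 ∧
      (mapRingHom (Pi.evalRingHom k n) δ1).eval x.1 * Fq n (Fq n x.2) =
        pev x (m2 (Pi.evalRingHom k n) (w' i0))
    · exact ⟨hx.choose, fun _ => hx.choose_spec⟩
    · exact ⟨0, fun h => absurd h hx⟩
  choose x hx using hpt'
  have hx' := hpt.mono hx
  refine ⟨fun n => (x n).1, mk k fun n => (x n).2, hx'.mono fun n hn => hn.1, ?_, ?_, ?_, ?_⟩
  · rw [hσ, sig_mk, mk_eq_iff]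
    exact hx'.mono fun n hn => hn.2.1
  · rw [eval_mk, Ne, mk_eq_zero_iff, ← Ultrafilter.eventually_not]
    exact hx'.mono fun n hn => hn.2.2.1
  · change pev _ (m2 (mk k) h') = 0
    rw [pev_mk, mk_eq_zero_iff]
    exact hx'.mono fun n hn => hn.2.2.2.1
  · rw [eval_mk, hσ, sig_mk, pev_mk, ← map_mul, mk_eq_iff]
    exact hx'.mono fun n hn => hn.2.2.2.2

end Ultra2

end Part7
end Felg

namespace Felg
section Part8
open Polynomial

lemma periodic_all_poly {M : Type*} [CommRing M] (s : M →+* M)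
    (hs : ∀ x, x ∈ Function.periodicPts s) (P : M[X]) :
    P ∈ Function.periodicPts (mapRingHom s) := by
  induction P using Polynomial.induction_on' with
  | add p q hp hq =>
    obtain ⟨n, hn, hp⟩ := hp
    obtain ⟨m, hm, hq⟩ := hq
    refine ⟨n * m, Nat.mul_pos hn hm, ?_⟩
    have h1 := hp.mul_const m
    have h2 := hq.const_mul n
    unfold Function.IsPeriodicPt Function.IsFixedPt at *
    rw [← RingHom.coe_pow] at *
    rw [map_add, h1, h2]
  | monomial k a =>
    obtain ⟨n, hn, ha⟩ := hs a
    refine ⟨n, hn, ?_⟩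
    have : ∀ j, (mapRingHom s)^[j] (monomial k a) = monomial k (s^[j] a) := by
      intro j
      induction j with
      | zero => rfl
      | succ j ih => rw [Function.iterate_succ_apply', Function.iterate_succ_apply', ih]; simp
    unfold Function.IsPeriodicPt Function.IsFixedPt at *
    rw [this, ha]

lemma aeval_iter {M K : Type*} [Field M] [Field K] [Algebra M K] (σ : K →+* K) (s : M →+* M)
    (hs : ∀ x, σ (algebraMap M K x) = algebraMap M K (s x)) (P : M[X]) (x : K) (n : ℕ) :
    aeval (σ^[n] x) ((mapRingHom s)^[n] P) = σ^[n] (aeval x P) := by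
  induction n with
  | zero => rfl
  | succ n ih =>
    simp only [Function.iterate_succ_apply']
    rw [← ih, ]
    set y := σ^[n] x
    set Q := (mapRingHom s)^[n] P
    rw [aeval_def, aeval_def, hom_eval₂, coe_mapRingHom, eval₂_map]
    congr 1
    ext a
    simp [hs]

lemma periodic_of_alg {M K : Type*} [Field M] [Field K] [Algebra M K] (σ : K →+* K) (s : M →+* M)
    (hs : ∀ x, σ (algebraMap M K x) = algebraMap M K (s x))
    (hper : ∀ x, x ∈ Function.periodicPts s) (x : K) (hx : IsAlgebraic M x) :
    x ∈ Function.periodicPts σ := by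
  obtain ⟨P, hP0, hP⟩ := hx
  obtain ⟨n, hn, hPn⟩ := periodic_all_poly s hper P
  have hmaps : ∀ y ∈ P.rootSet K, σ^[n] y ∈ P.rootSet K := by
    intro y hy
    rw [mem_rootSet] at hy ⊢
    refine ⟨hP0, ?_⟩
    have := aeval_iter σ s hs P y n
    rw [hPn.eq, hy.2] at this
    rw [this]
    rw [← RingHom.coe_pow, map_zero]
  let f : P.rootSet K → P.rootSet K := fun y => ⟨σ^[n] y, hmaps y y.2⟩
  have hf : Function.Injective f := by
    intro a b hab
    have := congrArg Subtype.val hab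
    exact Subtype.ext (σ.injective.iterate n this)
  have := hf.mem_periodicPts ⟨x, mem_rootSet.2 ⟨hP0, hP⟩⟩
  obtain ⟨m, hm, hmm⟩ := this
  refine ⟨n * m, Nat.mul_pos hn hm, ?_⟩
  have h3 : ∀ j (y : P.rootSet K), ((f^[j] y : P.rootSet K) : K) = (σ^[n])^[j] y := by
    intro j
    induction j with
    | zero => intro y; rfl
    | succ j ih => intro y; rw [Function.iterate_succ_apply, Function.iterate_succ_apply, ih]
  unfold Function.IsPeriodicPt Function.IsFixedPt at *
  rw [Function.iterate_mul, ← h3 m ⟨x, mem_rootSet.2 ⟨hP0, hP⟩⟩, hmm]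

lemma exists_L {M K : Type*} [Field M] [Field K] [IsAlgClosed K] [Algebra M K] (σ : K →+* K)
    (s : M →+* M)
    (hs : ∀ x, σ (algebraMap M K x) = algebraMap M K (s x))
    (hper : ∀ x, x ∈ Function.periodicPts s) (S0 : Finset K) (hS0 : ∀ e ∈ S0, IsSeparable M e) :
    ∃ L : IntermediateField M K, FiniteDimensional M L ∧ Normal M L ∧ Algebra.IsSeparable M L ∧
      (∀ x ∈ L, σ x ∈ L) ∧ ∀ e ∈ S0, e ∈ L := by
  classical
  choose! r hr0 hr using fun e : K => periodic_all_poly s hper (minpoly M e)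
  let F : M[X] := ∏ e ∈ S0, ∏ i ∈ Finset.range (r e), (mapRingHom s)^[i] (minpoly M e)
  have hne : ∀ e ∈ S0, ∀ i, (mapRingHom s)^[i] (minpoly M e) ≠ 0 := by
    intro e he i h0
    have : minpoly M e = 0 := by
      have hinj : Function.Injective (mapRingHom s)^[i] :=
        (map_injective _ s.injective).iterate i
      apply hinj
      rw [h0, ← RingHom.coe_pow, map_zero]
    exact minpoly.ne_zero (hS0 e he).isIntegral this
  have hF0 : F ≠ 0 := by
    refine Finset.prod_ne_zero_iff.2 fun e he => Finset.prod_ne_zero_iff.2 fun i _ => hne e he i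
  have hroot : ∀ x : K, x ∈ F.rootSet K ↔ ∃ e ∈ S0, ∃ i < r e,
      aeval x ((mapRingHom s)^[i] (minpoly M e)) = 0 := by
    intro x
    rw [mem_rootSet]
    simp only [hF0, ne_eq, not_false_eq_true, true_and, F, map_prod, Finset.prod_eq_zero_iff,
      Finset.mem_range]
  have hsplit : (F.map (algebraMap M K)).Splits := IsAlgClosed.splits _
  have hsf := IntermediateField.adjoin_rootSet_isSplittingField hsplit
  refine ⟨IntermediateField.adjoin M (F.rootSet K), ?_, ?_, ?_, ?_, ?_⟩
  · exact IsSplittingField.finiteDimensional _ F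
  · exact Normal.of_isSplittingField F
  · rw [IntermediateField.isSeparable_adjoin_iff_isSeparable]
    intro x hx
    obtain ⟨e, he, i, hi, h0⟩ := (hroot x).1 hx
    have hsepi : ∀ i, ((mapRingHom s)^[i] (minpoly M e)).Separable := by
      intro i
      induction i with
      | zero => exact hS0 e he
      | succ i ih => rw [Function.iterate_succ_apply']; exact ih.map
    exact (hsepi i).of_dvd (minpoly.dvd _ _ h0)
  · intro x hx
    induction hx using IntermediateField.adjoin_induction with
    | mem x hx =>
      apply IntermediateField.subset_adjoin
      obtain ⟨e, he, i, hi, h0⟩ := (hroot x).1 hx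
      rw [hroot]
      have h1 := aeval_iter σ s hs ((mapRingHom s)^[i] (minpoly M e)) x 1
      simp only [Function.iterate_one, ← Function.iterate_succ_apply' , h0, map_zero] at h1
      rcases Nat.lt_or_ge (i + 1) (r e) with h | h
      · exact ⟨e, he, i + 1, h, h1⟩
      · have : i.succ = r e := by omega
        rw [this, (hr e).eq] at h1
        exact ⟨e, he, 0, hr0 e, h1⟩
    | algebraMap a => rw [hs]; exact IntermediateField.algebraMap_mem _ _
    | add x y _ _ hx hy => rw [map_add]; exact add_mem hx hy
    | mul x y _ _ hx hy => rw [map_mul]; exact mul_mem hx hy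
    | inv x _ hx => rw [map_inv₀]; exact inv_mem hx
  · intro e he
    apply IntermediateField.subset_adjoin
    rw [hroot]
    exact ⟨e, he, 0, hr0 e, minpoly.aeval _ _⟩

section
variable {R M K : Type*} [CommRing R] [IsDomain R] [Field M] [Field K] [Algebra R M]
  [IsFractionRing R M] [Algebra R K] [Algebra M K] [IsScalarTower R M K]

lemma clear_poly (P : M[X]) : ∃ b : R, b ≠ 0 ∧ ∃ P' : R[X],
    P'.map (algebraMap R M) = C (algebraMap R M b) * P := by
  obtain ⟨b, hb0, hb⟩ := IsLocalization.integerNormalization_spec (nonZeroDivisors R) P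
  refine ⟨b, nonZeroDivisors.ne_zero hb0, _, hb.trans ?_⟩
  rw [← Polynomial.smul_eq_C_mul]
  ext n
  simp [Algebra.smul_def]

lemma clear_one {z u : K} (hz : IsAlgebraic M z) (hu : u ∈ IntermediateField.adjoin M {z}) :
    ∃ b : R, b ≠ 0 ∧ ∃ P : R[X], algebraMap R K b * u = aeval z P := by
  have h1 : u ∈ (IntermediateField.adjoin M {z}).toSubalgebra := hu
  rw [IntermediateField.adjoin_simple_toSubalgebra_of_isAlgebraic hz,
    Algebra.adjoin_singleton_eq_range_aeval] at h1
  obtain ⟨P, rfl⟩ := h1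
  obtain ⟨b, hb, P', hP'⟩ := clear_poly (R := R) P
  refine ⟨b, hb, P', ?_⟩
  rw [← aeval_map_algebraMap M z P', hP', map_mul, aeval_C, ← IsScalarTower.algebraMap_apply]
  rfl

lemma clear_finset {z : K} (hz : IsAlgebraic M z) (T : Finset K)
    (hT : ∀ u ∈ T, u ∈ IntermediateField.adjoin M {z}) :
    ∃ b : R, b ≠ 0 ∧ ∀ u ∈ T, ∃ P : R[X], algebraMap R K b * u = aeval z P := by
  classical
  induction T using Finset.induction_on with
  | empty => exact ⟨1, one_ne_zero, by simp⟩
  | insert a T ha ih =>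
    obtain ⟨b, hb, h⟩ := ih fun u hu => hT u (Finset.mem_insert_of_mem hu)
    obtain ⟨c, hc, P, hP⟩ := clear_one (R := R) hz (hT a (Finset.mem_insert_self _ _))
    refine ⟨b * c, mul_ne_zero hb hc, ?_⟩
    intro u hu
    rcases Finset.mem_insert.1 hu with rfl | hu
    · refine ⟨C b * P, ?_⟩
      rw [map_mul, map_mul, aeval_C, ← hP]; ring
    · obtain ⟨P, hP⟩ := h u hu
      refine ⟨C c * P, ?_⟩
      rw [map_mul, map_mul, aeval_C, ← hP]; ring
end


end Part8
end Felg

namespace Felg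
section Part9
open Polynomial

lemma exists_fin_roots {K : Type*} [Field K] [IsAlgClosed K] (P : K[X]) (hP : P.Monic)
    {d : ℕ} (hd : P.natDegree = d) : ∃ ω : Fin d → K, P = ∏ i, (X - C (ω i)) := by
  have hs := IsAlgClosed.splits P
  have hc : P.roots.toList.length = d := by
    rw [← hd, Multiset.length_toList, ← hs.natDegree_eq_card_roots]
  refine ⟨fun i => P.roots.toList.get (i.cast hc.symm), ?_⟩
  conv_lhs => rw [hs.eq_prod_roots_of_monic hP, ← Multiset.coe_toList P.roots]
  rw [Multiset.map_coe, Multiset.prod_coe, ← List.prod_ofFn]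
  congr 1
  apply List.ext_get
  · simp [hc]
  · intro n h1 h2
    simp

set_option maxHeartbeats 1000000 in
theorem alg_lemma {R M K : Type*} [CommRing R] [IsDomain R] [IsIntegrallyClosed R]
    [Field M] [Field K] [IsAlgClosed K] [Algebra R M]
    [IsFractionRing R M] [Algebra R K] [Algebra M K] [IsScalarTower R M K]
    (σ : K →+* K) (sR : R →+* R) (hs : ∀ r, σ (algebraMap R K r) = algebraMap R K (sR r))
    (hper : ∀ r, r ∈ Function.periodicPts sR)
    (S0 : Finset K) (hS0 : ∀ e ∈ S0, IsSeparable M e) :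
    ∃ (z : K) (h : R[X]) (d : ℕ) (w v : Fin d → R[X]) (δ Δ : R) (δ' : Fin d → R) (U V : R[X])
      (i0 : Fin d),
      h.Monic ∧ Irreducible h ∧ d = h.natDegree ∧ Δ ≠ 0 ∧ U * h + V * derivative h = C Δ ∧ δ ≠ 0 ∧
      (C h ∣ C (C δ) ^ d * ((h.map sR).map C) - ∏ i, (C (C δ) * X - C (w i))) ∧
      (∀ i, δ' i ≠ 0) ∧ (∀ i, h ∣ (v i).comp (w i) - C (δ' i) * X) ∧
      (∀ P : R[X], aeval z P = 0 ↔ h ∣ P) ∧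
      algebraMap R K δ * σ z = aeval z (w i0) ∧
      ∀ e ∈ S0, ∃ P : R[X], algebraMap R K δ * e = aeval z P := by
  classical
  have hinjRM : Function.Injective (algebraMap R M) := IsFractionRing.injective R M
  have hinjRK : Function.Injective (algebraMap R K) := by
    rw [IsScalarTower.algebraMap_eq R M K]
    exact (algebraMap M K).injective.comp hinjRM
  have hsinj : Function.Injective sR := by
    intro a b hab
    apply hinjRK
    apply σ.injective
    rw [hs, hs, hab]
  let sM : M →+* M := IsFractionRing.map (K := M) (L := M) hsinj
  have hsMR : ∀ r, sM (algebraMap R M r) = algebraMap R M (sR r) := fun r =>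
    IsLocalization.map_eq _ r
  have hsM : ∀ x, σ (algebraMap M K x) = algebraMap M K (sM x) := by
    intro x
    obtain ⟨a, b, hb, rfl⟩ := IsFractionRing.div_surjective (A := R) x
    simp only [map_div₀, ← IsScalarTower.algebraMap_apply, hs, hsMR]
  have hiter : ∀ j r, sM^[j] (algebraMap R M r) = algebraMap R M (sR^[j] r) := by
    intro j r
    induction j with
    | zero => rfl
    | succ j ih => rw [Function.iterate_succ_apply', Function.iterate_succ_apply', ih, hsMR]
  have hperM : ∀ x, x ∈ Function.periodicPts sM := by
    intro x
    obtain ⟨a, b, hb, rfl⟩ := IsFractionRing.div_surjective (A := R) x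
    obtain ⟨n, hn, ha⟩ := hper a
    obtain ⟨m, hm, hb⟩ := hper b
    refine ⟨n * m, Nat.mul_pos hn hm, ?_⟩
    have h1 := ha.mul_const m
    have h2 := hb.const_mul n
    unfold Function.IsPeriodicPt Function.IsFixedPt at *
    rw [← RingHom.coe_pow, map_div₀, RingHom.coe_pow, hiter, hiter, h1, h2]
  have hsMbij : Function.Bijective sM := by
    refine ⟨sM.injective, fun x => ?_⟩
    obtain ⟨n, hn, hx⟩ := hperM x
    refine ⟨sM^[n - 1] x, ?_⟩
    have h1 := Function.iterate_succ_apply' sM (n - 1) x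
    rw [Nat.succ_eq_add_one, Nat.sub_add_cancel hn, hx.eq] at h1
    exact h1.symm
  obtain ⟨L, hfd, hnorm, hsep, hσL, hSL⟩ := exists_L σ sM hsM hperM S0 hS0
  obtain ⟨α, hα⟩ := Field.exists_primitive_element M L
  have hα' : IntermediateField.adjoin M {(α : K)} = L := by
    simpa only [IntermediateField.lift_adjoin_simple, IntermediateField.lift_top] using
      congr_arg IntermediateField.lift hα
  have hLalg : ∀ x ∈ L, IsAlgebraic M x := fun x hx => by
    have := IsAlgebraic.of_finite M (⟨x, hx⟩ : L)
    exact this.algebraMap (A := K)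
  have hscale : ∀ (y : R) (x : K), y ≠ 0 → IntermediateField.adjoin M {algebraMap R K y * x} =
      IntermediateField.adjoin M {x} := by
    intro y x hy
    have hy0 : algebraMap R K y ≠ 0 := fun h => hy (hinjRK (h.trans (map_zero _).symm))
    have hmem : ∀ E : IntermediateField M K, algebraMap R K y ∈ E := fun E => by
      rw [IsScalarTower.algebraMap_apply R M K]; exact E.algebraMap_mem _
    apply le_antisymm
    · rw [IntermediateField.adjoin_simple_le_iff]
      exact mul_mem (hmem _) (IntermediateField.mem_adjoin_simple_self _ _)
    · rw [IntermediateField.adjoin_simple_le_iff]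
      have := mul_mem (inv_mem (hmem (IntermediateField.adjoin M {algebraMap R K y * x})))
        (IntermediateField.mem_adjoin_simple_self M (algebraMap R K y * x))
      rwa [inv_mul_cancel_left₀ hy0] at this
  obtain ⟨z, hzint, hzL⟩ : ∃ z : K, IsIntegral R z ∧ IntermediateField.adjoin M {z} = L := by
    have h1 : IsAlgebraic R (α : K) := by
      have := hLalg α α.2
      exact (IsFractionRing.isAlgebraic_iff R M K).2 this
    obtain ⟨y, hy, hyi⟩ := h1.exists_integral_multiple
    refine ⟨algebraMap R K y * α, by rwa [Algebra.smul_def] at hyi, ?_⟩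
    rw [hscale y _ hy, hα']
  have hFSM : FaithfulSMul R K := (faithfulSMul_iff_algebraMap_injective R K).2 hinjRK
  set h := minpoly R z with hh
  have hmonic : h.Monic := minpoly.monic hzint
  have hMh : minpoly M z = h.map (algebraMap R M) :=
    minpoly.isIntegrallyClosed_eq_field_fractions M K hzint
  have hdvd : ∀ P : R[X], aeval z P = 0 ↔ h ∣ P := fun P => by
    constructor
    · intro hP
      exact minpoly.isIntegrallyClosed_dvd hzint hP
    · rintro ⟨Q, rfl⟩
      rw [map_mul, hh, minpoly.aeval, zero_mul]
  have hzmem : z ∈ L := hzL ▸ IntermediateField.mem_adjoin_simple_self M z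
  have hzalg := hLalg z hzmem
  -- conjugates
  have hmon' : ((h.map sR).map (algebraMap R K)).Monic := (hmonic.map _).map _
  have hd' : ((h.map sR).map (algebraMap R K)).natDegree = h.natDegree := by
    rw [(hmonic.map _).natDegree_map, hmonic.natDegree_map]
  obtain ⟨ω, hω⟩ := exists_fin_roots _ hmon' hd'
  have hroots : ∀ i, aeval (ω i) ((minpoly M z).map sM) = 0 := by
    intro i
    have h1 : ((h.map sR).map (algebraMap R K)).eval (ω i) = 0 := by
      rw [hω, eval_prod, Finset.prod_eq_zero (Finset.mem_univ i)]
      simp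
    rw [hMh, aeval_def, eval₂_eq_eval_map, Polynomial.map_map, Polynomial.map_map]
    rw [Polynomial.map_map] at h1
    convert h1 using 2
    congr 1
    ext r
    simp [hsMR, ← IsScalarTower.algebraMap_apply]
  have hirr : Irreducible ((minpoly M z).map sM) := by
    have h1 := minpoly.irreducible hzalg.isIntegral
    let e : M ≃+* M := RingEquiv.ofBijective sM hsMbij
    have := (MulEquiv.irreducible_iff (Polynomial.mapEquiv e)).2 h1
    exact this
  have hmp : ∀ i, minpoly M (ω i) = (minpoly M z).map sM := fun i =>
    (minpoly.eq_of_irreducible_of_monic hirr (hroots i)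
      ((minpoly.monic hzalg.isIntegral).map _)).symm
  have hσzroot : aeval (σ z) ((minpoly M z).map sM) = 0 := by
    have := aeval_iter σ sM hsM (minpoly M z) z 1
    simpa using this
  have hmpσ : minpoly M (σ z) = (minpoly M z).map sM :=
    (minpoly.eq_of_irreducible_of_monic hirr hσzroot
      ((minpoly.monic hzalg.isIntegral).map _)).symm
  have hωL : ∀ i, ω i ∈ L := by
    intro i
    have h1 : ((minpoly M (⟨σ z, hσL z hzmem⟩ : L)).map (algebraMap M L)).Splits := hnorm.splits _
    rw [show minpoly M (⟨σ z, hσL z hzmem⟩ : L) = minpoly M (σ z) from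
      (minpoly.algebraMap_eq (B' := K) (algebraMap L K).injective _).symm, hmpσ] at h1
    refine (IntermediateField.splits_iff_mem ?_).1 h1 _ ?_
    · exact IsAlgClosed.splits _
    · exact mem_rootSet.2 ⟨hirr.ne_zero, hroots i⟩
  have hωgen : ∀ i, IntermediateField.adjoin M {ω i} = L := by
    intro i
    apply IntermediateField.eq_of_le_of_finrank_eq
    · rw [IntermediateField.adjoin_simple_le_iff]; exact hωL i
    · rw [← hzL, IntermediateField.adjoin.finrank (hLalg _ (hωL i)).isIntegral,
        IntermediateField.adjoin.finrank hzalg.isIntegral, hmp, 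
        (minpoly.monic hzalg.isIntegral).natDegree_map]
  obtain ⟨i0, hi0⟩ : ∃ i, σ z = ω i := by
    have h1 : ((h.map sR).map (algebraMap R K)).eval (σ z) = 0 := by
      rw [hMh, aeval_def, eval₂_eq_eval_map, Polynomial.map_map, Polynomial.map_map] at hσzroot
      rw [Polynomial.map_map]
      convert hσzroot using 2
      congr 1
      ext r
      simp [hsMR, ← IsScalarTower.algebraMap_apply]
    rw [hω, eval_prod, Finset.prod_eq_zero_iff] at h1
    obtain ⟨i, _, hi⟩ := h1
    exact ⟨i, by simpa [sub_eq_zero] using hi⟩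
  obtain ⟨δ, hδ0, hδ⟩ := clear_finset (R := R) hzalg (S0 ∪ Finset.univ.image ω) (by
    intro u hu
    rw [hzL]
    rcases Finset.mem_union.1 hu with hu | hu
    · exact hSL u hu
    · obtain ⟨i, _, rfl⟩ := Finset.mem_image.1 hu
      exact hωL i)
  choose w hw using fun i => hδ (ω i) (Finset.mem_union_right _
    (Finset.mem_image_of_mem _ (Finset.mem_univ i)))
  have hv : ∀ i, ∃ b : R, b ≠ 0 ∧ ∃ P : R[X],
      algebraMap R K b * z = aeval (algebraMap R K δ * ω i) P := by
    intro i
    apply clear_one (M := M)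
    · apply hLalg
      rw [← hωgen i, ← hscale δ (ω i) hδ0]
      exact IntermediateField.mem_adjoin_simple_self _ _
    · rw [hscale δ _ hδ0, hωgen i]; exact hzmem
  choose δ' hδ' v hv using hv
  have hsepz : (minpoly M z).Separable := by
    have := hsep.isSeparable' (⟨z, hzmem⟩ : L)
    have h2 : (minpoly M (⟨z, hzmem⟩ : L)).Separable := this
    rwa [show minpoly M (⟨z, hzmem⟩ : L) = minpoly M z from
      (minpoly.algebraMap_eq (B' := K) (algebraMap L K).injective _).symm] at h2
  obtain ⟨U, V, hUV⟩ := hsepz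
  obtain ⟨b1, hb1, U', hU'⟩ := clear_poly (R := R) U
  obtain ⟨b2, hb2, V', hV'⟩ := clear_poly (R := R) V
  refine ⟨z, h, h.natDegree, w, v, δ, b1 * b2, δ', C b2 * U', C b1 * V', i0, hmonic,
    minpoly.irreducible hzint, rfl, mul_ne_zero hb1 hb2, ?_, hδ0, ?_, hδ', ?_, hdvd, ?_, ?_⟩
  · apply map_injective _ hinjRM
    rw [hMh, derivative_map] at hUV
    simp only [Polynomial.map_add, Polynomial.map_mul, map_C, hU', hV']
    rw [map_mul, C_mul]
    linear_combination (C (algebraMap R M b1) * C (algebraMap R M b2)) * hUV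
  · rw [C_dvd_iff_dvd_coeff]
    intro j
    rw [← hdvd]
    have h1 : ∀ Q : R[X][X], aeval z (Q.coeff j) =
      (Q.map (aeval z : R[X] →ₐ[R] K).toRingHom).coeff j := fun Q => by simp
    rw [h1]
    have h2 : (C (C δ) ^ h.natDegree * map C (map sR h) - ∏ i, (C (C δ) * X - C (w i))).map
        (aeval z : R[X] →ₐ[R] K).toRingHom = 0 := by
      rw [← coe_mapRingHom]
      simp only [map_sub, map_mul, map_pow, map_prod, coe_mapRingHom, map_C, map_X]
      have h3 : map (aeval z : R[X] →ₐ[R] K).toRingHom (map C (map sR h)) =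
          (h.map sR).map (algebraMap R K) := by
        rw [Polynomial.map_map]
        congr 1
        ext r
        simp
      rw [h3, hω]
      have h4 : ∀ i, (C ((aeval z : R[X] →ₐ[R] K).toRingHom (C δ)) * X -
          C ((aeval z : R[X] →ₐ[R] K).toRingHom (w i)) : K[X]) =
          C (algebraMap R K δ) * (X - C (ω i)) := by
        intro i
        have e1 : (aeval z : R[X] →ₐ[R] K).toRingHom (C δ) = algebraMap R K δ := by simp
        have e2 : (aeval z : R[X] →ₐ[R] K).toRingHom (w i) = algebraMap R K δ * ω i := by
          rw [hw]; rfl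
        rw [e1, e2, C_mul]; ring
      simp only [h4]
      rw [Finset.prod_mul_distrib]
      simp
    rw [h2, coeff_zero]
  · intro i
    rw [← hdvd, map_sub, aeval_comp, ← hw, ← hv, map_mul, aeval_C, aeval_X, sub_self]
  · rw [hi0, hw]
  · intro e he
    exact hδ e (Finset.mem_union_left _ he)


end Part9
end Felg

namespace Felg
section Part10
open Polynomial

lemma exists_retract {A : Type*} [Field A] [IsAlgClosed A] {B : Type*} [CommRing B] [Nontrivial B]
    [Algebra A B] [Algebra.FiniteType A B] : Nonempty (B →ₐ[A] A) := by
  obtain ⟨m, hm⟩ := Ideal.exists_maximal B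
  let : Field (B ⧸ m) := Ideal.Quotient.field m
  have hfin : Module.Finite A (B ⧸ m) := finite_of_finite_type_of_isJacobsonRing A (B ⧸ m)
  have hbij : Function.Bijective (algebraMap A (B ⧸ m)) :=
    IsAlgClosed.algebraMap_bijective_of_isIntegral
  let e : A ≃ₐ[A] (B ⧸ m) := AlgEquiv.ofBijective (Algebra.ofId A (B ⧸ m)) hbij
  exact ⟨e.symm.toAlgHom.comp (Ideal.Quotient.mkₐ A m)⟩

lemma lift_m2 {K : Type*} [CommRing K] {B : Type*} [CommRing B] (f : B →+* K) (P : K[X][X])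
    (hP : ∀ i j, (P.coeff i).coeff j ∈ Set.range f) : ∃ P' : B[X][X], m2 f P' = P := by
  have : P ∈ lifts (mapRingHom f) := by
    rw [lifts_iff_coeff_lifts]
    intro i
    have : P.coeff i ∈ lifts f := (lifts_iff_coeff_lifts _).2 (hP i)
    exact (mem_lifts _).1 this
  exact (mem_lifts _).1 this

lemma irreducible_map {A K : Type*} [Field A] [IsAlgClosed A] [Field K] (g : A →+* K)
    {h : A[X][X]} (hm : h.Monic) (hi : Irreducible h) : Irreducible (m2 g h) := by
  classical
  let := g.toAlgebra
  have hm' : (m2 g h).Monic := hm.map _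
  have hgi : Function.Injective (mapRingHom g) := map_injective _ g.injective
  rw [hm.irreducible_iff_natDegree'] at hi
  rw [hm'.irreducible_iff_natDegree']
  refine ⟨fun h1 => hi.1 (map_injective _ hgi (h1.trans (map_one (m2 g)).symm)), ?_⟩
  intro P Q hP hQ hPQ hdeg
  let T : Finset K := (P.support.biUnion fun i => (P.coeff i).coeffs) ∪
    (Q.support.biUnion fun i => (Q.coeff i).coeffs)
  let B := Algebra.adjoin A (T : Set K)
  have : Algebra.FiniteType A B := Algebra.FiniteType.adjoin_of_finite T.finite_toSet
  have hfi : Function.Injective (B.val : B →+* K) := Subtype.val_injective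
  have hmem : ∀ R : K[X][X], (R.support.biUnion fun i => (R.coeff i).coeffs) ⊆ T →
      ∃ R' : B[X][X], m2 (B.val : B →+* K) R' = R := by
    intro R hR
    apply lift_m2
    intro i j
    by_cases h0 : (R.coeff i).coeff j = 0
    · exact ⟨0, by rw [h0, map_zero]⟩
    · refine ⟨⟨(R.coeff i).coeff j, Algebra.subset_adjoin (hR ?_)⟩, rfl⟩
      rw [Finset.mem_biUnion]
      refine ⟨i, ?_, coeff_mem_coeffs h0⟩
      rw [mem_support_iff]
      intro h1; rw [h1] at h0; simp at h0
  obtain ⟨P', hP'⟩ := hmem P Finset.subset_union_left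
  obtain ⟨Q', hQ'⟩ := hmem Q Finset.subset_union_right
  obtain ⟨ρ⟩ := exists_retract (A := A) (B := B)
  have hBi : Function.Injective (mapRingHom (B.val : B →+* K)) := map_injective _ hfi
  have hPm : P'.Monic := monic_of_injective hBi (by
    rw [← coe_mapRingHom]; change (m2 _ P').Monic; rw [hP']; exact hP)
  have hQm : Q'.Monic := monic_of_injective hBi (by
    rw [← coe_mapRingHom]; change (m2 _ Q').Monic; rw [hQ']; exact hQ)
  have hPQ' : P' * Q' = m2 (algebraMap A B) h := by
    apply map_injective _ hBi
    rw [← coe_mapRingHom]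
    change m2 _ (P' * Q') = m2 _ (m2 _ h)
    rw [map_mul, hP', hQ', hPQ]
    change _ = map _ (map _ h)
    rw [Polynomial.map_map, mapRingHom_comp]
    rfl
  have h2 : m2 (ρ : B →+* A) P' * m2 (ρ : B →+* A) Q' = h := by
    rw [← map_mul, hPQ']
    change map _ (map _ h) = h
    rw [Polynomial.map_map, mapRingHom_comp, AlgHom.comp_algebraMap]
    simp
  refine hi.2 _ _ (hPm.map _) (hQm.map _) h2 ?_
  have e1 : (m2 (ρ : B →+* A) Q').natDegree = Q.natDegree := by
    rw [← hQ']
    change (map _ Q').natDegree = (map _ Q').natDegree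
    rw [hQm.natDegree_map, hQm.natDegree_map]
  have e2 : (m2 g h).natDegree = h.natDegree := hm.natDegree_map _
  have e3 := hdeg
  rw [← e1, e2] at e3; exact e3

/-- the point-existence property -/
def PointProp (K : Type*) [Field K] (σ : K →+* K) (Good : K → Prop) : Prop :=
  ∀ (d : ℕ) (h : K[X][X]) (w v : Fin d → K[X][X]) (δ Δ : K[X]) (δ' : Fin d → K[X]) (U V : K[X][X])
      (i0 : Fin d), h.Monic → Irreducible h → d = h.natDegree → Δ ≠ 0 →
      U * h + V * derivative h = C Δ → δ ≠ 0 → Ident σ h δ w → (∀ i, δ' i ≠ 0) →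
      (∀ i, h ∣ (v i).comp (w i) - C (δ' i) * X) →
      ∃ t z : K, Good t ∧ σ t = t ∧ δ.eval t ≠ 0 ∧ pev (t, z) h = 0 ∧
        δ.eval t * σ z = pev (t, z) (w i0)

/-- partial graphs -/
def FinSat {K : Type*} [Field K] (σ : K →+* K) (Good : K → Prop) (A : Subfield K) (g : A →+* K)
    (y : K) (S0 : Finset K) : Prop :=
  ∃ G : Subring (K × K), (∀ u, ((0, u) : K × K) ∈ G → u = 0) ∧ (∀ a : A, ((a : K), g a) ∈ G) ∧
    (∃ t, Good t ∧ (y, t) ∈ G) ∧ ∀ e ∈ S0, ∃ u, (e, u) ∈ G ∧ (σ e, σ u) ∈ G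

/-- The graph ring. -/
def graphRing {R K : Type*} [CommRing R] [Field K] (ev pt : R →+* K) : Subring (K × K) where
  carrier := {x | ∃ p s, pt s ≠ 0 ∧ ev s * x.1 = ev p ∧ pt s * x.2 = pt p}
  mul_mem' := by
    rintro x y ⟨p, s, h1, h2, h3⟩ ⟨p', s', h1', h2', h3'⟩
    refine ⟨p * p', s * s', by rw [map_mul]; exact mul_ne_zero h1 h1', ?_, ?_⟩
    · rw [map_mul, map_mul, ← h2, ← h2', Prod.fst_mul]; ring
    · rw [map_mul, map_mul, ← h3, ← h3', Prod.snd_mul]; ring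
  one_mem' := ⟨1, 1, by simp, by simp, by simp⟩
  add_mem' := by
    rintro x y ⟨p, s, h1, h2, h3⟩ ⟨p', s', h1', h2', h3'⟩
    refine ⟨p * s' + p' * s, s * s', by rw [map_mul]; exact mul_ne_zero h1 h1', ?_, ?_⟩
    · rw [map_add, map_mul, map_mul, map_mul, ← h2, ← h2', Prod.fst_add]; ring
    · rw [map_add, map_mul, map_mul, map_mul, ← h3, ← h3', Prod.snd_add]; ring
  zero_mem' := ⟨0, 1, by simp, by simp, by simp⟩
  neg_mem' := by
    rintro x ⟨p, s, h1, h2, h3⟩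
    exact ⟨-p, s, h1, by rw [map_neg, ← h2, Prod.fst_neg]; ring,
      by rw [map_neg, ← h3, Prod.snd_neg]; ring⟩

set_option maxHeartbeats 1000000 in
theorem fin_sat_sep {K : Type*} [Field K] [IsAlgClosed K] (σ : K →+* K) (Good : K → Prop)
    (hPP : PointProp K σ Good) (A : Subfield K) [IsAlgClosed A] (sA : A →+* A)
    (hsA : ∀ a : A, (sA a : K) = σ a) (hper : ∀ a, a ∈ Function.periodicPts sA)
    (y : K) (hσy : σ y = y) (hy : Transcendental A y) (g : A →+* K)
    (hg : ∀ a, g (sA a) = σ (g a)) (S0 : Finset K)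
    (hS0 : ∀ e ∈ S0, IsSeparable (IntermediateField.adjoin A {y}) e) :
    FinSat σ Good A g y S0 := by
  classical
  let M := IntermediateField.adjoin A {y}
  let : Algebra A[X] K := (aeval (R := A) y).toRingHom.toAlgebra
  let : Algebra A[X] M :=
    (aeval (R := A) (IntermediateField.AdjoinSimple.gen A y)).toRingHom.toAlgebra
  have haK : ∀ P : A[X], algebraMap A[X] K P = aeval y P := fun P => rfl
  have haM : ∀ P : A[X], ((algebraMap A[X] M P : M) : K) = aeval y P := fun P => by
    change ((aeval (IntermediateField.AdjoinSimple.gen A y) P : M) : K) = _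
    change algebraMap M K _ = _
    rw [← aeval_algebraMap_apply]
    rfl
  have : IsScalarTower A[X] M K := IsScalarTower.of_algebraMap_eq fun P => (haM P).symm
  have hinj : Function.Injective (algebraMap A[X] K) := transcendental_iff_injective.1 hy
  have : FaithfulSMul A[X] M := by
    rw [faithfulSMul_iff_algebraMap_injective]
    intro P Q hPQ
    apply hinj
    rw [haK, haK, ← haM, ← haM, hPQ]
  have : IsFractionRing A[X] M := IsFractionRing.of_field _ _ (by
    intro z
    obtain ⟨r, s, hrs⟩ := (IntermediateField.mem_adjoin_simple_iff A (z : K)).1 z.2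
    refine ⟨r, s, Subtype.ext ?_⟩
    rw [hrs]
    refine Eq.trans ?_ (map_div₀ (algebraMap M K) (algebraMap A[X] M r) (algebraMap A[X] M s)).symm
    exact (congrArg₂ (· / ·) (haM r) (haM s)).symm)
  have hs : ∀ P : A[X], σ (algebraMap A[X] K P) = algebraMap A[X] K (mapRingHom sA P) := by
    intro P
    rw [haK, haK, aeval_def, hom_eval₂, hσy, aeval_def, coe_mapRingHom, eval₂_map]
    congr 1
    ext a
    exact (hsA a).symm
  obtain ⟨z, h, d, w, v, δ, Δ, δ', U, V, i0, hmon, hirr, hd, hΔ, hUV, hδ, hI, hδ', hv, hker, hσz,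
    hP⟩ := alg_lemma (R := A[X]) (M := M) σ (mapRingHom sA) hs
      (periodic_all_poly sA hper) S0 hS0
  have hI' : Ident sA h δ w := by
    unfold Ident
    rw [Fintype.card_fin]
    exact hI
  have hgi : Function.Injective (mapRingHom g) := map_injective _ g.injective
  have hg0 : ∀ P : A[X], P ≠ 0 → mapRingHom g P ≠ 0 := fun P hP h0 =>
    hP (hgi (h0.trans (map_zero _).symm))
  obtain ⟨t, z0, hGood, hσt, hδt, hh0, hσz0⟩ := hPP d (m2 g h) (fun i => m2 g (w i))
    (fun i => m2 g (v i)) (mapRingHom g δ) (mapRingHom g Δ) (fun i => mapRingHom g (δ' i))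
    (m2 g U) (m2 g V) i0 (hmon.map _) (irreducible_map g hmon hirr)
    (hd.trans (hmon.natDegree_map _).symm) (hg0 _ hΔ)
    (by
      have := congrArg (m2 g) hUV
      rw [map_add, map_mul, map_mul] at this
      simpa [derivative_map] using this)
    (hg0 _ hδ) (hI'.map g hg) (fun i => hg0 _ (hδ' i)) (fun i => by
      have := map_dvd (m2 g) (hv i)
      simpa [map_comp] using this)
  let ev : A[X][X] →+* K := (aeval z : A[X][X] →ₐ[A[X]] K).toRingHom
  let pt : A[X][X] →+* K := (pev (t, z0)).comp (m2 g)
  have ev_C : ∀ P : A[X], ev (C P) = aeval y P := fun P => by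
    change aeval z (C P) = _
    rw [aeval_C]; rfl
  have ev_X : ev X = z := aeval_X z
  have pt_C : ∀ P : A[X], pt (C P) = (mapRingHom g P).eval t := fun P => by
    change pev _ (m2 g (C P)) = _
    simp [pev_C]
  have pt_X : pt X = z0 := by
    change pev _ (m2 g X) = _
    simp [pev]
  have hevpt : ∀ P, ev P = 0 → pt P = 0 := by
    intro P hP
    obtain ⟨Q, rfl⟩ := (hker P).1 hP
    rw [map_mul]
    have : pt h = 0 := hh0
    rw [this, zero_mul]
  have hpt_ev : ∀ P, pt P ≠ 0 → ev P ≠ 0 := fun P h1 h2 => h1 (hevpt P h2)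
  have hmemG : ∀ x : K × K, x ∈ graphRing ev pt ↔
      ∃ p s, pt s ≠ 0 ∧ ev s * x.1 = ev p ∧ pt s * x.2 = pt p := fun x => Iff.rfl
  have hbase : ∀ P, (ev P, pt P) ∈ graphRing ev pt := fun P => by
    rw [hmemG]; exact ⟨P, 1, by simp, by simp, by simp⟩
  let φ : A[X][X] →+* K × K := (σ.comp ev).prod (σ.comp pt)
  have hφ : ∀ P, φ P = (σ (ev P), σ (pt P)) := fun P => rfl
  have hδt' : pt (C δ) ≠ 0 := by rw [pt_C]; exact hδt
  have hφ1 : ∀ a : A, φ (C (C a)) ∈ graphRing ev pt := by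
    intro a
    have := hbase (C (C (sA a)))
    rw [ev_C, pt_C] at this
    rw [hφ, ev_C, pt_C]
    simp only [aeval_C, coe_mapRingHom, map_C, eval_C] at this ⊢
    rw [hg] at this
    have e : algebraMap A K (sA a) = σ (algebraMap A K a) := hsA a
    rwa [e] at this
  have hφ2 : φ (C X) ∈ graphRing ev pt := by
    have := hbase (C X)
    rw [ev_C, pt_C] at this
    rw [hφ, ev_C, pt_C]
    simp only [aeval_X, coe_mapRingHom, map_X, eval_X] at this ⊢
    rwa [hσy, hσt]
  have hφ3 : φ X ∈ graphRing ev pt := by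
    rw [hφ, ev_X, pt_X, hmemG]
    refine ⟨w i0, C δ, hδt', ?_, ?_⟩
    · rw [ev_C]; exact hσz
    · rw [pt_C]; exact hσz0
  have hφC : ∀ P : A[X], φ (C P) ∈ graphRing ev pt := by
    intro P
    induction P using Polynomial.induction_on with
    | C a => exact hφ1 a
    | add p q hp hq => rw [map_add, map_add]; exact add_mem hp hq
    | monomial n a ih =>
      rw [pow_succ, ← mul_assoc, C_mul, map_mul]
      exact mul_mem ih hφ2
  have hφall : ∀ P, φ P ∈ graphRing ev pt := by
    intro P
    induction P using Polynomial.induction_on with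
    | C a => exact hφC a
    | add p q hp hq => rw [map_add]; exact add_mem hp hq
    | monomial n a ih =>
      rw [pow_succ, ← mul_assoc, map_mul]
      exact mul_mem ih hφ3
  refine ⟨graphRing ev pt, ?_, ?_, ⟨t, hGood, ?_⟩, ?_⟩
  · rintro u ⟨p, s, h1, h2, h3⟩
    have : ev p = 0 := by rw [← h2]; simp
    rw [hevpt p this] at h3
    exact (mul_eq_zero.1 h3).resolve_left h1
  · intro a
    have := hbase (C (C a))
    rw [ev_C, pt_C] at this
    simp only [aeval_C, coe_mapRingHom, map_C, eval_C] at this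
    exact this
  · have := hbase (C X)
    rw [ev_C, pt_C] at this
    simpa using this
  · intro e he
    obtain ⟨P, hP⟩ := hP e he
    have hP' : ev (C δ) * e = ev P := by rw [ev_C]; exact hP
    refine ⟨pt P / pt (C δ), ?_, ?_⟩
    · rw [hmemG]
      exact ⟨P, C δ, hδt', hP', by field_simp⟩
    · obtain ⟨p1, s1, a1, a2, a3⟩ := (hmemG _).1 (hφall (C δ))
      obtain ⟨p2, s2, b1, b2, b3⟩ := (hmemG _).1 (hφall P)
      rw [hφ] at a2 a3 b2 b3
      dsimp only at a2 a3 b2 b3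
      have hσδ : σ (pt (C δ)) ≠ 0 := (map_ne_zero σ).2 hδt'
      have hp1 : pt p1 ≠ 0 := by rw [← a3]; exact mul_ne_zero a1 hσδ
      rw [hmemG]
      refine ⟨p2 * s1, s2 * p1, by rw [map_mul]; exact mul_ne_zero b1 hp1, ?_, ?_⟩
      · dsimp only
        rw [map_mul, map_mul, ← a2, ← b2, ← hP', map_mul]; ring
      · dsimp only
        rw [map_mul, map_mul, ← a3, ← b3, map_div₀]
        field_simp

lemma exists_sep_pow {M K : Type*} [Field M] [Field K] [Algebra M K] (q : ℕ) [ExpChar M q] (x : K)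
    (hx : IsAlgebraic M x) : ∃ n, ∀ m ≥ n, IsSeparable M (x ^ q ^ m) := by
  obtain ⟨f, hf, n, hn⟩ := (minpoly.irreducible hx.isIntegral).hasSeparableContraction q
  refine ⟨n, fun m hm => ?_⟩
  have h0 : IsSeparable M (x ^ q ^ n) := by
    refine hf.of_dvd (minpoly.dvd _ _ ?_)
    rw [← expand_aeval, hn, minpoly.aeval]
  obtain ⟨c, rfl⟩ := Nat.exists_eq_add_of_le hm
  rw [pow_add, pow_mul]
  rw [← mem_separableClosure_iff] at h0 ⊢
  exact pow_mem h0 _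

theorem fin_sat {K : Type*} [Field K] [IsAlgClosed K] (σ : K →+* K) (Good : K → Prop)
    (hPP : PointProp K σ Good) (A : Subfield K) [IsAlgClosed A] (sA : A →+* A)
    (hsA : ∀ a : A, (sA a : K) = σ a) (hper : ∀ a, a ∈ Function.periodicPts sA)
    (y : K) (hσy : σ y = y) (hy : Transcendental A y) (g : A →+* K)
    (hg : ∀ a, g (sA a) = σ (g a)) (S0 : Finset K)
    (hS0 : ∀ e ∈ S0, IsAlgebraic (IntermediateField.adjoin A {y}) e) :
    ∃ G : Subring (K × K), (∀ u, ((0, u) : K × K) ∈ G → u = 0) ∧ (∀ a : A, ((a : K), g a) ∈ G) ∧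
    (∃ t, Good t ∧ (y, t) ∈ G) ∧ ∀ e ∈ S0, ∃ u, (e, u) ∈ G ∧ (σ e, σ u) ∈ G := by
  classical
  let q := ringExpChar (IntermediateField.adjoin A {y})
  have : ExpChar K q := expChar_of_injective_algebraMap
    (algebraMap (IntermediateField.adjoin A {y}) K).injective q
  have hn : ∃ n, ∀ e ∈ S0, IsSeparable (IntermediateField.adjoin A {y}) (e ^ q ^ n) := by
    choose! n hn using fun e he => exists_sep_pow q e (hS0 e he)
    exact ⟨S0.sup n, fun e he => hn e he _ (Finset.le_sup he)⟩
  obtain ⟨n, hn⟩ := hn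
  obtain ⟨G, h1, h2, ⟨t, ht, h3⟩, h4⟩ := fin_sat_sep σ Good hPP A sA hsA hper y hσy hy g hg
    (S0.image fun e => e ^ q ^ n) (by simpa using hn)
  have hq : 0 < q ^ n := pow_pos (expChar_pos K q) n
  let fr : K →+* K := iterateFrobenius K q n
  have hfr : ∀ x, fr x = x ^ q ^ n := fun x => iterateFrobenius_def q n x
  refine ⟨G.comap (fr.prodMap fr), ?_, ?_, ⟨t, ht, ?_⟩, ?_⟩
  · intro u hu
    have : (fr 0, fr u) ∈ G := hu
    rw [map_zero] at this
    exact (map_eq_zero fr).1 (h1 _ this)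
  · intro a
    change (fr a, fr (g a)) ∈ G
    have := h2 (a ^ q ^ n)
    rw [hfr, hfr]
    simpa using this
  · change (fr y, fr t) ∈ G
    rw [hfr, hfr]
    have := pow_mem h3 (q ^ n)
    simpa using this
  · intro e he
    obtain ⟨u', hu', hu2⟩ := h4 _ (Finset.mem_image_of_mem _ he)
    obtain ⟨u, hu⟩ := IsAlgClosed.exists_pow_nat_eq u' hq
    refine ⟨u, ?_, ?_⟩
    · change (fr e, fr u) ∈ G
      rw [hfr, hfr, hu]; exact hu'
    · change (fr (σ e), fr (σ u)) ∈ G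
      rw [hfr, hfr, ← map_pow, ← map_pow, hu]; exact hu2


end Part10
end Felg

namespace Felg
section Part11
open Polynomial Filter

section acl
variable {K : Type} [Field K]

/-- relative algebraic closure of the subfield generated by a set -/
def acl (S : Set K) : Subfield K := (algebraicClosure (Subfield.closure S) K).toSubfield

lemma mem_acl {S : Set K} {x : K} : x ∈ acl S ↔ IsAlgebraic (Subfield.closure S) x := by
  unfold acl
  rw [IntermediateField.mem_toSubfield]
  exact mem_algebraicClosure_iff

lemma subset_acl (S : Set K) : S ⊆ acl S := fun x hx => by
  change x ∈ acl S
  rw [mem_acl]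
  exact isAlgebraic_algebraMap (⟨x, Subfield.subset_closure hx⟩ : Subfield.closure S)

instance [IsAlgClosed K] (S : Set K) : IsAlgClosed (acl S) :=
  (algebraicClosure.isAlgClosure (Subfield.closure S) K).isAlgClosed

lemma alg_mono {B B' : Subfield K} (h : B ≤ B') {x : K} (hx : IsAlgebraic B x) :
    IsAlgebraic B' x := by
  obtain ⟨P, hP, h0⟩ := hx
  refine ⟨P.map (Subfield.inclusion h), (Polynomial.map_ne_zero_iff
    (Subfield.inclusion h).injective).2 hP, ?_⟩
  rw [aeval_def, eval₂_map]
  exact h0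

lemma acl_le [IsAlgClosed K] {S : Set K} {B : Subfield K} [IsAlgClosed B] (hS : S ⊆ B) :
    acl S ≤ B := by
  intro x hx
  rw [mem_acl] at hx
  have h1 : IsAlgebraic B x := alg_mono (Subfield.closure_le.2 hS) hx
  have h2 : x ∈ algebraicClosure B K := mem_algebraicClosure_iff.2 h1
  rw [(IsAlgClosed.algebraicClosure_eq_bot_iff B K).2 inferInstance] at h2
  obtain ⟨y, rfl⟩ := h2
  exact y.2

lemma acl_mono [IsAlgClosed K] {S T : Set K} (h : S ⊆ T) : acl S ≤ acl T :=
  acl_le (h.trans (subset_acl T))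

lemma transc_of_notMem [IsAlgClosed K] {B : Subfield K} [IsAlgClosed B] {y : K} (hy : y ∉ B) :
    Transcendental B y := by
  intro h1
  apply hy
  have h2 : y ∈ algebraicClosure B K := mem_algebraicClosure_iff.2 h1
  rw [(IsAlgClosed.algebraicClosure_eq_bot_iff B K).2 inferInstance] at h2
  obtain ⟨y, rfl⟩ := h2
  exact y.2

lemma acl_countable {S : Set K} (hS : S.Countable) : Countable (acl S) := by
  have h1 : Countable (Subfield.closure S) := by
    rw [← Cardinal.mk_le_aleph0_iff]
    exact (Subfield.cardinalMk_closure_le_max S).trans (max_le hS.le_aleph0 le_rfl)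
  have h2 := Algebra.IsAlgebraic.cardinalMk_le_max (Subfield.closure S)
    (algebraicClosure (Subfield.closure S) K)
  rw [← Cardinal.mk_le_aleph0_iff]
  exact h2.trans (max_le (Cardinal.mk_le_aleph0_iff.2 h1) le_rfl)

lemma acl_periodic {S : Set K} (σ : K →+* K) (hS : ∀ x ∈ S, σ x = x) {x : K} (hx : x ∈ acl S) :
    x ∈ Function.periodicPts σ := by
  rw [mem_acl] at hx
  refine periodic_of_alg σ (RingHom.id (Subfield.closure S)) ?_ ?_ x hx
  · intro z
    have : Subfield.closure S ≤ σ.eqLocusField (RingHom.id K) := Subfield.closure_le.2 hS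
    exact this z.2
  · intro z
    exact ⟨1, one_pos, rfl⟩

lemma acl_stable {S : Set K} (σ : K →+* K) (hS : ∀ x ∈ S, σ x = x) {x : K} (hx : x ∈ acl S) :
    σ x ∈ acl S := by
  rw [mem_acl] at hx ⊢
  obtain ⟨P, hP, h0⟩ := hx
  refine ⟨P, hP, ?_⟩
  have h1 := congrArg σ h0
  rw [aeval_def, hom_eval₂, map_zero] at h1
  rw [aeval_def, ← h1]
  congr 1
  ext z
  have : Subfield.closure S ≤ σ.eqLocusField (RingHom.id K) := Subfield.closure_le.2 hS
  exact (this z.2).symm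

end acl

lemma saturation {X : ℕ → Type*} [∀ n, Nonempty (X n)] (P : ℕ → ∀ n, X n → Prop)
    (hmono : ∀ i j n x, i ≤ j → P j n x → P i n x)
    (h : ∀ j, ∀ᶠ n in (hyperfilter ℕ : Filter ℕ), ∃ x, P j n x) :
    ∃ x : ∀ n, X n, ∀ j, ∀ᶠ n in (hyperfilter ℕ : Filter ℕ), P j n (x n) := by
  classical
  have key : ∀ n, ∃ x : X n, ∀ j ≤ n, (∃ x', P j n x') → P j n x := by
    intro n
    by_cases h0 : ∃ j ≤ n, ∃ x', P j n x'
    · obtain ⟨x, hx⟩ := Nat.findGreatest_spec (P := fun j => ∃ x', P j n x') h0.choose_spec.1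
        h0.choose_spec.2
      refine ⟨x, fun j hj hx' => hmono _ _ _ _ (Nat.le_findGreatest hj hx') hx⟩
    · exact ⟨Classical.arbitrary _, fun j hj hx => (h0 ⟨j, hj, hx⟩).elim⟩
  choose x hx using key
  refine ⟨x, fun j => ?_⟩
  have h1 : ∀ᶠ n in (hyperfilter ℕ : Filter ℕ), j ≤ n :=
    Nat.hyperfilter_le_atTop (eventually_ge_atTop j)
  filter_upwards [h j, h1] with n hn hjn
  exact hx n j hjn hn

variable {k : ℕ → Type} [∀ n, Field (k n)]

lemma pointProp [∀ n, IsAlgClosed (k n)] (q : ℕ → ℕ)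
    (hqn : ∀ n, n ≤ q n) (Fq : ∀ n, k n →+* k n) (hFq : ∀ n x, Fq n x = x ^ (q n))
    (hqk : ∀ n, (q n : k n) = 0) (D : ∀ n, Finset (k n)) (hD : ∀ n, (D n).card * n ≤ q n ^ 2) :
    PointProp (Ks k) (sig fun n => (Fq n).comp (Fq n))
      (fun x => ∃ t, mk k t = x ∧ ∀ᶠ n in (hyperfilter ℕ : Filter ℕ), t n ∉ D n) := by
  intro d h w v δ Δ δ' U V i0 hm hi hd hΔ hUV hδ hI hδ' hv
  obtain ⟨t, z, h1, h2, h3, h4, h5⟩ := ultra_points q hqn Fq hFq hqk D hD hm hi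
    (by rw [Fintype.card_fin]; exact hd) hΔ hUV hδ hI hδ' hv i0
  exact ⟨mk k t, z, ⟨t, rfl, h1⟩, h2, h3, h4, h5⟩

set_option maxHeartbeats 1000000 in
theorem ext_lemma [∀ n, IsAlgClosed (k n)] (F : ∀ n, k n →+* k n) (D : ∀ n, Finset (k n))
    (hPP : PointProp (Ks k) (sig F)
      (fun x => ∃ t, mk k t = x ∧ ∀ᶠ n in (hyperfilter ℕ : Filter ℕ), t n ∉ D n))
    (S : Set (Ks k)) (hSc : S.Countable) (hSσ : ∀ x ∈ S, sig F x = x) (g : acl S →+* Ks k)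
    (hg : ∀ x x' : acl S, (x' : Ks k) = sig F x → g x' = sig F (g x)) (y : Ks k)
    (hσy : sig F y = y) (hy : y ∉ acl S) :
    ∃ g' : acl (insert y S) →+* Ks k,
      (∀ x x' : acl (insert y S), (x' : Ks k) = sig F x → g' x' = sig F (g' x)) ∧
      (∀ (x : acl (insert y S)) (x0 : acl S), (x : Ks k) = x0 → g' x = g x0) ∧
      ∃ t, mk k t = g' ⟨y, subset_acl _ (Set.mem_insert y S)⟩ ∧
        ∀ᶠ n in (hyperfilter ℕ : Filter ℕ), t n ∉ D n := by
  classical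
  set σ := sig F with hσ
  let sA : acl S →+* acl S := (σ.comp (acl S).subtype).codRestrict (acl S) fun x =>
    acl_stable σ hSσ x.2
  have hsA : ∀ a : acl S, (sA a : Ks k) = σ a := fun a => rfl
  have hsAi : ∀ (n : ℕ) (a : acl S), ((sA^[n] a : acl S) : Ks k) = σ^[n] a := by
    intro n
    induction n with
    | zero => intro a; rfl
    | succ n ih => intro a; rw [Function.iterate_succ_apply', Function.iterate_succ_apply', hsA, ih]
  have hper : ∀ a, a ∈ Function.periodicPts sA := by
    intro a
    obtain ⟨n, hn, h⟩ := acl_periodic σ hSσ a.2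
    refine ⟨n, hn, Subtype.ext ?_⟩
    rw [hsAi]; exact h
  have halg : ∀ e ∈ acl (insert y S), IsAlgebraic (IntermediateField.adjoin (acl S) {y}) e := by
    intro e he
    rw [mem_acl] at he
    have hle : Subfield.closure (insert y S) ≤
        (IntermediateField.adjoin (acl S) {y}).toSubfield := by
      rw [Subfield.closure_le]
      intro x hx
      rcases hx with rfl | hx
      · exact IntermediateField.mem_adjoin_simple_self (acl S) x
      · exact (IntermediateField.adjoin (acl S) {y}).algebraMap_mem ⟨x, subset_acl S hx⟩
    exact alg_mono hle he
  have hSσ' : ∀ x ∈ insert y S, σ x = x := by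
    rintro x (rfl | hx)
    · exact hσy
    · exact hSσ x hx
  let E := acl (insert y S)
  have hEc : Countable E := acl_countable (hSc.insert y)
  obtain ⟨f, hf⟩ := exists_surjective_nat E
  let T : ℕ → Finset E := fun j => (Finset.range j).image f
  have hTm : ∀ i j, i ≤ j → T i ⊆ T j := fun i j hij =>
    Finset.image_subset_image (Finset.range_mono hij)
  have hTe : ∀ e : E, ∃ j, e ∈ T j := by
    intro e
    obtain ⟨j, rfl⟩ := hf e
    exact ⟨j + 1, Finset.mem_image_of_mem _ (Finset.self_mem_range_succ j)⟩
  choose ga hga using fun a : acl S => mk_surj (g a)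
  let P : ℕ → ∀ n, (E → k n) → Prop := fun j n x =>
    (∀ a ∈ T j, ∀ b ∈ T j, ∀ c ∈ T j, (a + b = c → x a + x b = x c) ∧
      (a * b = c → x a * x b = x c) ∧ ((b : Ks k) = σ a → x b = F n (x a))) ∧
    (∀ a ∈ T j, ∀ h : (a : Ks k) ∈ acl S, x a = ga ⟨a, h⟩ n) ∧
    (∀ a ∈ T j, (a : Ks k) = y → x a ∉ D n)
  obtain ⟨x, hx⟩ := saturation (X := fun n => E → k n) P (by
    rintro i j n x hij ⟨h1, h2, h3⟩
    have := hTm i j hij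
    exact ⟨fun a ha b hb c hc => h1 a (this ha) b (this hb) c (this hc),
      fun a ha => h2 a (this ha), fun a ha => h3 a (this ha)⟩) (by
    intro j
    obtain ⟨G, hG0, hGA, ⟨t, ⟨t', rfl, ht⟩, hGt⟩, hGS⟩ := fin_sat σ _ hPP (acl S) sA hsA hper y hσy
      (transc_of_notMem hy) g (fun a => hg a (sA a) (hsA a)) ((T j).image Subtype.val) (by
        intro e he
        obtain ⟨e', he', rfl⟩ := Finset.mem_image.1 he
        exact halg _ e'.2)
    have hGu : ∀ a u v, (a, u) ∈ G → (a, v) ∈ G → u = v := by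
      intro a u v hu hv
      have := sub_mem hu hv
      rw [Prod.mk_sub_mk, sub_self] at this
      exact sub_eq_zero.1 (hG0 _ this)
    choose! u hu1 hu2 using hGS
    choose ux hux using fun e : E => mk_surj (u e)
    have hmem : ∀ a ∈ T j, (a : Ks k) ∈ (T j).image Subtype.val := fun a ha =>
      Finset.mem_image_of_mem _ ha
    have e1 : ∀ᶠ n in (hyperfilter ℕ : Filter ℕ), ∀ a ∈ T j, ∀ b ∈ T j, ∀ c ∈ T j,
        (a + b = c → ux a n + ux b n = ux c n) ∧
        (a * b = c → ux a n * ux b n = ux c n) ∧ ((b : Ks k) = σ a → ux b n = F n (ux a n)) := by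
      refine (eventually_all_finset _).2 fun a ha => (eventually_all_finset _).2 fun b hb =>
        (eventually_all_finset _).2 fun c hc => ?_
      have ha' := hu1 _ (hmem a ha)
      have hb' := hu1 _ (hmem b hb)
      have hc' := hu1 _ (hmem c hc)
      refine Filter.Eventually.and ?_ (Filter.Eventually.and ?_ ?_)
      · by_cases h : a + b = c
        · subst h
          have h2 : mk k (ux a + ux b) = mk k (ux (a + b)) := by
            rw [map_add, hux, hux, hux]
            exact hGu _ _ _ (add_mem ha' hb') hc'
          filter_upwards [(mk_eq_iff _ _).1 h2] with n hn _
          exact hn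
        · exact Eventually.of_forall fun n h' => (h h').elim
      · by_cases h : a * b = c
        · subst h
          have h2 : mk k (ux a * ux b) = mk k (ux (a * b)) := by
            rw [map_mul, hux, hux, hux]
            exact hGu _ _ _ (mul_mem ha' hb') hc'
          filter_upwards [(mk_eq_iff _ _).1 h2] with n hn _
          exact hn
        · exact Eventually.of_forall fun n h' => (h h').elim
      · by_cases h : (b : Ks k) = σ a
        · have h2 : mk k (ux b) = mk k (fun n => F n (ux a n)) := by
            rw [← sig_mk, hux, hux]
            have h3 := hu2 _ (hmem a ha)
            rw [← h] at h3
            exact hGu _ _ _ hb' h3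
          filter_upwards [(mk_eq_iff _ _).1 h2] with n hn _
          exact hn
        · exact Eventually.of_forall fun n h' => (h h').elim
    have e2 : ∀ᶠ n in (hyperfilter ℕ : Filter ℕ), ∀ a ∈ T j, ∀ h : (a : Ks k) ∈ acl S,
        ux a n = ga ⟨a, h⟩ n := by
      refine (eventually_all_finset _).2 fun a ha => ?_
      by_cases h : (a : Ks k) ∈ acl S
      · have h2 : mk k (ux a) = mk k (ga ⟨a, h⟩) := by
          rw [hux, hga]
          exact hGu _ _ _ (hu1 _ (hmem a ha)) (hGA ⟨a, h⟩)
        filter_upwards [(mk_eq_iff _ _).1 h2] with n hn _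
        exact hn
      · exact Eventually.of_forall fun n h' => (h h').elim
    have e3 : ∀ᶠ n in (hyperfilter ℕ : Filter ℕ), ∀ a ∈ T j, (a : Ks k) = y → ux a n ∉ D n := by
      refine (eventually_all_finset _).2 fun a ha => ?_
      by_cases h : (a : Ks k) = y
      · have h2 : mk k (ux a) = mk k t' := by
          rw [hux]
          refine hGu _ _ _ (hu1 _ (hmem a ha)) ?_
          rw [h]; exact hGt
        filter_upwards [(mk_eq_iff _ _).1 h2, ht] with n hn hn2 _
        rw [hn]; exact hn2
      · exact Eventually.of_forall fun n h' => (h h').elim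
    filter_upwards [e1, e2, e3] with n h1 h2 h3
    exact ⟨fun e => ux e n, h1, h2, h3⟩)
  have hT3 : ∀ a b c : E, ∃ j, a ∈ T j ∧ b ∈ T j ∧ c ∈ T j := by
    intro a b c
    obtain ⟨i1, h1⟩ := hTe a
    obtain ⟨i2, h2⟩ := hTe b
    obtain ⟨i3, h3⟩ := hTe c
    exact ⟨max i1 (max i2 i3), hTm _ _ (by simp) h1, hTm _ _ (by simp) h2, hTm _ _ (by simp) h3⟩
  let gf : E → Ks k := fun e => mk k (fun n => x n e)
  have hadd : ∀ a b, gf (a + b) = gf a + gf b := by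
    intro a b
    obtain ⟨j, h1, h2, h3⟩ := hT3 a b (a + b)
    change mk k _ = mk k _ + mk k _
    rw [← map_add, mk_eq_iff]
    filter_upwards [hx j] with n hn
    exact ((hn.1 a h1 b h2 _ h3).1 rfl).symm
  have hmul : ∀ a b, gf (a * b) = gf a * gf b := by
    intro a b
    obtain ⟨j, h1, h2, h3⟩ := hT3 a b (a * b)
    change mk k _ = mk k _ * mk k _
    rw [← map_mul, mk_eq_iff]
    filter_upwards [hx j] with n hn
    exact ((hn.1 a h1 b h2 _ h3).2.1 rfl).symm
  have hext : ∀ (e : E) (h : (e : Ks k) ∈ acl S), gf e = g ⟨e, h⟩ := by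
    intro e h
    obtain ⟨j, h1⟩ := hTe e
    rw [← hga]
    change mk k _ = mk k _
    rw [mk_eq_iff]
    filter_upwards [hx j] with n hn
    exact hn.2.1 e h1 h
  have hone : gf 1 = 1 := by
    rw [hext 1 (one_mem _)]
    exact map_one g
  have hzero : gf 0 = 0 := by
    have := hadd 0 0
    simpa using this
  let g' : E →+* Ks k :=
    { toFun := gf, map_one' := hone, map_mul' := hmul, map_zero' := hzero, map_add' := hadd }
  refine ⟨g', ?_, ?_, ?_⟩
  · intro a b hab
    obtain ⟨j, h1, h2, _⟩ := hT3 a b b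
    change mk k _ = σ (mk k _)
    rw [hσ, sig_mk, mk_eq_iff]
    filter_upwards [hx j] with n hn
    exact (hn.1 a h1 b h2 b h2).2.2 hab
  · rintro a ⟨a0, ha0⟩ h
    change (a : Ks k) = a0 at h
    subst h
    exact hext a ha0
  · refine ⟨fun n => x n ⟨y, subset_acl _ (Set.mem_insert y S)⟩, rfl, ?_⟩
    obtain ⟨j, h1⟩ := hTe ⟨y, subset_acl _ (Set.mem_insert y S)⟩
    filter_upwards [hx j] with n hn
    exact hn.2.2 _ h1 rfl


end Part11
end Felg

namespace Felg
section Part12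
open Polynomial Filter

section Rel
variable {K : Type} [Field K]

/-- Partial elementary correspondence between two tuples. -/
def Rel (σ : K →+* K) {ι : Type} (a b : ι → K) : Prop :=
  ∃ g : acl (Set.range a) →+* K, (∀ x x' : acl (Set.range a), (x' : K) = σ x → g x' = σ (g x)) ∧
    ∀ i, ∀ x : acl (Set.range a), (x : K) = a i → g x = b i

lemma Rel.of_set (σ : K →+* K) {ι : Type} {a b : ι → K} {S : Set K}
    (hS : S = Set.range a) (g : acl S →+* K)
    (hg : ∀ x x' : acl S, (x' : K) = σ x → g x' = σ (g x))
    (hb : ∀ i, ∀ x : acl S, (x : K) = a i → g x = b i) : Rel σ a b := by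
  subst hS
  exact ⟨g, hg, hb⟩

lemma exists_restrict {A B : Subfield K} (g : A →+* K) (hle : B ≤ A) : ∃ g' : B →+* K,
    ∀ (x : B) (x' : A), (x : K) = x' → g' x = g x' := by
  refine ⟨g.comp (Subfield.inclusion hle), fun x x' h => ?_⟩
  have : Subfield.inclusion hle x = x' := Subtype.ext h
  rw [RingHom.comp_apply, this]

lemma exists_inverse {A : Subfield K} (g : A →+* K) : ∃ h : g.fieldRange →+* A,
    (∀ (y : g.fieldRange) (x : A), (y : K) = g x → h y = x) ∧ Function.Bijective h := by
  let e : A ≃+* g.fieldRange := RingEquiv.ofBijective g.rangeRestrictField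
      (RingHom.rangeRestrictField_bijective g)
  refine ⟨e.symm.toRingHom, fun y x h => ?_, e.symm.bijective⟩
  have : y = e x := Subtype.ext h
  rw [this]
  exact e.symm_apply_apply x

lemma Rel.refl (σ : K →+* K) {ι : Type} (a : ι → K) : Rel σ a a :=
  ⟨(acl (Set.range a)).subtype, fun x x' h => h, fun i x h => h⟩

lemma Rel.comp [IsAlgClosed K] {σ : K →+* K} {ι ι' : Type} {a b : ι → K} (h : Rel σ a b)
    (f : ι' → ι) : Rel σ (a ∘ f) (b ∘ f) := by
  obtain ⟨g, hg, hb⟩ := h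
  have hle : acl (Set.range (a ∘ f)) ≤ acl (Set.range a) := acl_mono (Set.range_comp_subset_range f a)
  obtain ⟨g', hg'⟩ := exists_restrict g hle
  refine ⟨g', fun x x' h => ?_, fun i x h => ?_⟩
  · rw [hg' x ⟨x, hle x.2⟩ rfl, hg' x' ⟨x', hle x'.2⟩ rfl]
    exact hg _ _ h
  · rw [hg' x ⟨x, hle x.2⟩ rfl]
    exact hb (f i) _ h

lemma Rel.symm [IsAlgClosed K] {σ : K →+* K} {ι : Type} {a b : ι → K} (h : Rel σ a b)
    (ha : ∀ i, σ (a i) = a i) : Rel σ b a := by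
  obtain ⟨g, hg, hb⟩ := h
  obtain ⟨e, he, hbij⟩ := exists_inverse g
  have : IsAlgClosed g.fieldRange :=
    IsAlgClosed.of_ringEquiv _ _ (RingEquiv.ofBijective e hbij).symm
  have hle : acl (Set.range b) ≤ g.fieldRange := by
    apply acl_le
    rintro _ ⟨i, rfl⟩
    exact ⟨⟨a i, subset_acl _ ⟨i, rfl⟩⟩, hb i _ rfl⟩
  obtain ⟨h, hr⟩ := exists_restrict ((acl (Set.range a)).subtype.comp e) hle
  have hh : ∀ (y : acl (Set.range b)) (x : acl (Set.range a)), (y : K) = g x → h y = x := by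
    intro y x hyx
    rw [hr y ⟨y, hle y.2⟩ rfl, RingHom.comp_apply, he ⟨y, hle y.2⟩ x hyx]
    rfl
  refine ⟨h, fun y y' hy => ?_, fun i y hy => ?_⟩
  · obtain ⟨x, hx⟩ := hle y.2
    have hsx : σ x ∈ acl (Set.range a) := acl_stable σ (by rintro _ ⟨i, rfl⟩; exact ha i) x.2
    rw [hh y x hx.symm, hh y' ⟨σ x, hsx⟩ ?_]
    rw [hg x ⟨σ x, hsx⟩ rfl, hy, hx]
  · rw [hh y ⟨a i, subset_acl _ ⟨i, rfl⟩⟩]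
    rw [hy, hb i _ rfl]

lemma Rel.fixed {σ : K →+* K} {ι : Type} {a b : ι → K} (h : Rel σ a b)
    (ha : ∀ i, σ (a i) = a i) (i : ι) : σ (b i) = b i := by
  obtain ⟨g, hg, hb⟩ := h
  have := hg ⟨a i, subset_acl _ ⟨i, rfl⟩⟩ ⟨a i, subset_acl _ ⟨i, rfl⟩⟩ (ha i).symm
  rwa [hb i _ rfl, eq_comm] at this

end Rel

section Ext
variable {k : ℕ → Type} [∀ n, Field (k n)]

lemma range_option {K ι : Type} (y : K) (a : ι → K) :
    insert y (Set.range a) = Set.range (fun o : Option ι => o.elim y a) := by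
  ext x
  simp only [Set.mem_insert_iff, Set.mem_range, Option.exists, Option.elim_none, Option.elim_some]
  simp [eq_comm]

/-- Extension by a new element with a value avoiding small sets. -/
lemma Rel.extend_new [∀ n, IsAlgClosed (k n)] {F : ∀ n, k n →+* k n} {D : ∀ n, Finset (k n)}
    (hPP : PointProp (Ks k) (sig F) (fun x => ∃ t, mk k t = x ∧ ∀ᶠ n in (hyperfilter ℕ : Filter ℕ), t n ∉ D n))
    {ι : Type} [Countable ι] {a b : ι → Ks k} (h : Rel (sig F) a b)
    (ha : ∀ i, sig F (a i) = a i) {y : Ks k} (hσy : sig F y = y) (hy : y ∉ acl (Set.range a)) :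
    ∃ t, Rel (sig F) (fun o : Option ι => o.elim y a) (fun o : Option ι => o.elim (mk k t) b) ∧
      ∀ᶠ n in (hyperfilter ℕ : Filter ℕ), t n ∉ D n := by
  obtain ⟨g, hg, hb⟩ := h
  obtain ⟨g', h1, h2, t, ht, htD⟩ := ext_lemma F D hPP (Set.range a) (Set.countable_range a)
    (by rintro _ ⟨i, rfl⟩; exact ha i) g hg y hσy hy
  refine ⟨t, Rel.of_set _ (range_option y a) g' h1 ?_, htD⟩
  rintro (_ | i) x hx
  · simp only [Option.elim_none] at hx ⊢
    rw [ht]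
    congr 1
    exact Subtype.ext hx
  · simp only [Option.elim_some] at hx ⊢
    rw [h2 x ⟨a i, subset_acl _ ⟨i, rfl⟩⟩ hx]
    exact hb i _ rfl

lemma Rel.extend [∀ n, IsAlgClosed (k n)] {F : ∀ n, k n →+* k n} {D : ∀ n, Finset (k n)}
    (hPP : PointProp (Ks k) (sig F) (fun x => ∃ t, mk k t = x ∧ ∀ᶠ n in (hyperfilter ℕ : Filter ℕ), t n ∉ D n))
    {ι : Type} [Countable ι] {a b : ι → Ks k} (h : Rel (sig F) a b)
    (ha : ∀ i, sig F (a i) = a i) {y : Ks k} (hσy : sig F y = y) :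
    ∃ y', Rel (sig F) (fun o : Option ι => o.elim y a) (fun o : Option ι => o.elim y' b) := by
  by_cases hy : y ∈ acl (Set.range a)
  · obtain ⟨g, hg, hb⟩ := h
    have hle : acl (Set.range (fun o : Option ι => o.elim y a)) ≤ acl (Set.range a) := by
      rw [← range_option]
      exact acl_le (Set.insert_subset hy (subset_acl _))
    obtain ⟨g', hg'⟩ := exists_restrict g hle
    refine ⟨g ⟨y, hy⟩, g', fun x x' h => ?_, ?_⟩
    · rw [hg' x ⟨x, hle x.2⟩ rfl, hg' x' ⟨x', hle x'.2⟩ rfl]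
      exact hg _ _ h
    rintro (_ | i) x hx
    · exact hg' x ⟨y, hy⟩ hx
    · rw [hg' x ⟨x, hle x.2⟩ rfl]
      exact hb i _ hx
  · obtain ⟨t, ht, -⟩ := h.extend_new hPP ha hσy hy
    exact ⟨_, ht⟩

end Ext

end Part12
end Felg

namespace Felg
section Part13
open Polynomial Filter

lemma frob_facts (F : Type) [Field F] [Finite F] {q : ℕ} (hc : Nat.card F = q ^ 2) :
    1 < q ∧ (∃ f : AlgebraicClosure F →+* AlgebraicClosure F, ∀ x, f x = x ^ q) ∧
    ((q : AlgebraicClosure F) = 0) ∧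
    ∀ x : AlgebraicClosure F, (x ^ q) ^ q = x → ∃ y : F, algebraMap F (AlgebraicClosure F) y = x := by
  classical
  have := Fintype.ofFinite F
  have hq1 : 1 < q := by
    have h1 : 1 < Nat.card F := Finite.one_lt_card
    rw [hc] at h1
    by_contra h
    have : q ≤ 1 := by omega
    have : q ^ 2 ≤ 1 := by nlinarith
    omega
  obtain ⟨p, hp⟩ := CharP.exists F
  obtain ⟨m, hpp, hm⟩ := FiniteField.card F p
  have hp' : Fact p.Prime := ⟨hpp⟩
  have hdvd : q ∣ p ^ (m : ℕ) := by
    rw [← hm, ← Nat.card_eq_fintype_card, hc]; exact dvd_pow_self q two_ne_zero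
  obtain ⟨j, -, hj⟩ := (Nat.dvd_prime_pow hpp).1 hdvd
  have hcp : CharP (AlgebraicClosure F) p := charP_of_injective_algebraMap
    (algebraMap F (AlgebraicClosure F)).injective p
  have hj0 : j ≠ 0 := by rintro rfl; simp at hj; omega
  have hqk : (q : AlgebraicClosure F) = 0 := by
    rw [hj]; push_cast; rw [CharP.cast_eq_zero, zero_pow hj0]
  refine ⟨hq1, ⟨iterateFrobenius _ p j, fun x => by rw [iterateFrobenius_def, hj]⟩, hqk, ?_⟩
  obtain ⟨T, hT, hTm⟩ := card_fix (k := AlgebraicClosure F) (Q := q ^ 2) (by nlinarith)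
    (by push_cast; rw [hqk]; simp)
  intro x hx
  have hx' : x ∈ T := by rw [hTm, pow_two, pow_mul, hx]
  have himg : (Finset.univ : Finset F).image (algebraMap F (AlgebraicClosure F)) = T := by
    apply Finset.eq_of_subset_of_card_le
    · intro z hz
      obtain ⟨y, -, rfl⟩ := Finset.mem_image.1 hz
      rw [hTm, ← map_pow, ← hc, Nat.card_eq_fintype_card, FiniteField.pow_card]
    · rw [Finset.card_image_of_injective _ (algebraMap F (AlgebraicClosure F)).injective, hT,
        Finset.card_univ, ← Nat.card_eq_fintype_card, hc]
  rw [← himg] at hx'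
  obtain ⟨y, -, rfl⟩ := Finset.mem_image.1 hx'
  exact ⟨y, rfl⟩

/-- A sequence of finite fields of square order. -/
structure FSeq where
  F : ℕ → Type
  fld : ∀ n, Field (F n)
  fin : ∀ n, Finite (F n)
  q : ℕ → ℕ
  hq : ∀ n, n ≤ q n
  hcard : ∀ n, Nat.card (F n) = q n ^ 2

namespace FSeq
variable (S : FSeq)

instance (n : ℕ) : Field (S.F n) := S.fld n
instance (n : ℕ) : Finite (S.F n) := S.fin n

/-- The algebraic closures. -/
abbrev k (n : ℕ) : Type := AlgebraicClosure (S.F n)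

/-- The `q`-power maps. -/
noncomputable def Fq (n : ℕ) : S.k n →+* S.k n := (frob_facts (S.F n) (S.hcard n)).2.1.choose

lemma Fq_apply (n : ℕ) (x : S.k n) : S.Fq n x = x ^ (S.q n) :=
  (frob_facts (S.F n) (S.hcard n)).2.1.choose_spec x

/-- The ultraproduct of the Frobenius maps. -/
noncomputable def σ : Ks S.k →+* Ks S.k := sig fun n => (S.Fq n).comp (S.Fq n)

/-- The embedding of the ultraproduct. -/
noncomputable def emb (a : ∀ n, S.F n) : Ks S.k := Felg.mk S.k fun n => algebraMap _ _ (a n)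

lemma emb_eq_iff (a b : ∀ n, S.F n) :
    S.emb a = S.emb b ↔ ∀ᶠ n in (hyperfilter ℕ : Filter ℕ), a n = b n := by
  unfold emb
  rw [mk_eq_iff]
  constructor <;> intro h <;> filter_upwards [h] with n hn
  · exact (algebraMap (S.F n) (S.k n)).injective hn
  · rw [hn]

lemma emb_fixed (a : ∀ n, S.F n) : S.σ (S.emb a) = S.emb a := by
  unfold emb σ
  rw [sig_mk]
  congr 1
  funext n
  rw [RingHom.comp_apply, Fq_apply, Fq_apply, ← pow_mul, ← pow_two, ← S.hcard, ← map_pow]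
  have := Fintype.ofFinite (S.F n)
  rw [Nat.card_eq_fintype_card, FiniteField.pow_card]

lemma exists_emb {x : Ks S.k} (hx : S.σ x = x) : ∃ a, S.emb a = x := by
  obtain ⟨t, rfl⟩ := mk_surj x
  unfold σ at hx
  rw [sig_mk, mk_eq_iff] at hx
  classical
  refine ⟨fun n => if h : ∃ y : S.F n, algebraMap (S.F n) (S.k n) y = t n then h.choose else 0, ?_⟩
  unfold emb
  rw [mk_eq_iff]
  filter_upwards [hx] with n hn
  rw [RingHom.comp_apply, Fq_apply, Fq_apply] at hn
  have h := (frob_facts (S.F n) (S.hcard n)).2.2.2 (t n) hn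
  rw [dif_pos h]
  exact h.choose_spec

lemma pointProp (D : ∀ n, Finset (S.k n)) (hD : ∀ n, (D n).card * n ≤ S.q n ^ 2) :
    PointProp (Ks S.k) S.σ
      (fun x => ∃ t, Felg.mk S.k t = x ∧ ∀ᶠ n in (hyperfilter ℕ : Filter ℕ), t n ∉ D n) :=
  Felg.pointProp S.q S.hq S.Fq S.Fq_apply (fun n => (frob_facts (S.F n) (S.hcard n)).2.2.1) D hD

/-- Tuples with the same type. -/
def R {ι : Type} (a b : ι → ∀ n, S.F n) : Prop := Rel S.σ (fun i => S.emb (a i)) (fun i => S.emb (b i))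

variable {S}

lemma R.symm {ι : Type} {a b : ι → ∀ n, S.F n} (h : S.R a b) : S.R b a :=
  Rel.symm h fun i => S.emb_fixed _

lemma R.comp {ι ι' : Type} {a b : ι → ∀ n, S.F n} (h : S.R a b) (f : ι' → ι) :
    S.R (a ∘ f) (b ∘ f) := Rel.comp h f

lemma option_elim_comp {ι α β : Type} (f : α → β) (y : α) (a : ι → α) :
    (fun o : Option ι => f (o.elim y a)) = fun o : Option ι => o.elim (f y) (fun i => f (a i)) := by
  funext o; cases o <;> rfl

lemma R.extend {ι : Type} [Countable ι] {a b : ι → ∀ n, S.F n} (h : S.R a b) (y : ∀ n, S.F n) :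
    ∃ y', S.R (fun o : Option ι => o.elim y a) (fun o => o.elim y' b) := by
  have hPP := S.pointProp (fun _ => ∅) (by simp)
  obtain ⟨y', hy'⟩ := Rel.extend hPP h (fun i => S.emb_fixed _) (S.emb_fixed y)
  have hfix := hy'.fixed (by rintro (_ | i) <;> exact S.emb_fixed _) none
  obtain ⟨z, hz⟩ := S.exists_emb hfix
  refine ⟨z, ?_⟩
  unfold R
  rw [option_elim_comp, option_elim_comp, hz]
  exact hy'

lemma R.extend_new {ι : Type} [Countable ι] {a b : ι → ∀ n, S.F n} (h : S.R a b) (y : ∀ n, S.F n)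
    (hy : S.emb y ∉ acl (Set.range fun i => S.emb (a i)))
    (D : ∀ n, Finset (S.F n)) (hD : ∀ n, (D n).card * n ≤ S.q n ^ 2) :
    ∃ y', S.R (fun o : Option ι => o.elim y a) (fun o => o.elim y' b) ∧
      ∀ᶠ n in (hyperfilter ℕ : Filter ℕ), y' n ∉ D n := by
  classical
  have hPP := S.pointProp (fun n => (D n).image (algebraMap (S.F n) (S.k n))) (fun n =>
    (Nat.mul_le_mul_right _ Finset.card_image_le).trans (hD n))
  obtain ⟨t, ht, htD⟩ := Rel.extend_new hPP h (fun i => S.emb_fixed _) (S.emb_fixed y) hy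
  have hfix := ht.fixed (by rintro (_ | i) <;> exact S.emb_fixed _) none
  obtain ⟨z, hz⟩ := S.exists_emb hfix
  refine ⟨z, ?_, ?_⟩
  · unfold R
    rw [option_elim_comp, option_elim_comp, hz]
    exact ht
  · simp only [Option.elim_none] at hz
    unfold emb at hz
    rw [mk_eq_iff] at hz
    filter_upwards [hz, htD] with n h1 h2 h3
    exact h2 (h1 ▸ Finset.mem_image_of_mem _ h3)

end FSeq

/-- Invariant families of predicates. -/
def Inv {ι : Type} (P : ∀ (F : Type) [Field F], (ι → F) → Prop) : Prop :=
  ∀ (S : FSeq) (a b : ι → ∀ n, S.F n), S.R a b →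
    (∀ᶠ n in (hyperfilter ℕ : Filter ℕ), P (S.F n) (fun i => a i n)) →
    ∀ᶠ n in (hyperfilter ℕ : Filter ℕ), P (S.F n) (fun i => b i n)

section Inv
variable {ι ι' : Type} {P Q : ∀ (F : Type) [Field F], (ι → F) → Prop}

lemma Inv.congr (h : Inv P) (hPQ : ∀ (F : Type) [Field F] [Finite F] (a : ι → F), P F a ↔ Q F a) : Inv Q := by
  intro S a b hab hQ
  simp only [← hPQ] at hQ ⊢
  exact h S a b hab hQ

lemma Inv.not (h : Inv P) : Inv fun F _ a => ¬ P F a := by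
  intro S a b hab hP
  rw [Ultrafilter.eventually_not] at hP ⊢
  exact fun h' => hP (h S b a hab.symm h')

lemma Inv.and (h : Inv P) (h' : Inv Q) : Inv fun F _ a => P F a ∧ Q F a := by
  intro S a b hab hP
  rw [eventually_and] at hP ⊢
  exact ⟨h S a b hab hP.1, h' S a b hab hP.2⟩

lemma Inv.imp (h : Inv P) (h' : Inv Q) : Inv fun F _ a => P F a → Q F a :=
  (h.and h'.not).not.congr fun F _ _ a => by tauto

lemma Inv.comp (h : Inv P) (f : ι → ι') : Inv fun F _ (a : ι' → F) => P F (fun i => a (f i)) := by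
  intro S a b hab hP
  exact h S _ _ (hab.comp f) hP

lemma Inv.true : Inv (fun _ _ (_ : ι → _) => True) := by
  intro S a b hab hP
  simp

lemma Inv.ex [Countable ι] {P : ∀ (F : Type) [Field F], (Option ι → F) → Prop} (h : Inv P) :
    Inv fun F _ (a : ι → F) => ∃ y, P F (fun o => o.elim y a) := by
  intro S a b hab hP
  classical
  let y : ∀ n, S.F n := fun n => if h : ∃ y, P (S.F n) (fun o => o.elim y (fun i => a i n)) then h.choose else 0
  obtain ⟨y', hy'⟩ := hab.extend y
  have h1 : ∀ᶠ n in (hyperfilter ℕ : Filter ℕ), P (S.F n) (fun i => (fun o : Option ι => o.elim y a) i n) := by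
    filter_upwards [hP] with n hn
    have : (fun i => (fun o : Option ι => o.elim y a) i n) = fun o => o.elim (y n) (fun i => a i n) :=
      FSeq.option_elim_comp (fun z : ∀ n, S.F n => z n) y a
    rw [this]
    simp only [y]
    rw [dif_pos hn]
    exact hn.choose_spec
  filter_upwards [h S _ _ hy' h1] with n hn
  have : (fun i => (fun o : Option ι => o.elim y' b) i n) = fun o => o.elim (y' n) (fun i => b i n) :=
      FSeq.option_elim_comp (fun z : ∀ n, S.F n => z n) y' b
  rw [this] at hn
  exact ⟨_, hn⟩

lemma Inv.eqVar (i j : ι) : Inv fun F _ (a : ι → F) => a i = a j := by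
  intro S a b hab hP
  rw [← S.emb_eq_iff] at hP ⊢
  obtain ⟨g, hg, hb⟩ := hab
  exact (hb i ⟨S.emb (a i), subset_acl _ ⟨i, rfl⟩⟩ rfl).symm.trans
    (hb j ⟨S.emb (a i), subset_acl _ ⟨i, rfl⟩⟩ hP)

lemma Inv.atLeast (C : ℕ) : ∀ {ι : Type} [Countable ι] {P : ∀ (F : Type) [Field F], (Option ι → F) → Prop}
    (_ : Inv P), Inv fun F _ (a : ι → F) => C ≤ Nat.card {y // P F (fun o => o.elim y a)} := by
  induction C with
  | zero => intro ι _ P h; exact Inv.true.congr (by simp)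
  | succ C ih =>
    intro ι _ P h
    let f : Option ι → Option (Option ι) := fun o => o.elim none (fun i => some (some i))
    have h2 := (h.and (ih (((h.comp f).and (Inv.eqVar none (some none)).not)))).ex
    refine h2.congr fun F _ _ a => ?_
    have hf : ∀ y z : F, (fun i : Option ι => (f i).elim z fun o : Option ι => o.elim y a) =
      fun o => o.elim z a := by
      intro y z; funext i; cases i <;> rfl
    simp only [hf, Option.elim_none, Option.elim_some]
    have key : ∀ y, P F (fun o => o.elim y a) →
        Nat.card {z // P F (fun o => o.elim z a)} =
          Nat.card {z // P F (fun o => o.elim z a) ∧ ¬ z = y} + 1 := by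
      intro y hy
      have e1 := Set.ncard_sdiff_singleton_add_one (s := {z | P F (fun o => o.elim z a)}) (a := y) hy
        (Set.toFinite _)
      rw [← Nat.card_coe_set_eq, ← Nat.card_coe_set_eq] at e1
      exact e1.symm
    constructor
    · rintro ⟨y, hy, hc⟩
      rw [key y hy]; omega
    · intro hc
      have : 0 < Nat.card {z // P F (fun o => o.elim z a)} := by omega
      obtain ⟨⟨y, hy⟩⟩ := (Nat.card_pos_iff.1 this).1
      refine ⟨y, hy, ?_⟩
      rw [key y hy] at hc; omega

end Inv

end Part13
end Felg

namespace Felg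
section Part14
open Polynomial Filter FirstOrder

section terms
variable (S : FSeq)

/-- The embedding as a ring hom. -/
noncomputable def FSeq.embHom : (∀ n, S.F n) →+* Ks S.k :=
  (Felg.mk S.k).comp (RingHom.pi fun n => (algebraMap (S.F n) (S.k n)).comp (Pi.evalRingHom S.F n))

lemma FSeq.embHom_apply (a : ∀ n, S.F n) : S.embHom a = S.emb a := rfl

/-- Term realisation in a field. -/
noncomputable def tr {ι : Type} (t : Language.ring.Term ι) (F : Type) [Field F] (a : ι → F) : F :=
  let _ := Ring.compatibleRingOfRing F
  t.realize a

lemma term_lemma {ι : Type} {a b : ι → ∀ n, S.F n} (g : acl (Set.range fun i => S.emb (a i)) →+* Ks S.k)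
    (hb : ∀ i, ∀ x : acl (Set.range fun i => S.emb (a i)), (x : Ks S.k) = S.emb (a i) → g x = S.emb (b i))
    (t : Language.ring.Term ι) :
    ∃ x : acl (Set.range fun i => S.emb (a i)), (x : Ks S.k) = S.emb (fun n => tr t (S.F n) (fun i => a i n)) ∧
      g x = S.emb (fun n => tr t (S.F n) (fun i => b i n)) := by
  induction t with
  | var i => exact ⟨⟨S.emb (a i), subset_acl _ ⟨i, rfl⟩⟩, rfl, hb i _ rfl⟩
  | @func l f ts ih =>
    choose x hx hg using ih
    cases f with
    | add =>
      refine ⟨x 0 + x 1, ?_, ?_⟩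
      · push_cast; rw [hx, hx, ← S.embHom_apply, ← S.embHom_apply, ← map_add]; rfl
      · rw [map_add, hg, hg, ← S.embHom_apply, ← S.embHom_apply, ← map_add]; rfl
    | mul =>
      refine ⟨x 0 * x 1, ?_, ?_⟩
      · push_cast; rw [hx, hx, ← S.embHom_apply, ← S.embHom_apply, ← map_mul]; rfl
      · rw [map_mul, hg, hg, ← S.embHom_apply, ← S.embHom_apply, ← map_mul]; rfl
    | neg =>
      refine ⟨- x 0, ?_, ?_⟩
      · push_cast; rw [hx, ← S.embHom_apply, ← map_neg]; rfl
      · rw [map_neg, hg, ← S.embHom_apply, ← map_neg]; rfl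
    | zero =>
      refine ⟨0, ?_, ?_⟩
      · push_cast; rw [← S.embHom.map_zero]; rfl
      · rw [map_zero, ← S.embHom.map_zero]; rfl
    | one =>
      refine ⟨1, ?_, ?_⟩
      · push_cast; rw [← S.embHom.map_one]; rfl
      · rw [map_one, ← S.embHom.map_one]; rfl

lemma Inv.eqTerm {ι : Type} (t u : Language.ring.Term ι) :
    Inv fun F _ (a : ι → F) => tr t F a = tr u F a := by
  intro S a b hab hP
  obtain ⟨g, hg, hb⟩ := hab
  obtain ⟨x, hx, hgx⟩ := term_lemma S g hb t
  obtain ⟨y, hy, hgy⟩ := term_lemma S g hb u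
  rw [← S.emb_eq_iff] at hP ⊢
  rw [← hgx, ← hgy]
  congr 1
  exact Subtype.ext (by rw [hx, hy]; exact hP)

end terms

/-- Realisation of bounded formulas in a field. -/
def fr {α : Type} {n : ℕ} (φ : Language.ring.BoundedFormula α n) (F : Type) [Field F]
    (a : α ⊕ Fin n → F) : Prop :=
  let _ := Ring.compatibleRingOfRing F
  φ.Realize (fun i => a (Sum.inl i)) (fun i => a (Sum.inr i))

lemma Inv.formula {α : Type} [Countable α] {n : ℕ} (φ : Language.ring.BoundedFormula α n) :
    Inv (fr φ) := by
  induction φ with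
  | falsum => exact Inv.true.not.congr fun F _ _ a => by simp [fr, Language.BoundedFormula.Realize]
  | @equal n t u =>
    refine (Inv.eqTerm t u).congr fun F _ _ a => ?_
    unfold tr fr
    have : (Sum.elim (fun i => a (Sum.inl i)) (fun i => a (Sum.inr i)) : α ⊕ Fin n → F) = a := by
      funext i; cases i <;> rfl
    simp [Language.BoundedFormula.Realize, this]
  | rel r ts => exact r.elim
  | imp φ ψ h1 h2 => exact (h1.imp h2).congr fun F _ _ a => by simp [fr, Language.BoundedFormula.Realize]
  | @all n φ ih =>
    let f : α ⊕ Fin (n + 1) → Option (α ⊕ Fin n) :=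
      Sum.elim (fun i => some (Sum.inl i)) (Fin.snoc (α := fun _ => Option (α ⊕ Fin n)) (fun i => some (Sum.inr i)) none)
    have h := (ih.comp f).not.ex.not
    refine h.congr fun F _ _ a => ?_
    unfold fr
    simp only [Language.BoundedFormula.Realize, not_exists, not_not]
    refine forall_congr' fun y => ?_
    have : (fun i : Fin (n+1) => (f (Sum.inr i)).elim y a) = Fin.snoc (fun i => a (Sum.inr i)) y := by
      funext i
      refine Fin.lastCases ?_ (fun i => ?_) i <;> simp [f]
    rw [this]
    rfl


end Part14
end Felg

namespace Felg
section Part15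
open Polynomial Filter FirstOrder

theorem dichotomy {ι : Type} [Countable ι] {P : ∀ (F : Type) [Field F], (Option ι → F) → Prop}
    (hP : Inv P) : ∃ C : ℕ, 0 < C ∧ ∀ (F : Type) [Field F] [Finite F] (q : ℕ) (_ : Nat.card F = q ^ 2)
      (a : ι → F), Nat.card {y // P F (fun o => o.elim y a)} ≤ C ∨
        q ^ 2 ≤ C * Nat.card {y // P F (fun o => o.elim y a)} := by
  classical
  by_contra hcon
  push Not at hcon
  have hcon' := fun n : ℕ => hcon (n + 1) (Nat.succ_pos n)
  choose F fld fin q hc a h1 h2 using hcon'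
  have hq : ∀ n, n ≤ q n := by
    intro n
    by_contra hlt
    have e1 := h1 n
    have e2 := h2 n
    have e3 : (n + 1) * (n + 1) ≤ (n + 1) * Nat.card {y // P (F n) (fun o => o.elim y (a n))} :=
      Nat.mul_le_mul_left _ e1.le
    push Not at hlt
    nlinarith
  let S : FSeq := ⟨F, fld, fin, q, hq, hc⟩
  have ft : ∀ n, Fintype (S.F n) := fun n => Fintype.ofFinite _
  let D : ∀ n, Finset (S.F n) := fun n => Finset.univ.filter fun y => P (S.F n) (fun o => o.elim y (a n))
  have hDm : ∀ n y, y ∈ D n ↔ P (S.F n) (fun o => o.elim y (a n)) := fun n y => by simp [D]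
  have hDc : ∀ n, (D n).card = Nat.card {y // P (S.F n) (fun o => o.elim y (a n))} := by
    intro n
    rw [Nat.card_eq_fintype_card, Fintype.card_subtype]
  have hD1 : ∀ n, n < (D n).card := fun n => by rw [hDc]; exact (Nat.lt_succ_self n).trans (h1 n)
  have hD2 : ∀ n, (D n).card * n ≤ S.q n ^ 2 := fun n => by
    have := h2 n
    rw [hDc]
    change _ ≤ q n ^ 2
    have e : Nat.card {y // P (S.F n) (fun o => o.elim y (a n))} =
      Nat.card {y // P (F n) (fun o => o.elim y (a n))} := rfl
    rw [e]
    nlinarith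
  let a' : ι → ∀ n, S.F n := fun i n => a n i
  have hcount : Countable (acl (Set.range fun i => S.emb (a' i))) := acl_countable (Set.countable_range _)
  obtain ⟨e, he⟩ := exists_surjective_nat (acl (Set.range fun i => S.emb (a' i)))
  choose t ht using fun j => mk_surj (e j : Ks S.k)
  have hy : ∀ n, ∃ y ∈ D n, ∀ j < n, algebraMap (S.F n) (S.k n) y ≠ t j n := by
    intro n
    by_contra hno
    push Not at hno
    have hsub : (D n).image (algebraMap (S.F n) (S.k n)) ⊆ (Finset.range n).image (fun j => t j n) := by
      intro z hz
      obtain ⟨y, hy, rfl⟩ := Finset.mem_image.1 hz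
      obtain ⟨j, hj, hjy⟩ := hno y hy
      exact Finset.mem_image.2 ⟨j, Finset.mem_range.2 hj, hjy.symm⟩
    have h3 := Finset.card_le_card hsub
    rw [Finset.card_image_of_injective _ (algebraMap (S.F n) (S.k n)).injective] at h3
    have h4 : ((Finset.range n).image (fun j => t j n)).card ≤ n :=
      Finset.card_image_le.trans (by simp)
    have := hD1 n
    omega
  choose y hyD hyt using hy
  have hyacl : S.emb y ∉ acl (Set.range fun i => S.emb (a' i)) := by
    intro hmem
    obtain ⟨j, hj⟩ := he ⟨_, hmem⟩
    have h5 : mk S.k (t j) = S.emb y := by rw [ht, hj]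
    unfold FSeq.emb at h5
    rw [mk_eq_iff] at h5
    have h6 : ∀ᶠ n in (hyperfilter ℕ : Filter ℕ), j < n :=
      (Nat.hyperfilter_le_atTop (eventually_gt_atTop j))
    obtain ⟨n, hn, hn'⟩ := (h5.and h6).exists
    exact hyt n j hn' hn.symm
  have hR : S.R a' a' := Rel.refl _ _
  obtain ⟨y', hy', hD'⟩ := hR.extend_new y hyacl D hD2
  have key := hP S _ _ hy' (Eventually.of_forall fun n => by
    have := (hDm n (y n)).1 (hyD n)
    have e := FSeq.option_elim_comp (fun z : ∀ n, S.F n => z n) y a'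
    exact e.symm ▸ this)
  obtain ⟨n, hn, hn'⟩ := (key.and hD').exists
  apply hn'
  rw [hDm]
  have e := FSeq.option_elim_comp (fun z : ∀ n, S.F n => z n) y' a'
  exact e ▸ hn

/-- Polynomial size classes. -/
def Cls (C Q c : ℕ) : Prop := c = 0 ∨ ∃ j, Q ^ j ≤ C * c ∧ c ≤ C * Q ^ j

lemma Cls.add {C C' Q c c' : ℕ} (hQ : 1 ≤ Q) (h : Cls C Q c) (h' : Cls C' Q c') :
    Cls (C + C') Q (c + c') := by
  have mono : ∀ {C C' c}, Cls C Q c → Cls (C + C') Q c := by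
    rintro C C' c (h | ⟨j, h1, h2⟩)
    · exact Or.inl h
    · exact Or.inr ⟨j, h1.trans (Nat.mul_le_mul_right _ (Nat.le_add_right _ _)),
        h2.trans (Nat.mul_le_mul_right _ (Nat.le_add_right _ _))⟩
  rcases h with rfl | ⟨j, h1, h2⟩
  · rw [zero_add, add_comm C]; exact mono h'
  rcases h' with rfl | ⟨j', h1', h2'⟩
  · rw [add_zero]; exact mono (Or.inr ⟨j, h1, h2⟩)
  right
  refine ⟨max j j', ?_, ?_⟩
  · rcases max_choice j j' with h | h <;> rw [h]
    · refine h1.trans (Nat.mul_le_mul (Nat.le_add_right _ _) (Nat.le_add_right _ _))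
    · refine h1'.trans (Nat.mul_le_mul (Nat.le_add_left _ _) (Nat.le_add_left _ _))
  · rw [add_mul]
    refine add_le_add (h2.trans ?_) (h2'.trans ?_) <;> gcongr
    · exact le_max_left _ _
    · exact le_max_right _ _

theorem classes (m : ℕ) : ∀ {P : ∀ (F : Type) [Field F], (Fin m → F) → Prop} (_ : Inv P),
    ∃ C : ℕ, ∀ (F : Type) [Field F] [Finite F] (q : ℕ) (_ : Nat.card F = q ^ 2),
      Cls C (q ^ 2) (Nat.card {x // P F x}) := by
  classical
  induction m with
  | zero =>
    intro P hP
    refine ⟨1, fun F _ _ q hq => ?_⟩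
    by_cases h : Nat.card {x // P F x} = 0
    · exact Or.inl h
    · right
      refine ⟨0, by rw [pow_zero, one_mul]; omega, ?_⟩
      have : Nat.card {x // P F x} ≤ Nat.card (Fin 0 → F) := Finite.card_subtype_le _
      simpa using this
  | succ m ih =>
    intro P hP
    let f : Fin (m + 1) → Option (Fin m) := Fin.cons none some
    have hP' := hP.comp f
    have hfe : ∀ (F : Type) (y : F) (x : Fin m → F), (fun i => (f i).elim y x) = (Fin.cons y x : Fin (m + 1) → F) := by
      intro F y x
      funext i
      refine Fin.cases ?_ (fun i => ?_) i <;> simp [f]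
    obtain ⟨C1, hC1, hdi⟩ := dichotomy hP'
    simp only [hfe] at hdi
    obtain ⟨Cs, hs⟩ := ih ((hP'.atLeast 1).and (hP'.atLeast (C1 + 1)).not)
    obtain ⟨Cb, hb⟩ := ih (hP'.atLeast (C1 + 1))
    simp only [hfe] at hs hb
    refine ⟨C1 * Cs + C1 * Cb, fun F _ _ q hq => ?_⟩
    have hs := hs F q hq
    have hb := hb F q hq
    have hdi := hdi F q hq
    have ft := Fintype.ofFinite F
    have hQ : 1 ≤ q ^ 2 := by rw [← hq]; exact Nat.card_pos
    set w : (Fin m → F) → ℕ := fun x => Nat.card {y // P F (Fin.cons y x : Fin (m + 1) → F)} with hw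
    have hwle : ∀ x, w x ≤ q ^ 2 := fun x => by
      rw [← hq]; exact Finite.card_subtype_le _
    have htot : Nat.card {x // P F x} = ∑ x, w x := by
      have e : {x : Fin (m + 1) → F // P F x} ≃ Σ x : Fin m → F, {y // P F (Fin.cons y x : Fin (m + 1) → F)} :=
        { toFun := fun x => ⟨fun i => x.1 i.succ, x.1 0, by
            have := x.2
            rwa [← Fin.cons_self_tail x.1] at this⟩
          invFun := fun z => ⟨Fin.cons z.2.1 z.1, z.2.2⟩
          left_inv := fun x => Subtype.ext (Fin.cons_self_tail x.1)
          right_inv := fun z => rfl }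
      rw [Nat.card_congr e, Nat.card_sigma]
    set Sm : Finset (Fin m → F) := Finset.univ.filter fun x => 1 ≤ w x ∧ ¬ C1 + 1 ≤ w x with hSm
    set Bg : Finset (Fin m → F) := Finset.univ.filter fun x => C1 + 1 ≤ w x with hBg
    have hs' : Cls Cs (q ^ 2) Sm.card := by
      rw [Nat.card_eq_fintype_card, Fintype.card_subtype] at hs; exact hs
    have hb' : Cls Cb (q ^ 2) Bg.card := by
      rw [Nat.card_eq_fintype_card, Fintype.card_subtype] at hb; exact hb
    have hsplit : ∑ x, w x = ∑ x ∈ Sm, w x + ∑ x ∈ Bg, w x := by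
      rw [← Finset.sum_union]
      · symm
        apply Finset.sum_subset (Finset.subset_univ _)
        intro x _ hx
        simp only [hSm, hBg, Finset.mem_union, Finset.mem_filter, Finset.mem_univ, true_and] at hx
        omega
      · rw [Finset.disjoint_left]
        intro x hx hx'
        simp only [hSm, hBg, Finset.mem_filter, Finset.mem_univ, true_and] at hx hx'
        exact hx.2 hx'
    rw [htot, hsplit]
    have a1 : Sm.card ≤ ∑ x ∈ Sm, w x := by
      have := Finset.card_nsmul_le_sum Sm w 1 (fun x hx => ((Finset.mem_filter.1 hx).2).1)
      simpa using this
    have a2 : ∑ x ∈ Sm, w x ≤ Sm.card * C1 := by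
      have := Finset.sum_le_card_nsmul Sm w C1 (fun x hx => by
        have := ((Finset.mem_filter.1 hx).2).2
        omega)
      simpa using this
    have b1 : Bg.card * q ^ 2 ≤ C1 * ∑ x ∈ Bg, w x := by
      rw [Finset.mul_sum]
      have := Finset.card_nsmul_le_sum Bg (fun x => C1 * w x) (q ^ 2) (fun x hx => by
        have h := (Finset.mem_filter.1 hx).2
        rcases hdi x with h' | h'
        · change w x ≤ C1 at h'
          omega
        · exact h')
      simpa using this
    have b2 : ∑ x ∈ Bg, w x ≤ Bg.card * q ^ 2 := by
      have := Finset.sum_le_card_nsmul Bg w (q ^ 2) (fun x _ => hwle x)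
      simpa using this
    generalize ∑ x ∈ Sm, w x = s1 at *
    generalize ∑ x ∈ Bg, w x = s2 at *
    generalize Sm.card = A at *
    generalize Bg.card = B at *
    generalize q ^ 2 = Q at *
    apply Cls.add hQ
    · rcases hs' with rfl | ⟨j, h1, h2⟩
      · left; omega
      · right
        refine ⟨j, ?_, ?_⟩
        · calc Q ^ j ≤ Cs * A := h1
            _ ≤ Cs * s1 := by gcongr
            _ ≤ C1 * Cs * s1 := by
              gcongr; exact Nat.le_mul_of_pos_left _ hC1
        · calc s1 ≤ A * C1 := a2
            _ ≤ (Cs * Q ^ j) * C1 := by gcongr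
            _ = C1 * Cs * Q ^ j := by ring
    · rcases hb' with rfl | ⟨j, h1, h2⟩
      · left; omega
      · right
        refine ⟨j + 1, ?_, ?_⟩
        · calc Q ^ (j + 1) = Q ^ j * Q := pow_succ _ _
            _ ≤ Cb * B * Q := by gcongr
            _ = Cb * (B * Q) := by ring
            _ ≤ Cb * (C1 * s2) := by gcongr
            _ = C1 * Cb * s2 := by ring
        · calc s2 ≤ B * Q := b2
            _ ≤ Cb * Q ^ j * Q := by gcongr
            _ = 1 * (Cb * Q ^ (j + 1)) := by ring
            _ ≤ C1 * (Cb * Q ^ (j + 1)) := by gcongr; exact hC1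
            _ = C1 * Cb * Q ^ (j + 1) := by ring

theorem final (m : ℕ) (φ : Language.ring.Formula (Fin m)) :
    ∃ C : ℕ, ∀ (F : Type) [Field F] [Finite F] (q : ℕ) (_ : Nat.card F = q ^ 2),
      Cls C (q ^ 2) (let _ := Ring.compatibleRingOfRing F
        Nat.card {x : Fin m → F // φ.Realize x}) := by
  have h := (Inv.formula φ).comp (ι' := Fin m) (Sum.elim id Fin.elim0)
  obtain ⟨C, hC⟩ := classes m h
  refine ⟨C, fun F _ _ q hq => ?_⟩
  have := hC F q hq
  convert this using 1
  refine Nat.card_congr (Equiv.subtypeEquivRight fun x => ?_)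
  unfold fr Language.Formula.Realize
  simp only [Sum.elim_inl, id_eq]
  congr! 1


end Part15
end Felg

/-- Many-variable strengthening of the negative answer to Felgner's problem: for every
formula `φ` with `m ≥ 1` free variables there is `N` so that for all prime powers
`q = p^k ≥ N`, the number of satisfying `m`-tuples over the field with `q^2` elements is
never exactly `q`. -/
theorem felgner_negative_many_variables (m : ℕ) (hm : 1 ≤ m)
    (φ : Language.ring.Formula (Fin m)) :
    ∃ N : ℕ, ∀ (p : ℕ) [Fact p.Prime], ∀ k : ℕ, 1 ≤ k → N ≤ p ^ k →
      ringFormulaCount φ (GaloisField p (2 * k)) ≠ p ^ k := by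
  obtain ⟨C, hC⟩ := Felg.final m φ
  refine ⟨C + 1, fun p _ k hk hN heq => ?_⟩
  have hk2 : 2 * k ≠ 0 := by omega
  have hfin : Finite (GaloisField p (2 * k)) := Nat.finite_of_card_ne_zero (by
    rw [GaloisField.card p _ hk2]
    exact pow_ne_zero _ (Fact.out : p.Prime).ne_zero)
  have hcls := hC (GaloisField p (2 * k)) (p ^ k) (by
    rw [GaloisField.card p _ hk2, ← pow_mul, mul_comm])
  change Felg.Cls C ((p ^ k) ^ 2) (ringFormulaCount φ (GaloisField p (2 * k))) at hcls
  rw [heq] at hcls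
  generalize p ^ k = q at *
  rcases hcls with h | ⟨j, h1, h2⟩
  · omega
  · rcases j with _ | j
    · simp at h2
      omega
    · have hq : 0 < q := by omega
      have h3 : q ^ 2 ≤ (q ^ 2) ^ (j + 1) := Nat.le_self_pow (Nat.succ_ne_zero j) _
      have h4 : q * q ≤ C * q := by rw [← pow_two]; exact h3.trans h1
      have h5 := Nat.le_of_mul_le_mul_right h4 hq
      omega
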